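/- Let h : (0,∞)² → ℝ be continuous and piecewise generalized polynomial. Then there exist M ∈ ℕ, real numbers 0 = η_0 < η_1 < … < η_M < η_{M+1} = ∞, and functions e_0, e_1, …, e_M : (0,∞)² → ℝ, each a pointwise supremum of infima of finitely many generalized polynomial functions, such that for each q ∈ {0,…,M}, e_q coincides with h on the horizontal half-strip I_q := (0,∞) × (η_q, η_{q+1}). -/

import Mathlib

open Set

noncomputable section

/-- The open positive quadrant `(0,∞)²`, as a subtype of `ℝ × ℝ`. -/
abbrev PQ : Type := {p : ℝ × ℝ // 0 < p.1 ∧ 0 < p.2}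

/-- A generalized polynomial function (signomial) of two variables: a finite sum
`∑ cᵢ x^{αᵢ₁} y^{αᵢ₂}` with nonzero real coefficients and distinct real exponent pairs. -/
def IsGenPoly (a : PQ → ℝ) : Prop :=
  ∃ (m : ℕ) (c : Fin m → ℝ) (α : Fin m → ℝ × ℝ),
    (∀ i, c i ≠ 0) ∧ Function.Injective α ∧
    ∀ p : PQ, a p = ∑ i, c i * p.1.1 ^ (α i).1 * p.1.2 ^ (α i).2

/-- A basic generalized semialgebraic (semisignomial) subset of `(0,∞)²`. -/
def IsBasicGSA (S : Set PQ) : Prop :=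
  ∃ (f : PQ → ℝ) (K : ℕ) (g : Fin K → PQ → ℝ),
    IsGenPoly f ∧ (∀ k, IsGenPoly (g k)) ∧
    S = {p : PQ | f p = 0 ∧ ∀ k, 0 < g k p}

/-- A generalized semialgebraic set: a finite union of basic ones. -/
def IsGSA (S : Set PQ) : Prop :=
  ∃ (J : ℕ) (T : Fin J → Set PQ), (∀ j, IsBasicGSA (T j)) ∧ S = ⋃ j, T j

/-- `h` is piecewise generalized polynomial: there are finitely many *distinct*
generalized polynomial functions `g i` whose agreement sets with `h` are
generalized semialgebraic and cover `(0,∞)²`. -/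
def IsPiecewiseGenPoly (h : PQ → ℝ) : Prop :=
  ∃ (l : ℕ) (g : Fin l → PQ → ℝ),
    (∀ i, IsGenPoly (g i)) ∧ Function.Injective g ∧
    (∀ i, IsGSA {p : PQ | h p = g i p}) ∧
    ∀ p : PQ, ∃ i, h p = g i p

/-- `h` is a pointwise sup of infs of finitely many generalized polynomial functions. -/
def IsSupInf (h : PQ → ℝ) : Prop :=
  ∃ (J : ℕ) (K : Fin (J + 1) → ℕ)
    (f : (j : Fin (J + 1)) → Fin (K j + 1) → PQ → ℝ),
    (∀ j k, IsGenPoly (f j k)) ∧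
    ∀ p : PQ, h p = ⨆ j, ⨅ k, f j k p

/-- The `p`-th interval of the subdivision `0 = γ 0 < γ 1 < … < γ L < γ (L+1) = ∞`
of `(0,∞)`: it is `(γ p, γ (p+1))` for `p < L` and `(γ L, ∞)` for `p = L`. -/
def vstrip (γ : ℕ → ℝ) (L p : ℕ) : Set ℝ :=
  if p = L then Set.Ioi (γ p) else Set.Ioo (γ p) (γ (p + 1))

open Filter Topology

section divis
variable {E : Type*} [NormedAddCommGroup E] [NormedSpace ℝ E]

/-- projection killing the last coordinate -/
def prz (E : Type*) [NormedAddCommGroup E] [NormedSpace ℝ E] : (E × ℝ) →L[ℝ] (E × ℝ) :=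
  (ContinuousLinearMap.inl ℝ E ℝ).comp (ContinuousLinearMap.fst ℝ E ℝ)

lemma prz_norm : ‖prz E‖ ≤ 1 := by
  refine ContinuousLinearMap.opNorm_le_bound _ zero_le_one (fun x => ?_)
  simp [prz, Prod.norm_def]

def dvt (p : FormalMultilinearSeries ℝ (E × ℝ) ℝ) (n : ℕ) (i : Fin (n+1)) :
    ContinuousMultilinearMap ℝ (fun _ : Fin n => E × ℝ) ℝ :=
  ((p (n+1)).curryMid i ((0, 1) : E × ℝ)).compContinuousLinearMap
    (fun j => if j.castSucc < i then prz E else ContinuousLinearMap.id ℝ _)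

def dvs (p : FormalMultilinearSeries ℝ (E × ℝ) ℝ) : FormalMultilinearSeries ℝ (E × ℝ) ℝ :=
  fun n => ∑ i : Fin (n+1), dvt p n i

lemma dvs_norm (p : FormalMultilinearSeries ℝ (E × ℝ) ℝ) (n : ℕ) :
    ‖dvs p n‖ ≤ (n+1) * ‖p (n+1)‖ := by
  have key : ∀ i, ‖dvt p n i‖ ≤ ‖p (n+1)‖ := by
    intro i
    have h1 := ContinuousMultilinearMap.norm_compContinuousLinearMap_le
      ((p (n+1)).curryMid i ((0, 1) : E × ℝ))
      (fun j : Fin n => if j.castSucc < i then prz E else ContinuousLinearMap.id ℝ _)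
    refine h1.trans ?_
    have h2 : ‖((p (n+1)).curryMid i ((0, 1) : E × ℝ))‖ ≤ ‖p (n+1)‖ := by
      refine (ContinuousLinearMap.le_opNorm _ _).trans ?_
      rw [ContinuousMultilinearMap.norm_curryMid]
      simp [Prod.norm_def]
    have h3 : (∏ j : Fin n, ‖(if j.castSucc < i then prz E else ContinuousLinearMap.id ℝ _)‖) ≤ 1 := by
      apply Finset.prod_le_one
      · intros; positivity
      · intro j _
        split_ifs
        · exact prz_norm
        · exact ContinuousLinearMap.norm_id_le
    calc _ ≤ ‖p (n+1)‖ * 1 := by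
          apply mul_le_mul h2 h3
          · apply Finset.prod_nonneg; intros; positivity
          · positivity
      _ = _ := by ring
  calc _ ≤ ∑ i : Fin (n+1), ‖dvt p n i‖ := norm_sum_le _ _
    _ ≤ ∑ i : Fin (n+1), ‖p (n+1)‖ := Finset.sum_le_sum (fun i _ => key i)
    _ = _ := by simp

lemma dvs_tele (p : FormalMultilinearSeries ℝ (E × ℝ) ℝ) (n : ℕ) (x : E × ℝ) :
    p (n+1) (fun _ => x) = p (n+1) (fun _ => prz E x) + x.2 * dvs p n (fun _ => x) := by
  let m : ℕ → (Fin (n+1) → E × ℝ) := fun k j => if j.1 < k then prz E x else x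
  have h0 : ∀ i : Fin (n+1), p (n+1) (m i) - p (n+1) (m (i+1)) = x.2 * dvt p n i (fun _ => x) := by
    intro i
    have e1 : m i = Function.update (m i) i x := by
      funext j; by_cases h : j = i
      · subst h; simp [m]
      · simp [h]
    have e2 : m (i+1) = Function.update (m i) i (prz E x) := by
      funext j; by_cases h : j = i
      · subst h; simp [m]
      · have : j.1 ≠ i.1 := fun hh => h (Fin.ext hh)
        have h2 : (j.1 < i.1 + 1) ↔ j.1 < i.1 := by omega
        simp [h, m, h2]
    have e3 : Function.update (m i) i ((0,1) : E × ℝ) = i.insertNth ((0,1) : E × ℝ)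
        (fun j : Fin n => (if j.castSucc < i then prz E else ContinuousLinearMap.id ℝ _) x) := by
      rw [Fin.eq_insertNth_iff]
      constructor
      · simp
      · funext j
        rw [Fin.removeNth_apply, Function.update_of_ne (Fin.succAbove_ne i j)]
        by_cases h : j.castSucc < i
        · rw [Fin.succAbove_of_castSucc_lt _ _ h]
          have : j.1 < i.1 := h
          simp [m, h, this]
        · rw [Fin.succAbove_of_le_castSucc _ _ (not_lt.mp h)]
          have : ¬ (j.1 + 1 < i.1) := by
            have : ¬ (j.1 < i.1) := h
            omega
          simp [m, h, this]
    have e4 : x - prz E x = x.2 • ((0,1) : E × ℝ) := by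
      ext <;> simp [prz]
    rw [e2]
    conv_lhs => enter [1]; rw [e1]
    rw [← ContinuousMultilinearMap.map_update_sub, e4, ContinuousMultilinearMap.map_update_smul, e3]
    rfl
  have h1 : ∑ i : Fin (n+1), (p (n+1) (m i) - p (n+1) (m (i+1))) = p (n+1) (m 0) - p (n+1) (m (n+1)) := by
    rw [Fin.sum_univ_eq_sum_range (fun k => p (n+1) (m k) - p (n+1) (m (k+1)))]
    exact Finset.sum_range_sub' _ _
  have h2 : m 0 = fun _ => x := by funext j; simp [m]
  have h3 : m (n+1) = fun _ => prz E x := by funext j; simp only [m, j.2, if_true]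
  rw [Finset.sum_congr rfl (fun i _ => h0 i), h2, h3, ← Finset.mul_sum] at h1
  simp only [dvs, _root_.sum_apply]
  linarith

lemma div_lemma (Φ : E × ℝ → ℝ) (h : AnalyticAt ℝ Φ 0) :
    ∃ H : E × ℝ → ℝ, AnalyticAt ℝ H 0 ∧ ∀ᶠ x in 𝓝 (0 : E × ℝ), Φ x = Φ (x.1, 0) + x.2 * H x := by
  obtain ⟨p, r, hp⟩ := h
  obtain ⟨s, hs0, hsr⟩ : ∃ s : NNReal, 0 < s ∧ (s : ENNReal) < r := by
    obtain ⟨s, h1, h2⟩ := ENNReal.lt_iff_exists_nnreal_btwn.mp hp.r_pos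
    exact ⟨s, by exact_mod_cast h1, h2⟩
  obtain ⟨C, hC, hb⟩ := p.norm_mul_pow_le_of_lt_radius (lt_of_lt_of_le hsr hp.r_le)
  have hrad : ((s/2 : NNReal) : ENNReal) ≤ (dvs p).radius := by
    apply FormalMultilinearSeries.le_radius_of_bound _ (C / s)
    intro n
    have h1 := dvs_norm p n
    have h2 := hb (n+1)
    have hs : (0:ℝ) < s := hs0
    have h3 : ((n:ℝ)+1) ≤ 2^n := by exact_mod_cast Nat.lt_two_pow_self (n := n)
    rw [le_div_iff₀ hs]
    push_cast
    calc ‖dvs p n‖ * (s/2:ℝ)^n * s ≤ ((n+1) * ‖p (n+1)‖) * (s/2:ℝ)^n * s := by gcongr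
      _ ≤ (2^n * ‖p (n+1)‖) * (s/2:ℝ)^n * s := by gcongr
      _ = ‖p (n+1)‖ * s^(n+1) := by rw [div_pow]; field_simp; try ring
      _ ≤ C := h2
  have hpos : 0 < (dvs p).radius := lt_of_lt_of_le (by simpa using hs0.ne') hrad
  have hH := (dvs p).hasFPowerSeriesOnBall hpos
  refine ⟨(dvs p).sum, hH.analyticAt, ?_⟩
  have hmin : 0 < min r (dvs p).radius := lt_min hp.r_pos hpos
  filter_upwards [Metric.eball_mem_nhds (0 : E × ℝ) hmin] with x hx
  have hx1 : x ∈ Metric.eball (0 : E × ℝ) r := Metric.eball_subset_eball (min_le_left _ _) hx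
  have hx2 : x ∈ Metric.eball (0 : E × ℝ) (dvs p).radius := Metric.eball_subset_eball (min_le_right _ _) hx
  have hx3 : prz E x ∈ Metric.eball (0 : E × ℝ) r := by
    rw [mem_eball_zero_iff] at hx1 ⊢
    refine lt_of_le_of_lt ?_ hx1
    rw [enorm_le_iff_norm_le]
    simpa using (prz E).le_of_opNorm_le prz_norm x
  have s1 := hp.hasSum hx1
  have s2 := hp.hasSum hx3
  have s3 := (hH.hasSum hx2).mul_left x.2
  simp only [zero_add] at s1 s2 s3
  have s1' := (hasSum_nat_add_iff' 1).mpr s1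
  have s2' := (hasSum_nat_add_iff' 1).mpr s2
  have s4 := s2'.add s3
  simp only [dvs_tele p _ x] at s1'
  have e := s1'.unique s4
  have z : p 0 (fun _ => x) = p 0 (fun _ => prz E x) := congrArg _ (Subsingleton.elim _ _)
  have z2 : prz E x = (x.1, 0) := by simp [prz]
  simp only [Finset.sum_range_one, z, z2] at e
  linarith
end divis

section tays
variable {E : Type*} [NormedAddCommGroup E] [NormedSpace ℝ E]

lemma div_iter (Φ : E × ℝ → ℝ) (h : AnalyticAt ℝ Φ 0) (n : ℕ) :
    ∃ (B : ℕ → E → ℝ) (H : E × ℝ → ℝ), (∀ k, AnalyticAt ℝ (B k) 0) ∧ AnalyticAt ℝ H 0 ∧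
      ∀ᶠ x in 𝓝 (0 : E × ℝ), Φ x = ∑ k ∈ Finset.range n, B k x.1 * x.2 ^ k + x.2 ^ n * H x := by
  induction n with
  | zero => exact ⟨fun _ _ => 0, Φ, fun _ => analyticAt_const, h, by simp⟩
  | succ n ih =>
    obtain ⟨B, H, hB, hH, he⟩ := ih
    obtain ⟨G, hG, hGe⟩ := div_lemma H hH
    have hH0 : AnalyticAt ℝ (fun v : E => H (v, 0)) 0 :=
      AnalyticAt.fun_comp (f := fun v : E => (v, (0:ℝ))) (x := 0) hH
        (analyticAt_id.prod analyticAt_const)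
    refine ⟨fun k => if k = n then (fun v => H (v, 0)) else B k, G, ?_, hG, ?_⟩
    · intro k
      by_cases hk : k = n
      · simpa [hk] using hH0
      · simpa [hk] using hB k
    · filter_upwards [he, hGe] with x h1 h2
      rw [h1, Finset.sum_range_succ, if_pos rfl, h2]
      have : ∀ k ∈ Finset.range n, (if k = n then (fun v => H (v, 0)) else B k) x.1 * x.2 ^ k
          = B k x.1 * x.2 ^ k := by
        intro k hk
        have : k ≠ n := (Finset.mem_range.mp hk).ne
        simp [this]
      rw [Finset.sum_congr rfl this]
      ring

lemma AnalyticAt.itD {f : ℝ → ℝ} {x : ℝ} (h : AnalyticAt ℝ f x) (n : ℕ) :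
    AnalyticAt ℝ (iteratedDeriv n f) x := by
  rw [iteratedDeriv_eq_iterate]; exact h.iterated_deriv n

lemma iterD_mulx (f : ℝ → ℝ) (hf : AnalyticAt ℝ f 0) (c : ℝ) (m : ℕ) :
    iteratedDeriv (m+1) (fun y => c + y * f y) 0 = (m+1) * iteratedDeriv m f 0 := by
  have key : ∀ m : ℕ, ∀ᶠ y in 𝓝 (0:ℝ), iteratedDeriv (m+1) (fun y => c + y * f y) y
      = (m+1) * iteratedDeriv m f y + y * iteratedDeriv (m+1) f y := by
    intro m
    induction m with
    | zero =>
      filter_upwards [hf.eventually_analyticAt] with y hy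
      simp only [zero_add, iteratedDeriv_one, iteratedDeriv_zero]
      have := ((hasDerivAt_id y).mul hy.differentiableAt.hasDerivAt).const_add c
      rw [show (fun y => c + y * f y) = fun y => c + ((id : ℝ → ℝ) * f) y from rfl]
      rw [this.deriv]; simp
    | succ m ih =>
      filter_upwards [ih.eventually_nhds, hf.eventually_analyticAt] with y hy ha
      rw [iteratedDeriv_succ, Filter.EventuallyEq.deriv_eq hy]
      have d1 : HasDerivAt (iteratedDeriv m f) (iteratedDeriv (m+1) f y) y := by
        rw [iteratedDeriv_succ]
        exact (ha.itD m).differentiableAt.hasDerivAt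
      have d2 : HasDerivAt (iteratedDeriv (m+1) f) (iteratedDeriv (m+1+1) f y) y := by
        rw [iteratedDeriv_succ (n := m+1)]
        exact (ha.itD (m+1)).differentiableAt.hasDerivAt
      have := (d1.const_mul ((m:ℝ)+1)).add ((hasDerivAt_id y).mul d2)
      refine (HasDerivAt.deriv this).trans ?_
      simp; ring
  simpa using (key m).self_of_nhds

lemma iterD_tay (n : ℕ) : ∀ (f : ℝ → ℝ) (c : ℕ → ℝ) (H : ℝ → ℝ), AnalyticAt ℝ H 0 →
    (∀ᶠ y in 𝓝 (0:ℝ), f y = ∑ k ∈ Finset.range n, c k * y ^ k + y ^ n * H y) →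
    ∀ m ≤ n, iteratedDeriv m f 0 = m.factorial * (if m < n then c m else H 0) := by
  induction n with
  | zero =>
    intro f c H hH he m hm
    obtain rfl : m = 0 := by omega
    have := he.self_of_nhds
    simpa using this
  | succ n ih =>
    intro f c H hH he m hm
    cases m with
    | zero => have := he.self_of_nhds; simp [this, Finset.sum_range_succ']
    | succ m =>
      let g : ℝ → ℝ := fun y => ∑ k ∈ Finset.range n, c (k+1) * y ^ k + y ^ n * H y
      have hg : AnalyticAt ℝ g 0 := by
        apply AnalyticAt.add
        · apply Finset.analyticAt_fun_sum
          intro k _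
          fun_prop
        · fun_prop
      have e1 : f =ᶠ[𝓝 0] fun y => c 0 + y * g y := by
        filter_upwards [he] with y hy
        rw [hy, Finset.sum_range_succ']
        simp only [g, mul_add, Finset.mul_sum]
        have : ∀ k, y * (c (k+1) * y^k) = c (k+1) * y^(k+1) := by intro k; ring
        simp only [this]; ring
      rw [e1.iteratedDeriv_eq, iterD_mulx g hg]
      rw [ih g (fun k => c (k+1)) H hH (by simp [g]) m (by omega)]
      simp [Nat.factorial_succ]; ring

lemma tay [CompleteSpace E] (Φ : E × ℝ → ℝ) (h : AnalyticAt ℝ Φ 0) (n : ℕ)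
    (h0 : ∀ k < n+1, iteratedDeriv k (fun y => Φ (0, y)) 0 = 0)
    (h1 : iteratedDeriv (n+1) (fun y => Φ (0, y)) 0 ≠ 0) :
    ∃ (ψ : E → ℝ) (B : ℕ → E → ℝ) (H : E × ℝ → ℝ), AnalyticAt ℝ ψ 0 ∧ ψ 0 = 0 ∧
      (∀ k, AnalyticAt ℝ (B k) 0) ∧ AnalyticAt ℝ H 0 ∧ H 0 ≠ 0 ∧
      ∀ᶠ x in 𝓝 (0 : E × ℝ), Φ (x.1, x.2 + ψ x.1)
        = ∑ k ∈ Finset.range n, B k x.1 * x.2 ^ k + x.2 ^ (n+1) * H x := by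
  let S : (E × ℝ) × ℝ → ℝ := fun x => Φ (x.1.1, x.2 + x.1.2)
  have hS : AnalyticAt ℝ S 0 := by
    apply AnalyticAt.fun_comp (f := fun x : (E × ℝ) × ℝ => (x.1.1, x.2 + x.1.2)) (x := 0)
    · simpa [Prod.mk_zero_zero] using h
    · exact ((analyticAt_fst.fun_comp (f := Prod.fst) (x := (0:(E×ℝ)×ℝ)) analyticAt_fst)).prod (analyticAt_snd.add (analyticAt_snd.fun_comp (f := Prod.fst) (x := (0:(E×ℝ)×ℝ)) analyticAt_fst))
  obtain ⟨C, H, hC, hH, he⟩ := div_iter S hS (n+1)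
  set φ : ℝ → ℝ := fun y => Φ (0, y) with hφ
  have key : ∀ᶠ s in 𝓝 (0:ℝ), ∀ m ≤ n+1, iteratedDeriv m φ s
      = m.factorial * (if m < n+1 then C m (0, s) else H ((0, s), 0)) := by
    have t1 : Tendsto (fun s : ℝ => (((0:E), s), (0:ℝ))) (𝓝 0) (𝓝 0) := by
      have : Continuous (fun s : ℝ => (((0:E), s), (0:ℝ))) := by fun_prop
      simpa [Prod.mk_zero_zero] using this.tendsto 0
    filter_upwards [t1.eventually he.eventually_nhds, t1.eventually hH.eventually_analyticAt] with s e1 e2 m hm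
    have t2 : Tendsto (fun y : ℝ => (((0:E), s), y)) (𝓝 0) (𝓝 (((0:E), s), (0:ℝ))) := by
      have : Continuous (fun y : ℝ => (((0:E), s), y)) := by fun_prop
      simpa using this.tendsto 0
    have := iterD_tay (n+1) (fun y => φ (y + s)) (fun k => C k (0, s)) (fun y => H ((0, s), y))
      (AnalyticAt.fun_comp (f := fun y : ℝ => (((0:E), s), y)) (x := 0) e2 (by fun_prop))
      (t2.eventually e1) m hm
    rw [← this, iteratedDeriv_comp_add_const]; simp
  have hH0 : H 0 ≠ 0 := by
    have := key.self_of_nhds (n+1) le_rfl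
    simp only [lt_irrefl, if_false] at this
    intro hh
    apply h1; rw [this]
    have : H ((0,0),0) = 0 := hh
    simp [this]
  have hCn0 : C n 0 = 0 := by
    have := key.self_of_nhds n (by omega)
    rw [h0 n (by omega)] at this
    simp only [Nat.lt_succ_self, if_true] at this
    rcases mul_eq_zero.mp this.symm with h | h
    · exact absurd h (by exact_mod_cast n.factorial_ne_zero)
    · exact h
  have hφa : AnalyticAt ℝ φ 0 := AnalyticAt.fun_comp (f := fun y : ℝ => ((0:E), y)) (x := 0) h (by fun_prop)
  have hder : HasDerivAt (fun s => C n ((0:E), s)) (iteratedDeriv (n+1) φ 0 / n.factorial) 0 := by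
    have d1 : HasDerivAt (iteratedDeriv n φ) (iteratedDeriv (n+1) φ 0) 0 := by
      rw [iteratedDeriv_succ]
      exact (hφa.itD n).differentiableAt.hasDerivAt
    apply (d1.div_const (n.factorial : ℝ)).congr_of_eventuallyEq
    filter_upwards [key] with s hs
    have := hs n (by omega)
    simp only [Nat.lt_succ_self, if_true] at this
    rw [this]
    field_simp
  have hne : iteratedDeriv (n+1) φ 0 / n.factorial ≠ 0 :=
    div_ne_zero h1 (by exact_mod_cast n.factorial_ne_zero)
  have hcd : ContDiffAt ℝ ⊤ (C n) 0 := (hC n).contDiffAt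
  have hinv : (fderiv ℝ (C n) 0 ∘L .inr ℝ E ℝ).IsInvertible := by
    have e : (fderiv ℝ (C n) 0 ∘L .inr ℝ E ℝ) 1 = iteratedDeriv (n+1) φ 0 / n.factorial := by
      have f1 : HasFDerivAt (C n) (fderiv ℝ (C n) 0) ((0:E), (0:ℝ)) := (hC n).differentiableAt.hasFDerivAt
      have f2 : HasDerivAt (fun s : ℝ => ((0:E), s)) ((0:E), (1:ℝ)) 0 :=
        (hasDerivAt_const _ _).prodMk (hasDerivAt_id _)
      have f3 := f1.comp_hasDerivAt (0:ℝ) f2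
      have := f3.unique hder
      simpa using this
    refine ⟨ContinuousLinearEquiv.unitsEquivAut ℝ (Units.mk0 _ hne), ?_⟩
    ext
    simp only [ContinuousLinearEquiv.coe_coe, ContinuousLinearEquiv.unitsEquivAut_apply]
    rw [e]; simp
  have ht : (⊤ : WithTop ℕ∞) ≠ 0 := by simp
  let ψ := hcd.implicitFunction ht hinv
  have hψ0 : ψ 0 = 0 := hcd.implicitFunction_apply_self ht hinv
  have hψa : AnalyticAt ℝ ψ 0 := (hcd.contDiffAt_implicitFunction ht hinv).analyticAt
  have hψe : ∀ᶠ v in 𝓝 (0:E), C n (v, ψ v) = 0 := by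
    have := hcd.eventually_apply_implicitFunction ht hinv
    rw [hCn0] at this; exact this
  refine ⟨ψ, fun k v => C k (v, ψ v), fun x => H ((x.1, ψ x.1), x.2), hψa, hψ0, ?_, ?_, ?_, ?_⟩
  · intro k
    apply AnalyticAt.fun_comp (f := fun v : E => (v, ψ v)) (x := 0)
    · simpa [hψ0, Prod.mk_zero_zero] using hC k
    · exact analyticAt_id.prod hψa
  · apply AnalyticAt.fun_comp (f := fun x : E × ℝ => ((x.1, ψ x.1), x.2)) (x := 0)
    · simpa [hψ0, Prod.mk_zero_zero] using hH
    · exact (analyticAt_fst.prod (AnalyticAt.fun_comp (f := Prod.fst) (x := (0 : E × ℝ)) (by simpa using hψa) analyticAt_fst)).prod analyticAt_snd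
  · simpa [hψ0, Prod.mk_zero_zero] using hH0
  · have t1 : Tendsto (fun x : E × ℝ => ((x.1, ψ x.1), x.2)) (𝓝 0) (𝓝 0) := by
      have c1 : ContinuousAt ψ ((0 : E × ℝ).1) := hψa.continuousAt
      have : ContinuousAt (fun x : E × ℝ => ((x.1, ψ x.1), x.2)) 0 := by
        have := ContinuousAt.comp' c1 continuous_fst.continuousAt
        fun_prop
      have := this.tendsto
      simpa [hψ0, Prod.mk_zero_zero] using this
    have t2 : Tendsto (fun x : E × ℝ => x.1) (𝓝 0) (𝓝 0) := by
      simpa using (continuous_fst (X := E) (Y := ℝ)).tendsto 0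
    filter_upwards [t1.eventually he, t2.eventually hψe] with x e1 e2
    simp only [S] at e1
    rw [e1, Finset.sum_range_succ, e2]; simp
end tays

section vser

lemma prod_summable {T : Type} (f : T → ℝ) (h0 : ∀ t, 0 ≤ f t) (hf : Summable f) (n : ℕ) :
    HasSum (fun w : Fin n → T => ∏ k, f (w k)) ((∑' t, f t) ^ n) := by
  induction n with
  | zero =>
    simp only [Finset.univ_eq_empty, Finset.prod_empty, pow_zero]
    exact hasSum_unique (fun w : Fin 0 → T => (1:ℝ))
  | succ n ih =>
    rw [← (Fin.consEquiv (fun _ => T)).hasSum_iff]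
    have hs : Summable (fun x : T × (Fin n → T) => f x.1 * ∏ k, f (x.2 k)) :=
      Summable.mul_of_nonneg (g := fun w : Fin n → T => ∏ k, f (w k)) hf ih.summable (Pi.le_def.mpr h0)
        (Pi.le_def.mpr (fun w => Finset.prod_nonneg (fun k _ => h0 _)))
    have := hf.hasSum.mul ih hs
    rw [pow_succ, mul_comm]
    refine HasSum.congr_fun this ?_
    intro x
    simp [Fin.consEquiv, Fin.prod_univ_succ]

lemma mult_hasSum {E G : Type*} [NormedAddCommGroup E] [NormedSpace ℝ E] [NormedAddCommGroup G]
    [NormedSpace ℝ G] [CompleteSpace G] {T : Type} (F : T → E) (S : E) (hF : HasSum F S)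
    (hn : Summable fun t => ‖F t‖) (n : ℕ) :
    ∀ p : ContinuousMultilinearMap ℝ (fun _ : Fin n => E) G,
      HasSum (fun w : Fin n → T => p (fun k => F (w k))) (p (fun _ => S)) := by
  induction n with
  | zero =>
    intro p
    have : (fun w : Fin 0 → T => p (fun k => F (w k))) = fun _ => p (fun _ => S) := by
      funext w; congr 1; exact Subsingleton.elim _ _
    rw [this]
    exact hasSum_unique (fun w : Fin 0 → T => _)
  | succ n ih =>
    intro p
    rw [← (Fin.consEquiv (fun _ => T)).hasSum_iff]
    have hs : Summable ((fun w : Fin (n+1) → T => p (fun k => F (w k))) ∘ (Fin.consEquiv (fun _ => T))) := by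
      rw [(Fin.consEquiv (fun _ => T)).summable_iff]
      refine Summable.of_norm_bounded ((prod_summable _ (fun t => norm_nonneg (F t)) hn (n+1)).summable.mul_left ‖p‖) ?_
      intro w
      exact p.le_opNorm _
    have hh := hs.hasSum
    have h1 : ∀ t : T, HasSum (fun w : Fin n → T => ((fun w : Fin (n+1) → T => p (fun k => F (w k))) ∘ (Fin.consEquiv (fun _ => T))) (t, w))
        (p.curryLeft (F t) (fun _ => S)) := by
      intro t
      have := ih (p.curryLeft (F t))
      convert this using 1
      funext w
      simp only [Function.comp, ContinuousMultilinearMap.curryLeft_apply, Fin.consEquiv]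
      congr 1
      funext k
      refine Fin.cases ?_ (fun k => ?_) k <;> simp
    have h2 := hh.prod_fiberwise h1
    have h3 : HasSum (fun t => p.curryLeft (F t) (fun _ => S)) (p.curryLeft S (fun _ => S)) := by
      have := (ContinuousLinearMap.hasSum ((ContinuousMultilinearMap.apply ℝ (fun _ : Fin n => E) G (fun _ => S)).comp p.curryLeft) hF)
      exact this
    have h4 := h2.unique h3
    rw [h4] at hh
    convert hh using 1
    simp only [ContinuousMultilinearMap.curryLeft_apply]
    congr 1
    funext k
    refine Fin.cases ?_ (fun k => ?_) k <;> simp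

/-- germs at `0+` of convergent generalized power series with positive exponents -/
def VS {E : Type} [NormedAddCommGroup E] [NormedSpace ℝ E] (v : ℝ → E) : Prop :=
  ∃ (ρ κ : ℝ) (T : Type) (b : T → E) (g : T → ℝ), 0 < ρ ∧ 0 < κ ∧ (∀ t, κ ≤ g t) ∧
    (∀ C, {t | g t ≤ C}.Finite) ∧ (Summable fun t => ‖b t‖ * ρ ^ g t) ∧
    ∀ ε, 0 < ε → ε ≤ ρ → HasSum (fun t => ε ^ g t • b t) (v ε)

variable {E F G : Type} [NormedAddCommGroup E] [NormedSpace ℝ E] [NormedAddCommGroup F]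
  [NormedSpace ℝ F] [NormedAddCommGroup G] [NormedSpace ℝ G]

/-- germ version -/
def IV (v : ℝ → E) : Prop := ∃ w, VS w ∧ v =ᶠ[𝓝[>] 0] w

lemma IV.congr {v w : ℝ → E} (h : IV v) (e : w =ᶠ[𝓝[>] 0] v) : IV w := by
  obtain ⟨z, hz, hv⟩ := h
  exact ⟨z, hz, e.trans hv⟩

lemma sum_shrink {T : Type} {b : T → E} {g : T → ℝ} {ρ κ : ℝ} (hρ : 0 < ρ) 
    (hg : ∀ t, κ ≤ g t) (hs : Summable fun t => ‖b t‖ * ρ ^ g t) {ε : ℝ} (h0 : 0 < ε) (h1 : ε ≤ ρ) :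
    (∀ t, ‖b t‖ * ε ^ g t ≤ (ε/ρ)^κ * (‖b t‖ * ρ ^ g t)) ∧
    (Summable fun t => ‖b t‖ * ε ^ g t) ∧
    ∑' t, ‖b t‖ * ε ^ g t ≤ (ε/ρ)^κ * ∑' t, ‖b t‖ * ρ ^ g t := by
  have key : ∀ t, ‖b t‖ * ε ^ g t ≤ (ε/ρ)^κ * (‖b t‖ * ρ ^ g t) := by
    intro t
    have e1 : ε ^ g t = (ε/ρ)^(g t) * ρ ^ g t := by
      rw [← Real.mul_rpow (by positivity) hρ.le, div_mul_cancel₀ _ hρ.ne']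
    have e2 : (ε/ρ)^(g t) ≤ (ε/ρ)^κ :=
      Real.rpow_le_rpow_of_exponent_ge (by positivity) ((div_le_one hρ).mpr h1) (hg t)
    rw [e1]
    calc _ = (ε/ρ)^(g t) * (‖b t‖ * ρ ^ g t) := by ring
      _ ≤ _ := by gcongr
  have hs2 : Summable fun t => ‖b t‖ * ε ^ g t :=
    Summable.of_nonneg_of_le (fun t => by positivity) key (hs.mul_left _)
  exact ⟨key, hs2, by rw [← tsum_mul_left]; exact hs2.tsum_le_tsum key (hs.mul_left _)⟩

lemma VS.bound {T : Type} {b : T → E} {g : T → ℝ} {ε : ℝ} (h0 : 0 < ε) {v : E}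
    (hs : Summable fun t => ‖b t‖ * ε ^ g t) (h : HasSum (fun t => ε ^ g t • b t) v) :
    ‖v‖ ≤ ∑' t, ‖b t‖ * ε ^ g t := by
  rw [← h.tsum_eq]
  have e : ∀ t, ‖ε ^ g t • b t‖ = ‖b t‖ * ε ^ g t := by
    intro t; rw [norm_smul, Real.norm_of_nonneg (by positivity), mul_comm]
  have := norm_tsum_le_tsum_norm (f := fun t => ε ^ g t • b t) (by simpa only [e] using hs)
  simpa only [e] using this

lemma shrink_tendsto {ρ κ M : ℝ} (hκ : 0 < κ) :
    Tendsto (fun ε : ℝ => (ε/ρ)^κ * M) (𝓝[>] 0) (𝓝 0) := by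
  have : ContinuousAt (fun ε : ℝ => (ε/ρ)^κ * M) 0 := by
    apply ContinuousAt.mul _ continuousAt_const
    apply ContinuousAt.rpow (by fun_prop) continuousAt_const
    right; exact hκ
  have := this.tendsto
  simp only [zero_div, Real.zero_rpow hκ.ne', zero_mul] at this
  exact this.mono_left nhdsWithin_le_nhds

lemma ev_le {ρ : ℝ} (hρ : 0 < ρ) : ∀ᶠ ε in 𝓝[>] (0:ℝ), 0 < ε ∧ ε ≤ ρ := by
  filter_upwards [Ioc_mem_nhdsGT hρ] with ε h using h

lemma IV.tendsto {v : ℝ → E} (h : IV v) : Tendsto v (𝓝[>] 0) (𝓝 0) := by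
  obtain ⟨w, ⟨ρ, κ, T, b, g, hρ, hκ, hg, hf, hs, hh⟩, hw⟩ := h
  refine Tendsto.congr' hw.symm ?_
  apply squeeze_zero_norm' _ (shrink_tendsto (ρ := ρ) (M := ∑' t, ‖b t‖ * ρ ^ g t) hκ)
  filter_upwards [ev_le hρ] with ε hε
  obtain ⟨_, h2, h3⟩ := sum_shrink hρ hg hs hε.1 hε.2
  exact (VS.bound hε.1 h2 (hh ε hε.1 hε.2)).trans h3

lemma IV.comp [CompleteSpace G] {v : ℝ → E} (h : IV v) {Ψ : E → G} (hΨ : AnalyticAt ℝ Ψ 0)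
    (h0 : Ψ 0 = 0) : IV (fun ε => Ψ (v ε)) := by
  obtain ⟨w, ⟨ρ, κ, T, b, g, hρ, hκ, hg, hf, hs, hh⟩, hw⟩ := h
  refine IV.congr (v := fun ε => Ψ (w ε)) ?_ (hw.fun_comp Ψ)
  refine ⟨_, ?_, EventuallyEq.rfl⟩
  obtain ⟨p, r, hp⟩ := hΨ
  obtain ⟨s, hs0, hsr⟩ : ∃ s : NNReal, 0 < s ∧ (s : ENNReal) < r := by
    obtain ⟨s, h1, h2⟩ := ENNReal.lt_iff_exists_nnreal_btwn.mp hp.r_pos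
    exact ⟨s, by exact_mod_cast h1, h2⟩
  obtain ⟨C, hC, hb⟩ := p.norm_mul_pow_le_of_lt_radius (lt_of_lt_of_le hsr hp.r_le)
  have hs0' : (0:ℝ) < s := hs0
  obtain ⟨ρ', hρ', hρρ, ht⟩ : ∃ ρ', 0 < ρ' ∧ ρ' ≤ ρ ∧ ∑' t, ‖b t‖ * ρ' ^ g t ≤ s/2 := by
    have e1 := (shrink_tendsto (ρ := ρ) (M := ∑' t, ‖b t‖ * ρ ^ g t) hκ).eventually
      (gt_mem_nhds (half_pos hs0'))
    obtain ⟨ρ', h1, h2⟩ := (e1.and (ev_le hρ)).exists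
    exact ⟨ρ', h2.1, h2.2, (sum_shrink hρ hg hs h2.1 h2.2).2.2.trans h1.le⟩
  have hs' := (sum_shrink hρ hg hs hρ' hρρ).2.1
  set t' := ∑' t, ‖b t‖ * ρ' ^ g t with ht'
  have ht0 : 0 ≤ t' := tsum_nonneg (fun t => by positivity)
  have pw : ∀ (n : ℕ) (w : Fin n → T) (ε : ℝ), 0 < ε → ε ^ (∑ k, g (w k)) = ∏ k, ε ^ g (w k) := by
    intro n w ε hε
    exact (Real.rpow_sum_of_pos hε _ _)
  have hsum : Summable (fun x : (Σ n : ℕ, (Fin (n+1) → T)) => ‖p (x.1+1) (fun k => b (x.2 k))‖ * ρ' ^ (∑ k, g (x.2 k))) := by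
    have hps := fun n => prod_summable (fun t => ‖b t‖ * ρ' ^ g t) (fun t => by positivity) hs' n
    have hbd : Summable (fun x : (Σ n : ℕ, (Fin (n+1) → T)) => ‖p (x.1+1)‖ * ∏ k, (‖b (x.2 k)‖ * ρ' ^ g (x.2 k))) := by
      rw [summable_sigma_of_nonneg]
      · constructor
        · intro n
          exact Summable.mul_left ‖p (n+1)‖ (hps (n+1)).summable
        · have ee : ∀ n : ℕ, ∑' y : Fin (n+1) → T, ‖p (n+1)‖ * ∏ k, (‖b (y k)‖ * ρ' ^ g (y k)) = ‖p (n+1)‖ * t' ^ (n+1) := by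
            intro n
            rw [tsum_mul_left, (hps (n+1)).tsum_eq]
          simp only [ee]
          have geo : Summable (fun n : ℕ => C * ((1:ℝ)/2)^(n+1)) :=
            ((summable_nat_add_iff 1).mpr (summable_geometric_of_lt_one (by norm_num) (by norm_num : (1:ℝ)/2 < 1))).mul_left C
          apply Summable.of_nonneg_of_le _ _ geo
          · intro n; positivity
          · intro n
            calc ‖p (n+1)‖ * t' ^ (n+1) ≤ ‖p (n+1)‖ * (s/2) ^ (n+1) := by gcongr
              _ = (‖p (n+1)‖ * s ^ (n+1)) * (1/2)^(n+1) := by rw [div_pow, div_pow]; ring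
              _ ≤ C * (1/2)^(n+1) := by gcongr; exact hb _
      · intro x
        have : 0 ≤ ∏ k, (‖b (x.2 k)‖ * ρ' ^ g (x.2 k)) := Finset.prod_nonneg (fun k _ => by positivity)
        positivity
    apply Summable.of_nonneg_of_le _ _ hbd
    · intro x; positivity
    · intro x
      rw [pw _ _ _ hρ', Finset.prod_mul_distrib, ← mul_assoc]
      gcongr
      exact (p (x.1+1)).le_opNorm _
  refine ⟨ρ', κ, (Σ n : ℕ, (Fin (n+1) → T)), fun x => p (x.1+1) (fun k => b (x.2 k)),
    fun x => ∑ k, g (x.2 k), hρ', hκ, ?_, ?_, hsum, ?_⟩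
  · rintro ⟨n, w⟩
    simp only [Fin.sum_univ_succ]
    have : 0 ≤ ∑ i : Fin n, g (w i.succ) := Finset.sum_nonneg (fun i _ => hκ.le.trans (hg _))
    linarith [hg (w 0)]
  · intro D
    obtain ⟨N, hN⟩ := exists_nat_gt (D / κ)
    have : {x : (Σ n : ℕ, (Fin (n+1) → T)) | ∑ k, g (x.2 k) ≤ D} ⊆
        ⋃ n ∈ Finset.range N, (Sigma.mk n) '' (Set.pi univ (fun _ : Fin (n+1) => {t | g t ≤ D})) := by
      rintro ⟨n, w⟩ hx
      simp only [mem_ofPred_eq] at hx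
      have h1 : ((n:ℝ)+1) * κ ≤ ∑ k, g (w k) := by
        calc ((n:ℝ)+1) * κ = ∑ k : Fin (n+1), κ := by simp
          _ ≤ _ := Finset.sum_le_sum (fun k _ => hg _)
      have h2 : (n:ℝ) < N := by
        have : (n:ℝ) + 1 ≤ D / κ := by rw [le_div_iff₀ hκ]; linarith
        linarith
      simp only [mem_iUnion, mem_image]
      refine ⟨n, Finset.mem_range.mpr (by exact_mod_cast h2), w, ?_, rfl⟩
      intro k _
      have := Finset.single_le_sum (f := fun k => g (w k)) (fun i _ => hκ.le.trans (hg _)) (Finset.mem_univ k)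
      exact this.trans hx
    refine Set.Finite.subset (Set.Finite.biUnion (Finset.finite_toSet _) ?_) this
    intro n _
    exact (Set.Finite.pi' (fun _ => hf D)).subset (by intro w hw; simpa using hw) |>.image _
  · intro ε he0 he1
    have he2 : ε ≤ ρ := he1.trans hρρ
    have s1 : Summable (fun x : (Σ n : ℕ, (Fin (n+1) → T)) => ε ^ (∑ k, g (x.2 k)) • p (x.1+1) (fun k => b (x.2 k))) := by
      refine Summable.of_norm_bounded hsum ?_
      intro x
      rw [norm_smul, Real.norm_of_nonneg (by positivity), mul_comm]
      have : 0 ≤ ∑ k, g (x.2 k) := Finset.sum_nonneg (fun i _ => hκ.le.trans (hg _))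
      exact mul_le_mul_of_nonneg_left (Real.rpow_le_rpow he0.le he1 this) (norm_nonneg _)
    have hv := hh ε he0 he2
    have hsε := (sum_shrink hρ' hg hs' he0 he1)
    have hnv : ‖w ε‖ < s := by
      have h1 := VS.bound he0 hsε.2.1 hv
      have h2 : ∑' t, ‖b t‖ * ε ^ g t ≤ t' := by
        refine hsε.2.1.tsum_le_tsum ?_ hs'
        intro t
        have := hg t
        have : 0 ≤ g t := by linarith
        exact mul_le_mul_of_nonneg_left (Real.rpow_le_rpow he0.le he1 this) (norm_nonneg _)
      linarith
    have s2 := hp.hasSum (y := w ε) (by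
      rw [mem_eball_zero_iff]
      refine lt_trans ?_ hsr
      rw [enorm_eq_nnnorm]
      exact_mod_cast hnv)
    rw [zero_add] at s2
    have s3 := (hasSum_nat_add_iff' 1).mpr s2
    have z : p 0 (fun _ => w ε) = 0 := by rw [← h0]; exact hp.coeff_zero _
    simp only [Finset.sum_range_one, z, sub_zero] at s3
    have s4 := s1.hasSum
    have s5 := s4.sigma (g := fun n => p (n+1) (fun _ => w ε)) (by
      intro n
      have := mult_hasSum (fun t => ε ^ g t • b t) (w ε) hv (by
        refine hsε.2.1.congr (fun t => ?_)
        rw [norm_smul, Real.norm_of_nonneg (by positivity), mul_comm]) (n+1) (p (n+1))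
      convert this using 1
      funext u
      rw [pw _ _ _ he0, ContinuousMultilinearMap.map_smul_univ])
    rw [s5.unique s3] at s4
    exact s4

lemma IV.prod {v : ℝ → E} {w : ℝ → F} (hv : IV v) (hw : IV w) : IV (fun ε => (v ε, w ε)) := by
  obtain ⟨v', ⟨ρ, κ, T, b, g, hρ, hκ, hg, hf, hs, hh⟩, hve⟩ := hv
  obtain ⟨w', ⟨ρ', κ', T', b', g', hρ', hκ', hg', hf', hs', hh'⟩, hwe⟩ := hw
  refine ⟨fun ε => (v' ε, w' ε), ⟨min ρ ρ', min κ κ', T ⊕ T', Sum.elim (fun t => (b t, 0)) (fun t => (0, b' t)),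
    Sum.elim g g', by positivity, by positivity, ?_, ?_, ?_, ?_⟩, ?_⟩
  · rintro (t | t)
    · exact (min_le_left _ _).trans (hg t)
    · exact (min_le_right _ _).trans (hg' t)
  · intro C
    refine (((hf C).image Sum.inl).union ((hf' C).image Sum.inr)).subset ?_
    rintro (t | t) ht
    · left; exact ⟨t, ht, rfl⟩
    · right; exact ⟨t, ht, rfl⟩
  · have hm : 0 < min ρ ρ' := by positivity
    have h1 := (sum_shrink hρ hg hs hm (min_le_left _ _)).2.1
    have h2 := (sum_shrink hρ' hg' hs' hm (min_le_right _ _)).2.1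
    refine (HasSum.sum (a := ∑' t, ‖b t‖ * (min ρ ρ') ^ g t) (b := ∑' t, ‖b' t‖ * (min ρ ρ') ^ g' t) ?_ ?_).summable
    · convert h1.hasSum using 1
      funext t; simp [Prod.norm_def]
    · convert h2.hasSum using 1
      funext t; simp [Prod.norm_def]
  · intro ε he0 he1
    have h1 := hh ε he0 (he1.trans (min_le_left _ _))
    have h2 := hh' ε he0 (he1.trans (min_le_right _ _))
    have := HasSum.sum (f := fun t : T ⊕ T' => ε ^ (Sum.elim g g' t) • (Sum.elim (fun t => (b t, (0:F))) (fun t => ((0:E), b' t)) t))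
      (a := (v' ε, 0)) (b := (0, w' ε)) ?_ ?_
    · simpa using this
    · convert h1.mapL (ContinuousLinearMap.inl ℝ E F) using 1
      · funext t; simp
      · simp
    · convert h2.mapL (ContinuousLinearMap.inr ℝ E F) using 1
      · funext t; simp
      · simp
  · filter_upwards [hve, hwe] with ε h1 h2
    rw [h1, h2]

lemma IV.rpow {d : ℝ} (hd : 0 < d) : IV (fun ε : ℝ => ε ^ d) := by
  refine ⟨_, ⟨1, d, Unit, fun _ => 1, fun _ => d, one_pos, hd, fun _ => le_rfl, fun C => Set.toFinite _, ?_, ?_⟩, EventuallyEq.rfl⟩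
  · exact (hasSum_unique _).summable
  · intro ε _ _
    simp
lemma IV.zero : IV (fun _ : ℝ => (0:E)) := by
  refine ⟨_, ⟨1, 1, Empty, fun _ => 0, fun _ => 1, one_pos, one_pos, fun _ => le_rfl, fun C => Set.toFinite _, ?_, ?_⟩, EventuallyEq.rfl⟩
  · exact hasSum_empty.summable
  · intro ε _ _
    exact hasSum_empty

end vser

section kgerm
variable {E F G : Type} [NormedAddCommGroup E] [NormedSpace ℝ E] [NormedAddCommGroup F]
  [NormedSpace ℝ F] [NormedAddCommGroup G] [NormedSpace ℝ G]

lemma IV.clm [CompleteSpace F] {v : ℝ → E} (h : IV v) (L : E →L[ℝ] F) : IV (fun ε => L (v ε)) :=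
  h.comp (L.analyticAt 0) (by simp)

lemma IV.add [CompleteSpace E] {v w : ℝ → E} (hv : IV v) (hw : IV w) : IV (fun ε => v ε + w ε) :=
  (hv.prod hw).clm (ContinuousLinearMap.fst ℝ E E + ContinuousLinearMap.snd ℝ E E)

lemma IV.sum [CompleteSpace E] {ι : Type*} (s : Finset ι) {v : ι → ℝ → E} (hv : ∀ i ∈ s, IV (v i)) :
    IV (fun ε => ∑ i ∈ s, v i ε) := by
  classical
  induction s using Finset.induction_on with
  | empty => simpa using IV.zero
  | insert a s ha ih =>
    simp only [Finset.sum_insert ha]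
    exact (hv a (by simp)).add (ih (fun i hi => hv i (by simp [hi])))

lemma IV.pi {ι : Type} [Fintype ι] {v : ι → ℝ → ℝ} (hv : ∀ i, IV (v i)) : IV (fun ε i => v i ε) := by
  classical
  have := IV.sum Finset.univ (fun i _ => (hv i).clm (ContinuousLinearMap.single ℝ (fun _ : ι => ℝ) i))
  convert this using 2 with ε
  funext j
  simp [Finset.sum_apply, Pi.single_apply]

lemma IV.mul {v w : ℝ → ℝ} (hv : IV v) (hw : IV w) : IV (fun ε => v ε * w ε) :=
  (hv.prod hw).comp (Ψ := fun x : ℝ × ℝ => x.1 * x.2) (analyticAt_fst.mul analyticAt_snd) (by simp)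

lemma IV.cmul {v : ℝ → ℝ} (hv : IV v) (c : ℝ) : IV (fun ε => c * v ε) :=
  hv.comp (Ψ := fun x : ℝ => c * x) (by fun_prop) (by simp)

lemma gap {T : Type} (g : T → ℝ) (hg : ∀ t, 0 < g t) (hf : ∀ C, {t | g t ≤ C}.Finite) :
    ∃ κ, 0 < κ ∧ ∀ t, κ ≤ g t := by
  by_cases hne : ({t | g t ≤ 1} : Set T).Nonempty
  · obtain ⟨t0, h0, h1⟩ := Set.exists_min_image _ g (hf 1) hne
    refine ⟨min 1 (g t0), lt_min one_pos (hg _), fun t => ?_⟩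
    by_cases ht : g t ≤ 1
    · exact (min_le_right _ _).trans (h1 t ht)
    · exact (min_le_left _ _).trans (not_le.mp ht).le
  · refine ⟨1, one_pos, fun t => ?_⟩
    by_contra hlt
    exact hne ⟨t, (not_le.mp hlt).le⟩

def KK (u : ℝ → ℝ) : Prop := (u =ᶠ[𝓝[>] 0] fun _ => 0) ∨
  ∃ (γ c : ℝ) (v : ℝ → ℝ), c ≠ 0 ∧ IV v ∧ u =ᶠ[𝓝[>] 0] fun ε => ε ^ γ * (c + v ε)

lemma KK.congr {v w : ℝ → ℝ} (h : KK v) (e : w =ᶠ[𝓝[>] 0] v) : KK w := by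
  rcases h with h | ⟨γ, c, z, hc, hz, h⟩
  · exact Or.inl (e.trans h)
  · exact Or.inr ⟨γ, c, z, hc, hz, e.trans h⟩

lemma IV.merge {v : ℝ → ℝ} (h : VS v) : ∃ (S : Set ℝ) (B : ℝ → ℝ) (ρ : ℝ), 0 < ρ ∧ (∀ γ ∈ S, B γ ≠ 0) ∧
    (∀ C, {t : S | t.1 ≤ C}.Finite) ∧ (Summable fun t : S => |B t| * ρ ^ t.1) ∧
    ∀ ε, 0 < ε → ε ≤ ρ → HasSum (fun t : S => ε ^ t.1 * B t) (v ε) := by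
  obtain ⟨ρ, κ, T, b, g, hρ, hκ, hg, hf, hs, hh⟩ := h
  have hfib : ∀ y, Finite {t // g t = y} := fun y => ((hf y).subset (fun t ht => le_of_eq ht)).to_subtype
  let B : ℝ → ℝ := fun y => ∑' t : {t // g t = y}, b t
  have hB : ∀ y, HasSum (fun t : {t // g t = y} => b t) (B y) := fun y => (Summable.of_finite).hasSum
  have hS : ∀ γ, B γ ≠ 0 → ∃ t, g t = γ := by
    intro γ hγ
    by_contra hno
    push Not at hno
    have : IsEmpty {t // g t = γ} := ⟨fun t => hno t.1 t.2⟩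
    exact hγ tsum_empty
  refine ⟨{γ | B γ ≠ 0}, B, ρ, hρ, fun _ h => h, ?_, ?_, ?_⟩
  · intro C
    refine Set.Finite.of_finite_image (f := Subtype.val) ?_ Subtype.val_injective.injOn
    refine ((hf C).image g).subset ?_
    rintro _ ⟨⟨γ, hγ⟩, hC, rfl⟩
    obtain ⟨t, rfl⟩ := hS γ hγ
    exact ⟨t, hC, rfl⟩
  · have h1 := (Equiv.sigmaFiberEquiv g).summable_iff.mpr hs
    have h2 := (h1.sigma' (fun y => Summable.of_finite))
    refine Summable.of_nonneg_of_le (fun t => by positivity) ?_ (h2.comp_injective (Subtype.val_injective (p := fun γ => B γ ≠ 0)))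
    intro t
    simp only [Function.comp]
    have e : ∀ c : {x // g x = t.1}, ‖b ((Equiv.sigmaFiberEquiv g) ⟨t.1, c⟩)‖ * ρ ^ g ((Equiv.sigmaFiberEquiv g) ⟨t.1, c⟩) = ‖b c‖ * ρ ^ t.1 := by
      intro c
      have : g c.1 = t.1 := c.2
      simp [Equiv.sigmaFiberEquiv, this]
    simp only [e, tsum_mul_right]
    have := norm_tsum_le_tsum_norm (f := fun c : {x // g x = t.1} => b c) Summable.of_finite
    gcongr
    exact this
  · intro ε he0 he1
    have h1 := (Equiv.sigmaFiberEquiv g).hasSum_iff.mpr (hh ε he0 he1)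
    have h2 := h1.sigma (g := fun y => ε ^ y * B y) (by
      intro y
      refine HasSum.congr_fun ((hB y).mul_left (ε ^ y)) ?_
      intro c
      have : g c.1 = y := c.2
      simp [Equiv.sigmaFiberEquiv, this])
    refine (hasSum_subtype_iff_of_support_subset (s := {γ | B γ ≠ 0}) ?_).mpr h2
    intro y hy
    simp only [Function.mem_support] at hy
    exact right_ne_zero_of_mul hy

lemma IV.KK {v : ℝ → ℝ} (h : IV v) : KK v := by
  obtain ⟨v', hv', hve⟩ := h
  refine _root_.KK.congr ?_ hve
  obtain ⟨S, B, ρ, hρ, hB, hf, hs, hh⟩ := IV.merge hv'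
  rcases S.eq_empty_or_nonempty with rfl | ⟨γ1, hγ1⟩
  · left
    filter_upwards [ev_le hρ] with ε hε
    exact (hh ε hε.1 hε.2).unique hasSum_empty
  · right
    obtain ⟨γ, hγ, hmin⟩ : ∃ γ ∈ S, ∀ t ∈ S, γ ≤ t := by
      obtain ⟨t0, h0, h1⟩ := Set.exists_min_image {t : S | t.1 ≤ γ1} (fun t => t.1) (hf γ1) ⟨⟨γ1, hγ1⟩, le_refl γ1⟩
      refine ⟨t0.1, t0.2, fun t ht => ?_⟩
      by_cases hle : t ≤ γ1
      · exact h1 ⟨t, ht⟩ hle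
      · exact le_trans h0 (not_le.mp hle).le
    let T := ({t : S | t ≠ ⟨γ, hγ⟩} : Set S)
    have hpos : ∀ t : T, 0 < t.1.1 - γ := by
      intro t
      have h1 := hmin t.1.1 t.1.2
      have h2 : t.1.1 ≠ γ := fun hh => t.2 (Subtype.ext hh)
      have := lt_of_le_of_ne h1 (Ne.symm h2)
      linarith
    have hf' : ∀ C, {t : T | t.1.1 - γ ≤ C}.Finite := by
      intro C
      refine Set.Finite.of_finite_image (f := Subtype.val) ?_ Subtype.val_injective.injOn
      refine (hf (C + γ)).subset ?_
      rintro _ ⟨t, ht, rfl⟩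
      have : t.1.1 - γ ≤ C := ht
      show t.1.1 ≤ C + γ
      linarith
    obtain ⟨κ, hκ, hκt⟩ := gap _ hpos hf'
    refine ⟨γ, B γ, fun ε => v' ε / ε ^ γ - B γ, hB _ hγ, ⟨fun ε => v' ε / ε ^ γ - B γ, ⟨ρ, κ, T, fun t => B t.1.1, fun t => t.1.1 - γ, hρ, hκ, hκt, hf', ?_, ?_⟩, EventuallyEq.rfl⟩, ?_⟩
    · have := (hs.comp_injective (Subtype.val_injective (p := fun t : S => t ≠ ⟨γ, hγ⟩))).mul_right (ρ ^ γ)⁻¹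
      refine this.congr ?_
      intro t
      simp only [Function.comp, Real.rpow_sub hρ, Real.norm_eq_abs]
      ring
    · intro ε he0 he1
      have h1 := hh ε he0 he1
      have h2 := ((hasSum_ite_eq (⟨γ, hγ⟩ : S) (ε ^ γ * B γ)))
      have h3 := (h1.sub h2)
      have h4 := (hasSum_subtype_iff_of_support_subset (s := {t : S | t ≠ ⟨γ, hγ⟩}) (by
        intro t ht
        simp only [Function.mem_support] at ht
        intro hh
        apply ht
        have : t = ⟨γ, hγ⟩ := hh
        subst this
        simp)).mpr h3
      have h5 := h4.mul_right (ε ^ γ)⁻¹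
      have hp : ε ^ γ ≠ 0 := (Real.rpow_pos_of_pos he0 _).ne'
      have e : (v' ε - ε ^ γ * B γ) * (ε ^ γ)⁻¹ = v' ε / ε ^ γ - B γ := by field_simp
      rw [e] at h5
      refine h5.congr_fun ?_
      intro t
      have : t.1 ≠ ⟨γ, hγ⟩ := t.2
      simp only [Function.comp, this, if_false, Real.rpow_sub he0, smul_eq_mul]
      ring
    · filter_upwards [ev_le hρ] with ε hε
      have hp : ε ^ γ ≠ 0 := (Real.rpow_pos_of_pos hε.1 _).ne'
      field_simp
      ring
end kgerm

section kops

lemma ev_pos : ∀ᶠ ε in 𝓝[>] (0:ℝ), 0 < ε := self_mem_nhdsWithin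

lemma KK.cadd {v : ℝ → ℝ} (hv : IV v) (c : ℝ) : KK (fun ε => c + v ε) := by
  by_cases hc : c = 0
  · subst hc; simpa using hv.KK
  · exact Or.inr ⟨0, c, v, hc, hv, by simp⟩

lemma KK.const (c : ℝ) : KK (fun _ => c) := by simpa using KK.cadd IV.zero c

lemma KK.rpow_mul {u : ℝ → ℝ} (hu : KK u) (γ : ℝ) : KK (fun ε => ε ^ γ * u ε) := by
  rcases hu with h | ⟨δ, c, v, hc, hv, h⟩
  · left; filter_upwards [h] with ε h; simp [h]
  · right
    refine ⟨γ + δ, c, v, hc, hv, ?_⟩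
    filter_upwards [h, ev_pos] with ε h h0
    rw [h, Real.rpow_add h0]; ring

lemma KK.rpowid (γ : ℝ) : KK (fun ε => ε ^ γ) := by
  simpa using (KK.const 1).rpow_mul γ

lemma KK.mul {u w : ℝ → ℝ} (hu : KK u) (hw : KK w) : KK (fun ε => u ε * w ε) := by
  rcases hu with h | ⟨δ, c, v, hc, hv, h⟩
  · left; filter_upwards [h] with ε h; simp [h]
  rcases hw with h' | ⟨δ', c', v', hc', hv', h'⟩
  · left; filter_upwards [h'] with ε h; simp [h]
  right
  refine ⟨δ + δ', c * c', fun ε => c * v' ε + c' * v ε + v ε * v' ε, mul_ne_zero hc hc',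
    ((hv'.cmul c).add (hv.cmul c')).add (hv.mul hv'), ?_⟩
  filter_upwards [h, h', ev_pos] with ε h h' h0
  rw [h, h', Real.rpow_add h0]; ring

lemma KK.add_aux {v w : ℝ → ℝ} (hv : IV v) (hw : IV w) (γ δ c d : ℝ) (h : γ ≤ δ) :
    KK (fun ε => ε ^ γ * (c + v ε) + ε ^ δ * (d + w ε)) := by
  rcases eq_or_lt_of_le h with rfl | hlt
  · refine ((KK.cadd (hv.add hw) (c + d)).rpow_mul γ).congr (Eventually.of_forall fun ε => ?_)
    ring
  · have h1 := IV.rpow (sub_pos.mpr hlt)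
    have : IV (fun ε => v ε + (d * ε ^ (δ - γ) + ε ^ (δ - γ) * w ε)) := hv.add ((h1.cmul d).add (h1.mul hw))
    refine ((KK.cadd this c).rpow_mul γ).congr ?_
    filter_upwards [ev_pos] with ε h0
    have : ε ^ δ = ε ^ γ * ε ^ (δ - γ) := by rw [← Real.rpow_add h0]; ring_nf
    rw [this]; ring

lemma KK.add {u w : ℝ → ℝ} (hu : KK u) (hw : KK w) : KK (fun ε => u ε + w ε) := by
  rcases hu with h | ⟨δ, c, v, hc, hv, h⟩
  · exact hw.congr (by filter_upwards [h] with ε h; simp [h])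
  rcases hw with h' | ⟨δ', c', v', hc', hv', h'⟩
  · exact KK.congr (Or.inr ⟨δ, c, v, hc, hv, h⟩) (by filter_upwards [h'] with ε h; simp [h])
  rcases le_total δ δ' with hle | hle
  · exact (KK.add_aux hv hv' δ δ' c c' hle).congr (by filter_upwards [h, h'] with ε h h'; rw [h, h'])
  · exact (KK.add_aux hv' hv δ' δ c' c hle).congr (by filter_upwards [h, h'] with ε h h'; rw [h, h', add_comm])

lemma KK.cmul {u : ℝ → ℝ} (hu : KK u) (c : ℝ) : KK (fun ε => c * u ε) := (KK.const c).mul hu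

lemma KK.sub {u w : ℝ → ℝ} (hu : KK u) (hw : KK w) : KK (fun ε => u ε - w ε) := by
  refine (hu.add (hw.cmul (-1))).congr (Eventually.of_forall fun ε => ?_)
  ring

lemma KK.sum {ι : Type*} (s : Finset ι) {u : ι → ℝ → ℝ} (h : ∀ i ∈ s, KK (u i)) :
    KK (fun ε => ∑ i ∈ s, u i ε) := by
  classical
  induction s using Finset.induction_on with
  | empty => simpa using KK.const 0
  | insert a s ha ih =>
    simp only [Finset.sum_insert ha]
    exact (h a (by simp)).add (ih (fun i hi => h i (by simp [hi])))

lemma lead_tendsto {u v : ℝ → ℝ} {γ c : ℝ} (hv : IV v) (h : u =ᶠ[𝓝[>] 0] fun ε => ε ^ γ * (c + v ε)) :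
    Tendsto (fun ε => u ε / ε ^ γ) (𝓝[>] 0) (𝓝 c) := by
  have := hv.tendsto.const_add c
  rw [add_zero] at this
  refine this.congr' ?_
  filter_upwards [h, ev_pos] with ε h h0
  rw [h]
  have := (Real.rpow_pos_of_pos h0 γ).ne'
  field_simp

lemma KK.sign {u : ℝ → ℝ} (hu : KK u) : (∀ᶠ ε in 𝓝[>] 0, u ε = 0) ∨ (∀ᶠ ε in 𝓝[>] 0, 0 < u ε) ∨
    (∀ᶠ ε in 𝓝[>] 0, u ε < 0) := by
  rcases hu with h | ⟨δ, c, v, hc, hv, h⟩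
  · exact Or.inl h
  right
  have ht := hv.tendsto.const_add c
  rw [add_zero] at ht
  rcases lt_or_gt_of_ne hc with hc | hc
  · right
    filter_upwards [h, ev_pos, ht.eventually (gt_mem_nhds hc)] with ε h h0 h1
    rw [h]; exact mul_neg_of_pos_of_neg (Real.rpow_pos_of_pos h0 _) h1
  · left
    filter_upwards [h, ev_pos, ht.eventually (lt_mem_nhds hc)] with ε h h0 h1
    rw [h]; exact mul_pos (Real.rpow_pos_of_pos h0 _) h1

/-- representation of positive elements -/
lemma KK.pos_rep {u : ℝ → ℝ} (hu : KK u) (hp : ∀ᶠ ε in 𝓝[>] 0, 0 < u ε) :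
    ∃ (γ c : ℝ) (v : ℝ → ℝ), 0 < c ∧ IV v ∧ u =ᶠ[𝓝[>] 0] fun ε => ε ^ γ * (c + v ε) := by
  rcases hu with h | ⟨δ, c, v, hc, hv, h⟩
  · obtain ⟨ε, h1, h2⟩ := (h.and hp).exists
    exact absurd h1 h2.ne'
  refine ⟨δ, c, v, lt_of_le_of_ne ?_ hc.symm, hv, h⟩
  refine ge_of_tendsto (lead_tendsto hv h) ?_
  filter_upwards [hp, ev_pos] with ε h h0
  have := Real.rpow_pos_of_pos h0 δ
  positivity

lemma rpow_analytic {c : ℝ} (hc : 0 < c) (a : ℝ) : AnalyticAt ℝ (fun x : ℝ => x ^ a) c :=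
  (Real.contDiffAt_rpow_const_of_ne (n := ⊤) hc.ne').analyticAt

lemma KK.rpow {u : ℝ → ℝ} (hu : KK u) (hp : ∀ᶠ ε in 𝓝[>] 0, 0 < u ε) (a : ℝ) :
    KK (fun ε => u ε ^ a) := by
  obtain ⟨γ, c, v, hc, hv, h⟩ := hu.pos_rep hp
  right
  refine ⟨γ * a, c ^ a, fun ε => (c + v ε) ^ a - c ^ a, (Real.rpow_pos_of_pos hc a).ne',
    hv.comp (Ψ := fun x => (c + x) ^ a - c ^ a) ?_ (by simp), ?_⟩
  · apply AnalyticAt.sub _ analyticAt_const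
    apply AnalyticAt.fun_comp (g := fun x : ℝ => x ^ a) (f := fun x : ℝ => c + x) (x := 0)
    · simpa using rpow_analytic hc a
    · fun_prop
  · filter_upwards [h, hp, ev_pos] with ε h h1 h0
    rw [h] at h1
    have h2 : 0 < c + v ε := by
      have := Real.rpow_pos_of_pos h0 γ
      exact (pos_iff_pos_of_mul_pos h1).mp this
    rw [h, Real.mul_rpow (Real.rpow_nonneg h0.le _) h2.le, ← Real.rpow_mul h0.le]
    ring

/-- bounded along an ultrafilter implies constant plus infinitesimal -/
lemma KK.of_bdd {u : ℝ → ℝ} (hu : KK u) {l : Filter ℝ} [l.NeBot] (hl : l ≤ 𝓝[>] 0) (C : ℝ)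
    (hb : ∀ᶠ ε in l, |u ε| ≤ C) : ∃ b, IV (fun ε => u ε - b) := by
  rcases hu with h | ⟨γ, c, v, hc, hv, h⟩
  · exact ⟨0, IV.zero.congr (by filter_upwards [h] with ε h; simp [h])⟩
  rcases lt_trichotomy γ 0 with hγ | rfl | hγ
  · exfalso
    have h1 : Tendsto (fun ε => |u ε| * ε ^ (-γ)) l (𝓝 |c|) := by
      have := ((lead_tendsto hv h).abs).mono_left hl
      refine this.congr' ?_
      filter_upwards [hl ev_pos] with ε h0
      have := Real.rpow_pos_of_pos h0 γ
      rw [abs_div, abs_of_pos this, Real.rpow_neg h0.le, div_eq_mul_inv]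
    have h2 : Tendsto (fun ε : ℝ => C * ε ^ (-γ)) l (𝓝 0) := by
      have := (shrink_tendsto (ρ := 1) (M := C) (κ := -γ) (by linarith)).mono_left hl
      refine this.congr (fun ε => ?_)
      rw [div_one, mul_comm]
    have h3 : |c| ≤ 0 := by
      refine le_of_tendsto_of_tendsto h1 h2 ?_
      filter_upwards [hl ev_pos, hb] with ε h0 h
      have := Real.rpow_pos_of_pos h0 (-γ)
      gcongr
    exact hc (abs_nonpos_iff.mp h3)
  · exact ⟨c, hv.congr (by filter_upwards [h] with ε h; simp [h])⟩
  · refine ⟨0, IV.congr (((IV.rpow hγ).cmul c).add ((IV.rpow hγ).mul hv)) ?_⟩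
    filter_upwards [h] with ε h
    rw [h]; ring

lemma KK.zero_of {u : ℝ → ℝ} (hu : KK u) {l : Filter ℝ} [l.NeBot] (hl : l ≤ 𝓝[>] 0)
    (h : ∀ᶠ ε in l, u ε = 0) : ∀ᶠ ε in 𝓝[>] 0, u ε = 0 := by
  rcases hu.sign with h1 | h1 | h1
  · exact h1
  · obtain ⟨ε, h1, h2⟩ := (h.and (hl h1)).exists
    exact absurd h1 (ne_of_gt h2)
  · obtain ⟨ε, h1, h2⟩ := (h.and (hl h1)).exists
    exact absurd h1 (ne_of_lt h2)
end kops

section modC1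

lemma uf_fin {ι : Type*} [Finite ι] (l : Ultrafilter ℝ) {P : ι → ℝ → Prop} (h : ∀ᶠ ε in (l : Filter ℝ), ∃ k, P k ε) :
    ∃ k, ∀ᶠ ε in (l : Filter ℝ), P k ε := by
  by_contra hn
  push Not at hn
  have h2 : ∀ k, ∀ᶠ ε in (l : Filter ℝ), ¬ P k ε := fun k => hn k
  have h3 := (eventually_all.2 h2).and h
  obtain ⟨ε, h4, k, h5⟩ := h3.exists
  exact h4 k h5

lemma uf_lim (l : Ultrafilter ℝ) {Q : ℝ → ℝ} {A B : ℝ} (h : ∀ᶠ ε in (l : Filter ℝ), A ≤ Q ε ∧ Q ε ≤ B) :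
    ∃ q, A ≤ q ∧ q ≤ B ∧ Tendsto Q l (𝓝 q) := by
  obtain ⟨q, hq, hh⟩ := (isCompact_Icc (a := A) (b := B)).ultrafilter_le_nhds (l.map Q)
    (by rw [Filter.le_principal_iff]; exact h)
  exact ⟨q, hq.1, hq.2, hh⟩

lemma dom {ι : Type*} [Fintype ι] (β : ι → ℝ → ℝ) (hβ : ∀ k, KK (β k)) (e : ι → ℝ)
    (he : Function.Injective e) (l : Ultrafilter ℝ) (hl : (l : Filter ℝ) ≤ 𝓝[>] 0) (Y : ℝ → ℝ)
    (hY : ∀ᶠ ε in (l : Filter ℝ), 0 < Y ε) (U : ι → ℝ → ℝ) (C : ℝ) (hC : 0 < C)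
    (hU : ∀ k, ∀ᶠ ε in (l : Filter ℝ), 1 / C ≤ |U k ε| ∧ |U k ε| ≤ C)
    (hz : ∀ᶠ ε in (l : Filter ℝ), ∑ k, β k ε * Y ε ^ e k * U k ε = 0)
    (hne : ∃ k, ¬ ∀ᶠ ε in 𝓝[>] 0, β k ε = 0) :
    ∃ (τ c μ : ℝ) (b : ι → ℝ), 0 < c ∧ Tendsto (fun ε => Y ε / ε ^ τ) l (𝓝 c) ∧
      (∀ k, IV (fun ε => ε ^ (e k * τ - μ) * β k ε - b k)) ∧ ∃ k, b k ≠ 0 := by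
  classical
  have : Nonempty ι := ⟨hne.choose⟩
  have hpos : ∀ᶠ ε in (l : Filter ℝ), 0 < ε := hl ev_pos
  set t : ι → ℝ → ℝ := fun k ε => |β k ε| * Y ε ^ e k with ht
  obtain ⟨k, hk⟩ : ∃ k, ∀ᶠ ε in (l : Filter ℝ), ∀ j, t j ε ≤ t k ε := by
    apply uf_fin l
    refine Eventually.of_forall (fun ε => ?_)
    obtain ⟨k, _, hk⟩ := Finset.exists_max_image Finset.univ (fun k => t k ε) Finset.univ_nonempty
    exact ⟨k, fun j => hk j (Finset.mem_univ _)⟩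
  have hnz : ∀ i, (¬ ∀ᶠ ε in 𝓝[>] 0, β i ε = 0) → ∀ᶠ ε in (l : Filter ℝ), β i ε ≠ 0 := by
    intro i hi
    rcases (hβ i).sign with h | h | h
    · exact absurd h hi
    · exact hl (h.mono fun _ h => h.ne')
    · exact hl (h.mono fun _ h => h.ne)
  have htk : ∀ᶠ ε in (l : Filter ℝ), 0 < t k ε := by
    obtain ⟨i, hi⟩ := hne
    filter_upwards [hnz i hi, hk, hY] with ε h1 h2 h3
    exact lt_of_lt_of_le (mul_pos (abs_pos.2 h1) (Real.rpow_pos_of_pos h3 _)) (h2 i)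
  obtain ⟨n, hn⟩ : ∃ n : ℝ, n = ((Fintype.card ι : ℕ) : ℝ) := ⟨_, rfl⟩
  have hn0 : 0 < n := by rw [hn]; exact_mod_cast Fintype.card_pos
  obtain ⟨j, hj⟩ : ∃ j, ∀ᶠ ε in (l : Filter ℝ), j ≠ k ∧ t k ε ≤ n * C ^ 2 * t j ε := by
    apply uf_fin l
    filter_upwards [htk, hz, hY, eventually_all.2 hU] with ε h1 h2 h3 h4
    by_contra hcon
    push Not at hcon
    rw [← Finset.add_sum_erase _ _ (Finset.mem_univ k)] at h2
    have h5 : |β k ε * Y ε ^ e k * U k ε| ≤ ∑ i ∈ Finset.univ.erase k, |β i ε * Y ε ^ e i * U i ε| := by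
      rw [eq_neg_of_add_eq_zero_left h2, abs_neg]
      exact Finset.abs_sum_le_sum_abs _ _
    have h6 : ∀ i, |β i ε * Y ε ^ e i * U i ε| = t i ε * |U i ε| := by
      intro i
      rw [abs_mul, abs_mul, abs_of_pos (Real.rpow_pos_of_pos h3 _)]
    simp only [h6] at h5
    have h7 : ∑ i ∈ Finset.univ.erase k, t i ε * |U i ε| ≤ ∑ i ∈ Finset.univ.erase k, t k ε / (n * C) := by
      apply Finset.sum_le_sum
      intro i hi
      have h8 := hcon i (Finset.ne_of_mem_erase hi)
      have h9 : t i ε ≤ t k ε / (n * C^2) := by rw [le_div_iff₀ (by positivity)]; linarith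
      calc t i ε * |U i ε| ≤ t k ε / (n * C^2) * C := by
            apply mul_le_mul h9 (h4 i).2 (abs_nonneg _); positivity
        _ = _ := by field_simp
    rw [Finset.sum_const, nsmul_eq_mul, Finset.card_erase_of_mem (Finset.mem_univ _), Finset.card_univ,
      Nat.cast_pred Fintype.card_pos, ← hn] at h7
    have h8 : t k ε * (1 / C) ≤ t k ε * |U k ε| := mul_le_mul_of_nonneg_left (h4 k).1 h1.le
    have h9 : (n - 1) * (t k ε / (n * C)) = t k ε * (1/C) - t k ε / (n * C) := by field_simp
    have h10 : 0 < t k ε / (n * C) := by positivity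
    linarith
  have hjk : j ≠ k := hj.exists.choose_spec.1
  have hnzk : ¬ ∀ᶠ ε in 𝓝[>] 0, β k ε = 0 := by
    intro h
    obtain ⟨ε, h1, h2⟩ := (htk.and (hl h)).exists
    simp [ht, h2] at h1
  have hnzj : ¬ ∀ᶠ ε in 𝓝[>] 0, β j ε = 0 := by
    intro h
    obtain ⟨ε, h1, h2, h3⟩ := (htk.and ((h.filter_mono hl).and hj)).exists
    simp only [ht, h2, abs_zero, zero_mul, mul_zero] at h3
    simp only [ht] at h1
    linarith [h3.2]
  obtain ⟨γk, ck, vk, hck, hvk, hbk⟩ := (hβ k).resolve_left hnzk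
  obtain ⟨γj, cj, vj, hcj, hvj, hbj⟩ := (hβ j).resolve_left hnzj
  set d := e j - e k with hd
  have hd0 : d ≠ 0 := sub_ne_zero.2 (fun h => hjk (he h))
  set τ := (γk - γj) / d with hτ
  have hτd : τ * d = γk - γj := div_mul_cancel₀ _ hd0
  have Lk := (lead_tendsto hvk hbk).mono_left hl
  have Lj := (lead_tendsto hvj hbj).mono_left hl
  -- ratio
  obtain ⟨ρ, hρ1, hρ2, hρ⟩ := uf_lim l (Q := fun ε => t j ε / t k ε) (A := 1 / (n * C^2)) (B := 1) (by
    filter_upwards [htk, hk, hj] with ε h1 h2 h3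
    constructor
    · rw [div_le_div_iff₀ (by positivity) h1]; linarith [h3.2]
    · rw [div_le_one h1]; exact h2 j)
  have hρ0 : 0 < ρ := lt_of_lt_of_le (by positivity) hρ1
  have hQ : Tendsto (fun ε => (Y ε / ε ^ τ) ^ d) l (𝓝 (ρ * (|ck| / |cj|))) := by
    have := hρ.mul (Lk.abs.div Lj.abs (abs_pos.2 hcj).ne')
    refine this.congr' ?_
    filter_upwards [hpos, hY, hnz k hnzk, hnz j hnzj] with ε h1 h2 h3 h4
    have a1 := Real.rpow_pos_of_pos h1 γk
    have a2 := Real.rpow_pos_of_pos h1 γj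
    have a3 := Real.rpow_pos_of_pos h2 (e k)
    rw [Real.div_rpow h2.le (Real.rpow_nonneg h1.le _), ← Real.rpow_mul h1.le, hτd, hd,
      Real.rpow_sub h2, Real.rpow_sub h1, Pi.div_apply, abs_div, abs_div, abs_of_pos a1, abs_of_pos a2]
    simp only [ht]
    have := abs_pos.2 h3
    have := abs_pos.2 h4
    field_simp
  have hq0 : 0 < ρ * (|ck| / |cj|) := by positivity
  set c := (ρ * (|ck| / |cj|)) ^ (1 / d) with hc
  have hc0 : 0 < c := Real.rpow_pos_of_pos hq0 _
  have hlim : Tendsto (fun ε => Y ε / ε ^ τ) l (𝓝 c) := by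
    refine (hQ.rpow_const (p := 1 / d) (Or.inl hq0.ne')).congr' ?_
    filter_upwards [hpos, hY] with ε h1 h2
    rw [← Real.rpow_mul (div_nonneg h2.le (Real.rpow_nonneg h1.le _)), mul_one_div_cancel hd0, Real.rpow_one]
  set μ := γk + e k * τ with hμ
  have hex : ∀ i, ∃ b, IV (fun ε => ε ^ (e i * τ - μ) * β i ε - b) := by
    intro i
    have B := ((Lk.abs.mul (hlim.rpow_const (p := e k) (Or.inl hc0.ne'))).mul
      (hlim.rpow_const (p := - e i) (Or.inl hc0.ne')))
    have B2 := B.eventually (eventually_le_nhds (lt_add_one _))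
    refine ((hβ i).rpow_mul _).of_bdd hl (|ck| * c ^ e k * c ^ (-e i) + 1) ?_
    · filter_upwards [hk, B2, hpos, hY] with ε h1 h2 h3 h4
      refine le_trans ?_ h2
      have h5 := h1 i
      have a1 := Real.rpow_pos_of_pos h3 γk
      have a2 := Real.rpow_pos_of_pos h3 (e i * τ)
      have a3 := Real.rpow_pos_of_pos h3 (e k * τ)
      have a4 := Real.rpow_pos_of_pos h4 (e i)
      have a5 := Real.rpow_pos_of_pos h4 (e k)
      rw [Real.div_rpow h4.le (Real.rpow_nonneg h3.le _), ← Real.rpow_mul h3.le,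
        Real.div_rpow h4.le (Real.rpow_nonneg h3.le _), ← Real.rpow_mul h3.le, Real.rpow_neg h4.le,
        mul_neg, Real.rpow_neg h3.le, hμ, abs_mul, abs_of_pos (Real.rpow_pos_of_pos h3 _),
        Real.rpow_sub h3, Real.rpow_add h3, abs_div, abs_of_pos a1, mul_comm τ, mul_comm τ]
      simp only [ht] at h5
      have : |β k ε| / ε ^ γk * (Y ε ^ e k / ε ^ (e k * τ)) * ((Y ε ^ e i)⁻¹ / (ε ^ (e i * τ))⁻¹)
         = (|β k ε| * Y ε ^ e k) * (ε ^ (e i * τ) / (ε ^ γk * ε ^ (e k * τ) * Y ε ^ e i)) := by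
        field_simp
      rw [this]
      refine le_trans ?_ (mul_le_mul_of_nonneg_right h5 (by positivity))
      apply le_of_eq
      field_simp
  choose b hb using hex
  refine ⟨τ, c, μ, b, hc0, hlim, hb, k, ?_⟩
  have h1 := ((hb k).tendsto.mono_left hl).add_const (b k)
  simp only [sub_add_cancel, zero_add] at h1
  have h2 : b k = ck := by
    refine tendsto_nhds_unique h1 (Lk.congr' ?_)
    filter_upwards [hpos] with ε h3
    rw [show e k * τ - μ = -γk by rw [hμ]; ring, Real.rpow_neg h3.le]
    field_simp
  rw [h2]; exact hck

end modC1

section modC2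

lemma poly_iter (P : Polynomial ℝ) (c : ℝ) (k : ℕ) :
    iteratedDeriv k (fun w => P.eval (c + w)) 0 = (Polynomial.derivative^[k] P).eval c := by
  have h : ∀ k, ∀ P : Polynomial ℝ, iteratedDeriv k (fun w => P.eval (c + w)) = fun w => (Polynomial.derivative^[k] P).eval (c + w) := by
    intro k
    induction k with
    | zero => intro P; simp [iteratedDeriv_zero]
    | succ k ih =>
      intro P
      rw [iteratedDeriv_succ']
      have : deriv (fun w => P.eval (c + w)) = fun w => P.derivative.eval (c + w) := by
        funext w
        rw [deriv_comp_const_add (f := fun w => P.eval w), Polynomial.deriv]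
      rw [this, ih, Function.iterate_succ_apply]
  rw [h k P]; simp

lemma poly_slice (P : Polynomial ℝ) (c : ℝ) (hc : c ≠ 0) (m : ℕ) (hP : P ≠ 0) (hd : P.natDegree ≤ m + 1)
    (hm : P.coeff m = 0) : ∃ k ≤ m, iteratedDeriv k (fun w => P.eval (c + w)) 0 ≠ 0 := by
  by_contra hcon
  push Not at hcon
  simp only [poly_iter] at hcon
  have h1 := (Polynomial.lt_rootMultiplicity_iff_isRoot_iterate_derivative hP (t := c) (n := m)).2 hcon
  have h2 : (Polynomial.X - Polynomial.C c) ^ (m+1) ∣ P := (Polynomial.le_rootMultiplicity_iff hP).1 h1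
  obtain ⟨Q, hQ⟩ := h2
  have hQ0 : Q ≠ 0 := by rintro rfl; simp at hQ; exact hP hQ
  have h3 : P.natDegree = (m+1) + Q.natDegree := by
    rw [hQ, Polynomial.natDegree_mul (pow_ne_zero _ (Polynomial.X_sub_C_ne_zero c)) hQ0]
    simp
  have h4 : Q.natDegree = 0 := by omega
  obtain ⟨a, rfl⟩ := Polynomial.natDegree_eq_zero.1 h4
  rw [hQ, Polynomial.coeff_mul_C, sub_eq_add_neg, ← Polynomial.C_neg, Polynomial.coeff_X_add_C_pow] at hm
  simp at hm
  rcases hm with (h | h) | h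
  · exact hc h
  · have : (m:ℝ) + 1 > 0 := by positivity
    linarith
  · exact hQ0 (by simp [h])

/-- slice -/
lemma slice_ne (m : ℕ) (b : Option (Fin m) → ℝ) (hb : ∃ k, b k ≠ 0) (H0 : ℝ) (hH : H0 ≠ 0) (c : ℝ) (hc : c ≠ 0) :
    ∃ k ≤ m, iteratedDeriv k (fun w : ℝ => ∑ k : Fin m, b (some k) * (c + w) ^ (k : ℕ)
      + b none * ((c + w) ^ (m+1) * H0)) 0 ≠ 0 := by
  let P : Polynomial ℝ := ∑ k : Fin m, Polynomial.C (b (some k)) * Polynomial.X ^ (k : ℕ)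
    + Polynomial.C (b none * H0) * Polynomial.X ^ (m+1)
  have hco : ∀ i, P.coeff i = (∑ k : Fin m, if i = (k:ℕ) then b (some k) else 0) + if i = m+1 then b none * H0 else 0 := by
    intro i
    simp [P, Polynomial.finsetSum_coeff, Polynomial.coeff_X_pow, -map_mul, Polynomial.coeff_C_mul]
  have hP : P ≠ 0 := by
    intro h0
    obtain ⟨k, hk⟩ := hb
    cases k with
    | none =>
      have := hco (m+1)
      rw [h0, Finset.sum_eq_zero] at this
      · simp [hk, hH] at this
      · intro k _; rw [if_neg]; omega
    | some k =>
      have := hco k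
      rw [h0, Finset.sum_eq_single k, if_pos rfl, if_neg] at this
      · rw [Polynomial.coeff_zero, add_zero] at this; exact hk this.symm
      · omega
      · intro j _ hj; rw [if_neg]; exact fun h => hj (Fin.ext h.symm)
      · simp
  have hd : P.natDegree ≤ m + 1 := by
    rw [Polynomial.natDegree_le_iff_coeff_eq_zero]
    intro N hN
    rw [hco, Finset.sum_eq_zero, if_neg, add_zero]
    · omega
    · intro k _; rw [if_neg]; omega
  have hm : P.coeff m = 0 := by
    rw [hco, Finset.sum_eq_zero, if_neg, add_zero]
    · omega
    · intro k _; rw [if_neg]; omega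
  obtain ⟨k, hk, h⟩ := poly_slice P c hc m hP hd hm
  refine ⟨k, hk, ?_⟩
  convert h using 2
  funext w
  simp only [P, Polynomial.eval_add, Polynomial.eval_finsetSum, Polynomial.eval_mul, Polynomial.eval_C, Polynomial.eval_pow, Polynomial.eval_X]
  ring

lemma tilde_analytic {E : Type} [NormedAddCommGroup E] [NormedSpace ℝ E] (m : ℕ) (b : Option (Fin m) → ℝ) (c : ℝ) (H : E × ℝ → ℝ)
    (hH : AnalyticAt ℝ H 0) :
    AnalyticAt ℝ (fun p : (E × (Option (Fin m) → ℝ) × ℝ) × ℝ =>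
      ∑ k : Fin m, (b (some k) + p.1.2.1 (some k)) * (c + p.2) ^ (k : ℕ)
      + (b none + p.1.2.1 none) * ((c + p.2) ^ (m+1) * H (p.1.1, p.1.2.2 * (c + p.2)))) 0 := by
  have a2 : AnalyticAt ℝ (fun p : (E × (Option (Fin m) → ℝ) × ℝ) × ℝ => c + p.2) 0 :=
    analyticAt_const.add analyticAt_snd
  have a11 : AnalyticAt ℝ (fun p : (E × (Option (Fin m) → ℝ) × ℝ) × ℝ => p.1.1) 0 :=
    ((ContinuousLinearMap.fst ℝ E _).comp (ContinuousLinearMap.fst ℝ (E × (Option (Fin m) → ℝ) × ℝ) ℝ)).analyticAt 0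
  have a122 : AnalyticAt ℝ (fun p : (E × (Option (Fin m) → ℝ) × ℝ) × ℝ => p.1.2.2) 0 :=
    ((ContinuousLinearMap.snd ℝ _ _).comp ((ContinuousLinearMap.snd ℝ E _).comp (ContinuousLinearMap.fst ℝ (E × (Option (Fin m) → ℝ) × ℝ) ℝ))).analyticAt 0
  have a121 : ∀ k, AnalyticAt ℝ (fun p : (E × (Option (Fin m) → ℝ) × ℝ) × ℝ => b k + p.1.2.1 k) 0 := fun k =>
    analyticAt_const.add (((ContinuousLinearMap.proj k).comp ((ContinuousLinearMap.fst ℝ _ _).comp ((ContinuousLinearMap.snd ℝ E _).comp (ContinuousLinearMap.fst ℝ (E × (Option (Fin m) → ℝ) × ℝ) ℝ)))).analyticAt 0)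
  refine AnalyticAt.add ?_ ?_
  · exact Finset.analyticAt_fun_sum _ (fun k _ => (a121 _).mul (a2.pow _))
  · refine (a121 _).mul ((a2.pow _).mul ?_)
    apply AnalyticAt.fun_comp (g := H) (f := fun p : (E × (Option (Fin m) → ℝ) × ℝ) × ℝ => (p.1.1, p.1.2.2 * (c + p.2))) (x := 0)
    · simpa [Prod.mk_zero_zero] using hH
    · exact a11.prod (a122.mul a2)

end modC2

section modC3

lemma uf_sign (l : Ultrafilter ℝ) {y : ℝ → ℝ} (h : ∀ᶠ ε in (l : Filter ℝ), y ε ≠ 0) :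
    ∃ s : ℝ, |s| = 1 ∧ ∀ᶠ ε in (l : Filter ℝ), y ε = s * |y ε| := by
  have : ∀ᶠ ε in (l : Filter ℝ), 0 < y ε ∨ y ε < 0 := h.mono fun ε h => (lt_or_gt_of_ne h).symm
  rcases Ultrafilter.eventually_or.1 this with h | h
  · exact ⟨1, by simp, h.mono fun ε h => by rw [abs_of_pos h, one_mul]⟩
  · exact ⟨-1, by simp, h.mono fun ε h => by rw [abs_of_neg h]; ring⟩

lemma root_step {E : Type} [NormedAddCommGroup E] [NormedSpace ℝ E] [CompleteSpace E] (m : ℕ)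
    (B : ℕ → E → ℝ) (H : E × ℝ → ℝ) (hB : ∀ k, AnalyticAt ℝ (B k) 0) (hH : AnalyticAt ℝ H 0) (hH0 : H 0 ≠ 0)
    (v : ℝ → E) (hv : IV v) (y : ℝ → ℝ) (l : Ultrafilter ℝ) (hl : (l : Filter ℝ) ≤ 𝓝[>] 0)
    (hy : Tendsto y l (𝓝 0)) (hy0 : ∀ᶠ ε in (l : Filter ℝ), y ε ≠ 0)
    (hz : ∀ᶠ ε in (l : Filter ℝ), ∑ k ∈ Finset.range m, B k (v ε) * y ε ^ k + y ε ^ (m+1) * H (v ε, y ε) = 0) :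
    ∃ (τ c : ℝ) (b : Option (Fin m) → ℝ) (u : Option (Fin m) → ℝ → ℝ), 0 < τ ∧ c ≠ 0 ∧ (∃ k, b k ≠ 0) ∧
      (∀ k, IV (u k)) ∧ Tendsto (fun ε => y ε / ε ^ τ - c) l (𝓝 0) ∧
      ∀ᶠ ε in (l : Filter ℝ), ∑ k : Fin m, (b (some k) + u (some k) ε) * (c + (y ε / ε ^ τ - c)) ^ (k : ℕ)
      + (b none + u none ε) * ((c + (y ε / ε ^ τ - c)) ^ (m+1) * H (v ε, ε ^ τ * (c + (y ε / ε ^ τ - c)))) = 0 := by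
  obtain ⟨s, hs, hys⟩ := uf_sign l hy0
  have hpos : ∀ᶠ ε in (l : Filter ℝ), 0 < ε := hl ev_pos
  have hHlim : Tendsto (fun ε => |H (v ε, y ε)|) l (𝓝 |H 0|) :=
    (hH.continuousAt.tendsto.comp ((hv.tendsto.mono_left hl).prodMk_nhds hy)).abs
  have hH1 : 0 < |H 0| := abs_pos.2 hH0
  let e : Option (Fin m) → ℝ := fun k => k.elim ((m:ℝ) + 1) (fun k => (k:ℕ))
  let β : Option (Fin m) → ℝ → ℝ := fun k => k.elim (fun _ => 1) (fun k ε => B k (v ε))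
  let U : Option (Fin m) → ℝ → ℝ := fun k => k.elim (fun ε => s ^ (m+1) * H (v ε, y ε)) (fun k _ => s ^ (k:ℕ))
  let C : ℝ := 2 * |H 0| + 2 / |H 0| + 1
  have hC2 : 0 < 2 / |H 0| := by positivity
  have hC : 0 < C := by positivity
  obtain ⟨τ, c, μ, b, hc, hlim, hb, hb0⟩ := dom β (by
      intro k
      cases k with
      | none => exact KK.const 1
      | some k =>
        have : IV (fun ε => B k (v ε) - B k 0) :=
          hv.comp (Ψ := fun x => B k x - B k 0) ((hB k).sub analyticAt_const) (by simp)
        exact (KK.cadd this (B k 0)).congr (Eventually.of_forall fun ε => by simp [β])) e (by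
      intro i j hij
      cases i with
      | none =>
        cases j with
        | none => rfl
        | some j =>
          have h2 : ((j:ℕ):ℝ) < m := by exact_mod_cast j.2
          simp only [e, Option.elim] at hij; linarith
      | some i =>
        cases j with
        | none =>
          have h2 : ((i:ℕ):ℝ) < m := by exact_mod_cast i.2
          simp only [e, Option.elim] at hij; linarith
        | some j =>
          simp only [e, Option.elim, Nat.cast_inj] at hij
          exact congrArg some (Fin.ext hij)) l hl (fun ε => |y ε|) (hy0.mono fun ε h => abs_pos.2 h) U C hC (by
      intro k
      cases k with
      | none =>
        have h1 := hHlim.eventually (eventually_ge_nhds (show |H 0| / 2 < |H 0| by linarith))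
        have h2 := hHlim.eventually (eventually_le_nhds (show |H 0| < 2 * |H 0| by linarith))
        filter_upwards [h1, h2] with ε h1 h2
        simp only [U, Option.elim, abs_mul, abs_pow, hs, one_pow, one_mul]
        constructor
        · rw [div_le_iff₀ hC]
          have : |H 0| / 2 * (2 / |H 0|) = 1 := by field_simp
          have : |H 0| / 2 * (2 / |H 0|) ≤ |H (v ε, y ε)| * C := by
            apply mul_le_mul h1 _ hC2.le (abs_nonneg _)
            simp only [C]; linarith
          linarith
        · simp only [C]; linarith
      | some k =>
        refine Eventually.of_forall fun ε => ?_
        simp only [U, Option.elim, abs_pow, hs, one_pow]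
        have : 1 ≤ C := by simp only [C]; linarith
        exact ⟨by rw [div_le_one hC]; exact this, this⟩) (by
      filter_upwards [hz, hys] with ε h1 h2
      rw [Fintype.sum_option]
      rw [← h1, Finset.sum_range, add_comm]
      congr 1
      · apply Finset.sum_congr rfl
        intro k _
        simp only [β, e, U, Option.elim, Real.rpow_natCast]
        conv_rhs => rw [h2]
        rw [mul_pow]; ring
      · simp only [β, e, U, Option.elim]
        rw [show (m:ℝ) + 1 = ((m+1:ℕ):ℝ) by push_cast; ring, Real.rpow_natCast]
        have : y ε ^ (m+1) = s ^ (m+1) * |y ε| ^ (m+1) := by rw [← mul_pow, ← h2]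
        rw [this]; ring) ⟨none, by
      intro h
      obtain ⟨ε, h⟩ := h.exists
      simp [β] at h⟩
  have hτ : 0 < τ := by
    by_contra hτ
    push Not at hτ
    have h1 : Tendsto (fun ε => |y ε|) l (𝓝 0) := by simpa using hy.abs
    have : c ≤ 0 := by
      refine le_of_tendsto_of_tendsto hlim h1 ?_
      filter_upwards [hl (ev_le one_pos)] with ε h2
      apply div_le_self (abs_nonneg _)
      exact Real.one_le_rpow_of_pos_of_le_one_of_nonpos h2.1 h2.2 hτ
    linarith
  have hs0 : s ≠ 0 := by rintro rfl; simp at hs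
  refine ⟨τ, s * c, b, fun k ε => ε ^ (e k * τ - μ) * β k ε - b k, hτ, mul_ne_zero hs0 hc.ne', hb0, hb, ?_, ?_⟩
  · have := (hlim.const_mul s).sub_const (s * c)
    rw [sub_self] at this
    refine this.congr' ?_
    filter_upwards [hys] with ε h1
    conv_rhs => rw [h1]
    ring
  · filter_upwards [hz, hpos] with ε h1 h2
    have a1 : ∀ k : ℕ, (y ε / ε ^ τ) ^ k = y ε ^ k / ε ^ (k * τ) := by
      intro k
      rw [div_pow, mul_comm, Real.rpow_mul_natCast h2.le]
    have a2 : ∀ r, ε ^ (r - μ) = ε ^ r * ε ^ (-μ) := fun r => by rw [sub_eq_add_neg, Real.rpow_add h2]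
    have a3 : ∀ r : ℝ, ε ^ r ≠ 0 := fun r => (Real.rpow_pos_of_pos h2 r).ne'
    have a4 : ε ^ τ * (y ε / ε ^ τ) = y ε := by field_simp [a3 τ]
    simp only [add_sub_cancel, a1, a4]
    have : ε ^ (-μ) * (∑ k ∈ Finset.range m, B k (v ε) * y ε ^ k + y ε ^ (m+1) * H (v ε, y ε)) = 0 := by
      rw [h1, mul_zero]
    rw [← this, mul_add, Finset.sum_range, Finset.mul_sum]
    congr 1
    · apply Finset.sum_congr rfl
      intro k _
      simp only [β, e, Option.elim, a2]
      have := a3 (((k:ℕ):ℝ) * τ)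
      field_simp
    · simp only [β, e, Option.elim, a2]
      push_cast
      have := a3 (((m:ℝ)+1) * τ)
      field_simp

theorem puiseux : ∀ (n : ℕ) (E : Type) [NormedAddCommGroup E] [NormedSpace ℝ E] [CompleteSpace E]
    (Φ : E × ℝ → ℝ) (_ : AnalyticAt ℝ Φ 0) (v : ℝ → E) (_ : IV v)
    (_ : ∃ k ≤ n, iteratedDeriv k (fun y => Φ (0, y)) 0 ≠ 0)
    (y : ℝ → ℝ) (l : Ultrafilter ℝ) (_ : (l : Filter ℝ) ≤ 𝓝[>] 0) (_ : Tendsto y l (𝓝 0))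
    (_ : ∀ᶠ ε in (l : Filter ℝ), Φ (v ε, y ε) = 0),
    ∃ z : ℝ → ℝ, IV z ∧ ∀ᶠ ε in (l : Filter ℝ), y ε = z ε := by
  classical
  intro n
  induction n using Nat.strong_induction_on with
  | _ n ih =>
  intro E _ _ _ Φ hΦ v hv hn y l hl hy hz
  have hex : ∃ k, iteratedDeriv k (fun y => Φ (0, y)) 0 ≠ 0 := ⟨_, hn.choose_spec.2⟩
  have hN := Nat.find_spec hex
  have hlt : ∀ k < Nat.find hex, iteratedDeriv k (fun y => Φ (0, y)) 0 = 0 := fun k hk => by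
    simpa using Nat.find_min hex hk
  have hle : Nat.find hex ≤ n := by
    obtain ⟨k, hk, h⟩ := hn
    exact (Nat.find_min' hex h).trans hk
  generalize Nat.find hex = N at hN hlt hle
  cases N with
  | zero =>
    exfalso
    rw [iteratedDeriv_zero] at hN
    have := hΦ.continuousAt.tendsto.comp ((hv.tendsto.mono_left hl).prodMk_nhds hy)
    have h2 : Tendsto (fun _ : ℝ => (0:ℝ)) l (𝓝 (Φ 0)) := this.congr' hz
    exact hN (tendsto_nhds_unique h2 tendsto_const_nhds)
  | succ m =>
    obtain ⟨ψ, B, H, hψ, hψ0, hB, hH, hH0, he⟩ := tay Φ hΦ m hlt hN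
    have hψv : IV (fun ε => ψ (v ε)) := hv.comp hψ hψ0
    have hvt := hv.tendsto.mono_left hl
    let y' : ℝ → ℝ := fun ε => y ε - ψ (v ε)
    have hy' : Tendsto y' l (𝓝 0) := by simpa using hy.sub (hψv.tendsto.mono_left hl)
    rcases Ultrafilter.em l (fun ε => y' ε = 0) with h0 | h0
    · exact ⟨_, hψv, h0.mono fun ε h => sub_eq_zero.1 h⟩
    · have hz' : ∀ᶠ ε in (l : Filter ℝ), ∑ k ∈ Finset.range m, B k (v ε) * y' ε ^ k + y' ε ^ (m+1) * H (v ε, y' ε) = 0 := by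
        have h1 := (hvt.prodMk_nhds hy').eventually he
        filter_upwards [h1, hz] with ε h1 h2
        rw [← h1]
        simpa [y'] using h2
      obtain ⟨τ, c, b, u, hτ, hc, hb, hu, hw, hz2⟩ := root_step m B H hB hH hH0 v hv y' l hl hy' h0 hz'
      obtain ⟨z, hz3, hz4⟩ := ih m (by omega) (E × (Option (Fin m) → ℝ) × ℝ) _ (tilde_analytic m b c H hH)
        (fun ε => (v ε, (fun k => u k ε), ε ^ τ)) (hv.prod ((IV.pi hu).prod (IV.rpow hτ))) (by
          obtain ⟨k, hk, h⟩ := slice_ne m b hb (H 0) hH0 c hc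
          refine ⟨k, hk, ?_⟩
          convert h using 2
          funext w
          simp [Prod.mk_zero_zero]) _ l hl hw hz2
      refine ⟨fun ε => ψ (v ε) + ε ^ τ * (c + z ε), ?_, ?_⟩
      · have := hψv.add (((IV.rpow hτ).cmul c).add ((IV.rpow hτ).mul hz3))
        refine this.congr (Eventually.of_forall fun ε => ?_)
        simp only []
        ring
      · filter_upwards [hz4, hl ev_pos] with ε h1 h2
        rw [← h1]
        have := (Real.rpow_pos_of_pos h2 τ).ne'
        simp only [y']
        field_simp
        ring

end modC3

section modC4

lemma descartes_seq {ι : Type} [DecidableEq ι] : ∀ (n : ℕ) (s : Finset ι) (_ : s.card = n) (a α : ι → ℝ) (_ : Set.InjOn α s) (t : ℕ → ℝ)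
    (_ : ∀ i < n, 0 < t i) (_ : ∀ i, i + 1 < n → t i < t (i+1))
    (_ : ∀ i < n, ∑ k ∈ s, a k * t i ^ α k = 0), ∀ k ∈ s, a k = 0 := by
  intro n
  induction n with
  | zero =>
    intro s hs a α _ t _ _ _ k hk
    rw [Finset.card_eq_zero] at hs
    simp [hs] at hk
  | succ n ih =>
    intro s hs a α hα t ht0 ht hz
    obtain ⟨k0, hk0⟩ : s.Nonempty := by rw [← Finset.card_pos]; omega
    let G : ℝ → ℝ := fun x => ∑ k ∈ s, a k * x ^ (α k - α k0)
    have hG : ∀ i < n+1, G (t i) = 0 := by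
      intro i hi
      have := hz i hi
      have h2 : ∑ k ∈ s, a k * t i ^ α k = t i ^ α k0 * G (t i) := by
        rw [Finset.mul_sum]
        apply Finset.sum_congr rfl
        intro k _
        rw [Real.rpow_sub (ht0 i hi)]
        have := (Real.rpow_pos_of_pos (ht0 i hi) (α k0)).ne'
        field_simp
      rw [h2] at this
      exact (mul_eq_zero.1 this).resolve_left (Real.rpow_pos_of_pos (ht0 i hi) _).ne'
    let G' : ℝ → ℝ := fun x => ∑ k ∈ s.erase k0, (a k * (α k - α k0)) * x ^ (α k - α k0 - 1)
    have hd : ∀ x, 0 < x → HasDerivAt G (G' x) x := by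
      intro x hx
      have : HasDerivAt G (∑ k ∈ s, a k * ((α k - α k0) * x ^ (α k - α k0 - 1))) x :=
        HasDerivAt.fun_sum (fun k _ => ((Real.hasDerivAt_rpow_const (Or.inl hx.ne')).const_mul _))
      convert this using 1
      rw [← Finset.add_sum_erase _ _ hk0, sub_self, zero_mul, mul_zero, zero_add]
      apply Finset.sum_congr rfl
      intro k _
      ring
    have hr : ∀ i, ∃ x, i < n → t i < x ∧ x < t (i+1) ∧ G' x = 0 := by
      intro i
      by_cases hi : i < n
      · have hti := ht i (by omega)
        have hp := ht0 i (by omega)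
        obtain ⟨x, hx, h⟩ := exists_hasDerivAt_eq_zero (f := G) (f' := G') hti
          (fun x hx => (hd x (hp.trans_le hx.1)).continuousAt.continuousWithinAt)
          (by rw [hG i (by omega), hG (i+1) (by omega)]) (fun x hx => hd x (hp.trans hx.1))
        exact ⟨x, fun _ => ⟨hx.1, hx.2, h⟩⟩
      · exact ⟨0, fun h => absurd h hi⟩
    choose t' ht' using hr
    have h1 := ih (s.erase k0) (by rw [Finset.card_erase_of_mem hk0, hs]; rfl) (fun k => a k * (α k - α k0))
      (fun k => α k - α k0 - 1) (by
        intro i hi j hj hij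
        simp only [] at hij
        exact hα (Finset.mem_of_mem_erase hi) (Finset.mem_of_mem_erase hj) (by linarith)) t'
      (fun i hi => (ht0 i (by omega)).trans (ht' i hi).1)
      (fun i hi => (ht' i (by omega)).2.1.trans (ht' (i+1) hi).1)
      (fun i hi => (ht' i hi).2.2)
    have h2 : ∀ k ∈ s.erase k0, a k = 0 := by
      intro k hk
      refine (mul_eq_zero.1 (h1 k hk)).resolve_right ?_
      rw [sub_eq_zero]
      intro h
      exact Finset.ne_of_mem_erase hk (hα (Finset.mem_of_mem_erase hk) hk0 h)
    intro k hk
    by_cases hkk : k = k0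
    · subst hkk
      have := hz 0 (by omega)
      rw [← Finset.add_sum_erase _ _ hk0, Finset.sum_eq_zero (fun i hi => by rw [h2 i hi, zero_mul]), add_zero] at this
      exact (mul_eq_zero.1 this).resolve_right (Real.rpow_pos_of_pos (ht0 0 (by omega)) _).ne'
    · exact h2 k (Finset.mem_erase.2 ⟨hkk, hk⟩)

lemma descartes {ι : Type} [Fintype ι] (a α : ι → ℝ) (hα : Function.Injective α) (T : Finset ℝ)
    (hT : Fintype.card ι ≤ T.card) (hp : ∀ x ∈ T, 0 < x) (hz : ∀ x ∈ T, ∑ k, a k * x ^ α k = 0) (k : ι) : a k = 0 := by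
  classical
  let t : ℕ → ℝ := fun i => if h : i < T.card then T.orderEmbOfFin rfl ⟨i, h⟩ else 0
  have ht : ∀ i < Fintype.card ι, t i ∈ T := by
    intro i hi
    simp only [t, dif_pos (hi.trans_le hT)]
    exact Finset.orderEmbOfFin_mem _ _ _
  refine descartes_seq (Fintype.card ι) Finset.univ rfl a α hα.injOn t (fun i hi => hp _ (ht i hi)) ?_
    (fun i hi => hz _ (ht i hi)) k (Finset.mem_univ _)
  intro i hi
  simp only [t]
  rw [dif_pos (by omega), dif_pos (by omega)]
  simp

lemma sig_slice {ι : Type} [Fintype ι] (b α : ι → ℝ) (hα : Function.Injective α) (hb : ∃ k, b k ≠ 0) (c : ℝ) (hc : 0 < c) :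
    ∃ k, iteratedDeriv k (fun y => ∑ i, b i * (c + y) ^ α i) 0 ≠ 0 := by
  by_contra hcon
  push Not at hcon
  have han : AnalyticAt ℝ (fun y => ∑ i, b i * (c + y) ^ α i) 0 := by
    refine Finset.analyticAt_fun_sum _ (fun i _ => analyticAt_const.mul ?_)
    apply AnalyticAt.fun_comp (g := fun x : ℝ => x ^ α i) (f := fun y => c + y) (x := 0)
    · simpa using rpow_analytic hc (α i)
    · exact analyticAt_const.add analyticAt_id
  have h1 := han.hasFPowerSeriesAt
  have h2 : (FormalMultilinearSeries.ofScalars ℝ (fun n => iteratedDeriv n (fun y => ∑ i, b i * (c + y) ^ α i) 0 / (n.factorial : ℝ))) = 0 := by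
    simp only [hcon, zero_div]
    ext n; simp
  rw [h2] at h1
  have h3 := h1.eventually_eq_zero
  have h4 : ∀ᶠ y in 𝓝[>] (0:ℝ), ∑ i, b i * (c + y) ^ α i = 0 := h3.filter_mono nhdsWithin_le_nhds
  obtain ⟨r, hr, h5⟩ := mem_nhdsGT_iff_exists_Ioo_subset.1 h4
  have hinf : (Set.Ioo (0:ℝ) r).Infinite := Set.Ioo_infinite hr
  obtain ⟨T, hT, hTc⟩ := hinf.exists_subset_card_eq (Fintype.card ι)
  obtain ⟨k, hk⟩ := hb
  refine hk (descartes b α hα (T.map (addLeftEmbedding c)) (by simp [hTc]) ?_ ?_ k)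
  · intro x hx
    obtain ⟨y, hy, rfl⟩ := Finset.mem_map.1 hx
    have := (hT hy).1
    simp; linarith
  · intro x hx
    obtain ⟨y, hy, rfl⟩ := Finset.mem_map.1 hx
    exact h5 (hT hy)

theorem sig_root {ι : Type} [Fintype ι] (a : ι → ℝ → ℝ) (ha : ∀ k, KK (a k)) (α : ι → ℝ) (hα : Function.Injective α)
    (hne : ∃ k, ¬ ∀ᶠ ε in 𝓝[>] 0, a k ε = 0) (l : Ultrafilter ℝ) (hl : (l : Filter ℝ) ≤ 𝓝[>] 0) (x : ℝ → ℝ)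
    (hx : ∀ᶠ ε in (l : Filter ℝ), 0 < x ε) (hz : ∀ᶠ ε in (l : Filter ℝ), ∑ k, a k ε * x ε ^ α k = 0) :
    ∃ z, KK z ∧ (∀ᶠ ε in 𝓝[>] 0, 0 < z ε) ∧ ∀ᶠ ε in (l : Filter ℝ), x ε = z ε := by
  obtain ⟨τ, c, μ, b, hc, hlim, hb, hb0⟩ := dom a ha α hα l hl x hx (fun _ _ => 1) 1 one_pos
    (by simp) (by simpa using hz) hne
  obtain ⟨n, hn⟩ := sig_slice b α hα hb0 c hc
  obtain ⟨z, hz1, hz2⟩ := puiseux n (ι → ℝ) (fun p => ∑ i, (b i + p.1 i) * (c + p.2) ^ α i) (by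
      refine Finset.analyticAt_fun_sum _ (fun i _ => AnalyticAt.mul (analyticAt_const.add
        (((ContinuousLinearMap.proj i).comp (ContinuousLinearMap.fst ℝ (ι → ℝ) ℝ)).analyticAt 0)) ?_)
      apply AnalyticAt.fun_comp (g := fun x : ℝ => x ^ α i) (f := fun p : (ι → ℝ) × ℝ => c + p.2) (x := 0)
      · simpa using rpow_analytic hc (α i)
      · exact analyticAt_const.add analyticAt_snd)
    (fun ε i => ε ^ (α i * τ - μ) * a i ε - b i) (IV.pi hb) ⟨n, le_rfl, by simpa using hn⟩
    (fun ε => x ε / ε ^ τ - c) l hl (by simpa using hlim.sub_const c) (by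
      filter_upwards [hz, hl ev_pos, hx] with ε h1 h2 h3
      simp only [add_sub_cancel]
      rw [← mul_zero (ε ^ (-μ)), ← h1, Finset.mul_sum]
      apply Finset.sum_congr rfl
      intro i _
      rw [Real.div_rpow h3.le (Real.rpow_nonneg h2.le _), ← Real.rpow_mul h2.le, sub_eq_add_neg, Real.rpow_add h2, mul_comm τ]
      have := (Real.rpow_pos_of_pos h2 (α i * τ)).ne'
      field_simp)
  refine ⟨fun ε => ε ^ τ * (c + z ε), (KK.cadd hz1 c).rpow_mul τ, ?_, ?_⟩
  · have h1 : Tendsto (fun ε => c + z ε) (𝓝[>] 0) (𝓝 c) := by simpa using hz1.tendsto.const_add c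
    filter_upwards [h1.eventually (lt_mem_nhds hc), ev_pos] with ε h2 h3
    exact mul_pos (Real.rpow_pos_of_pos h3 _) h2
  · filter_upwards [hz2, hl ev_pos] with ε h1 h2
    rw [← h1]
    have := (Real.rpow_pos_of_pos h2 τ).ne'
    field_simp
    ring

end modC4

section modC5

lemma sig_KK {ι : Type} [Fintype ι] {a : ι → ℝ → ℝ} (ha : ∀ k, KK (a k)) (α : ι → ℝ) {z : ℝ → ℝ} (hz : KK z)
    (hp : ∀ᶠ ε in 𝓝[>] 0, 0 < z ε) : KK (fun ε => ∑ k, a k ε * z ε ^ α k) :=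
  KK.sum _ (fun k _ => (ha k).mul (hz.rpow hp (α k)))

lemma KK.ne_of {u w : ℝ → ℝ} (hu : KK u) (hw : KK w) (h : ∃ᶠ ε in 𝓝[>] 0, u ε ≠ w ε) : ∀ᶠ ε in 𝓝[>] 0, u ε ≠ w ε := by
  rcases (hu.sub hw).sign with h1 | h1 | h1
  · exact absurd (h1.mono fun ε h => not_not.2 (sub_eq_zero.1 h)) h
  · exact h1.mono fun ε h => (sub_pos.1 h).ne'
  · exact h1.mono fun ε h => (sub_neg.1 h).ne

theorem sig_roots {ι : Type} [Fintype ι] (a : ι → ℝ → ℝ) (ha : ∀ k, KK (a k)) (α : ι → ℝ) (hα : Function.Injective α)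
    (hne : ∃ k, ¬ ∀ᶠ ε in 𝓝[>] 0, a k ε = 0) :
    ∃ R : Finset (ℝ → ℝ), (∀ r ∈ R, KK r ∧ (∀ᶠ ε in 𝓝[>] 0, 0 < r ε) ∧ ∀ᶠ ε in 𝓝[>] 0, ∑ k, a k ε * r ε ^ α k = 0) ∧
      ∀ᶠ ε in 𝓝[>] 0, ∀ x, 0 < x → ∑ k, a k ε * x ^ α k = 0 → ∃ r ∈ R, x = r ε := by
  classical
  let P : ℕ → Prop := fun n => ∃ R : Finset (ℝ → ℝ), R.card = n ∧
    (∀ r ∈ R, KK r ∧ (∀ᶠ ε in 𝓝[>] 0, 0 < r ε) ∧ ∀ᶠ ε in 𝓝[>] 0, ∑ k, a k ε * r ε ^ α k = 0) ∧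
    ∀ r ∈ R, ∀ s ∈ R, r ≠ s → ∀ᶠ ε in 𝓝[>] 0, r ε ≠ s ε
  have hP0 : P 0 := ⟨∅, by simp⟩
  have hPb : ∀ n, P n → n < Fintype.card ι := by
    rintro n ⟨R, rfl, h1, h2⟩
    by_contra hcon
    push Not at hcon
    obtain ⟨k, hk⟩ := hne
    have hk' := (ha k).ne_of (KK.const 0) (Filter.not_eventually.1 hk)
    have e1 : ∀ᶠ ε in 𝓝[>] 0, ∀ r ∈ R, 0 < r ε := (Filter.eventually_all_finset R).2 fun r hr => (h1 r hr).2.1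
    have e2 : ∀ᶠ ε in 𝓝[>] 0, ∀ r ∈ R, ∑ k, a k ε * r ε ^ α k = 0 := (Filter.eventually_all_finset R).2 fun r hr => (h1 r hr).2.2
    have e3 : ∀ᶠ ε in 𝓝[>] 0, ∀ r ∈ R, ∀ s ∈ R, r ≠ s → r ε ≠ s ε :=
      (Filter.eventually_all_finset R).2 fun r hr => (Filter.eventually_all_finset R).2 fun s hs => by
        by_cases h : r = s
        · exact Eventually.of_forall fun ε h' => absurd h h'
        · exact (h2 r hr s hs h).mono fun ε h _ => h
    obtain ⟨ε, e1, e2, e3, hk⟩ := (e1.and (e2.and (e3.and hk'))).exists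
    refine hk (descartes (fun k => a k ε) α hα (R.image (fun r => r ε)) ?_ ?_ ?_ k)
    · rw [Finset.card_image_of_injOn]
      · exact hcon
      · intro r hr s hs h
        by_contra h'
        exact e3 r hr s hs h' h
    · simpa using e1
    · simpa using e2
  have hmax : ∃ n, P n ∧ ¬ P (n+1) := by
    by_contra hcon
    push Not at hcon
    have : ∀ n, P n := fun n => Nat.rec hP0 (fun n => hcon n) n
    exact absurd (hPb _ (this (Fintype.card ι))) (lt_irrefl _)
  obtain ⟨n, ⟨R, hR, h1, h2⟩, hn⟩ := hmax
  refine ⟨R, h1, ?_⟩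
  by_contra hcon
  have hf : ∃ᶠ ε in 𝓝[>] (0:ℝ), ∃ x, 0 < x ∧ ∑ k, a k ε * x ^ α k = 0 ∧ ∀ r ∈ R, x ≠ r ε := by
    rw [Filter.not_eventually] at hcon
    refine hcon.mono fun ε h => ?_
    push Not at h
    exact h
  have hx : ∃ x : ℝ → ℝ, ∃ᶠ ε in 𝓝[>] (0:ℝ), 0 < x ε ∧ ∑ k, a k ε * x ε ^ α k = 0 ∧ ∀ r ∈ R, x ε ≠ r ε := by
    have : ∀ ε, ∃ x, (∃ x, 0 < x ∧ ∑ k, a k ε * x ^ α k = 0 ∧ ∀ r ∈ R, x ≠ r ε) → 0 < x ∧ ∑ k, a k ε * x ^ α k = 0 ∧ ∀ r ∈ R, x ≠ r ε := by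
      intro ε
      by_cases h : ∃ x, 0 < x ∧ ∑ k, a k ε * x ^ α k = 0 ∧ ∀ r ∈ R, x ≠ r ε
      · obtain ⟨x, hx⟩ := h; exact ⟨x, fun _ => hx⟩
      · exact ⟨0, fun h' => absurd h' h⟩
    choose x hx using this
    exact ⟨x, hf.mono fun ε h => hx ε h⟩
  obtain ⟨x, hx⟩ := hx
  have hnb : (𝓝[>] (0:ℝ) ⊓ 𝓟 {ε | 0 < x ε ∧ ∑ k, a k ε * x ε ^ α k = 0 ∧ ∀ r ∈ R, x ε ≠ r ε}).NeBot :=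
    Filter.frequently_mem_iff_neBot.1 hx
  obtain ⟨l, hl, hlx⟩ : ∃ l : Ultrafilter ℝ, (l : Filter ℝ) ≤ 𝓝[>] (0:ℝ) ∧
      ∀ᶠ ε in (l : Filter ℝ), 0 < x ε ∧ ∑ k, a k ε * x ε ^ α k = 0 ∧ ∀ r ∈ R, x ε ≠ r ε :=
    ⟨Ultrafilter.of _, (Ultrafilter.of_le _).trans inf_le_left,
      Filter.le_principal_iff.1 ((Ultrafilter.of_le _).trans inf_le_right)⟩
  obtain ⟨z, hz1, hz2, hz3⟩ := sig_root a ha α hα hne l hl x (hlx.mono fun ε h => h.1) (hlx.mono fun ε h => h.2.1)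
  have hz4 : ∀ᶠ ε in 𝓝[>] 0, ∑ k, a k ε * z ε ^ α k = 0 := (sig_KK ha α hz1 hz2).zero_of hl (by
    filter_upwards [hlx, hz3] with ε h1 h2
    rw [← h2]; exact h1.2.1)
  have hz5 : ∀ r ∈ R, ∀ᶠ ε in 𝓝[>] 0, z ε ≠ r ε := by
    intro r hr
    refine hz1.ne_of (h1 r hr).1 ?_
    refine Filter.Frequently.filter_mono (Eventually.frequently ?_) hl
    filter_upwards [hlx, hz3] with ε h1 h2
    rw [← h2]; exact h1.2.2 r hr
  have hzR : z ∉ R := by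
    intro h
    obtain ⟨ε, h⟩ := (hz5 z h).exists
    exact h rfl
  refine hn ⟨insert z R, by rw [Finset.card_insert_of_notMem hzR, hR], ?_, ?_⟩
  · intro r hr
    rcases Finset.mem_insert.1 hr with rfl | hr
    · exact ⟨hz1, hz2, hz4⟩
    · exact h1 r hr
  · intro r hr s hs hrs
    rcases Finset.mem_insert.1 hr with hr' | hr' <;> rcases Finset.mem_insert.1 hs with hs' | hs'
    · exact absurd (hr'.trans hs'.symm) hrs
    · rw [hr']; exact hz5 s hs'
    · rw [hs']; exact (hz5 r hr').mono fun ε h => h.symm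
    · exact h2 r hr' s hs' hrs

/-- decide the order of finitely many germs at one point -/
lemma KK_decide (R : Finset (ℝ → ℝ)) (hR : ∀ r ∈ R, KK r) : ∃ ε0 : ℝ, 0 < ε0 ∧ ∀ r ∈ R, ∀ s ∈ R,
    (r ε0 < s ε0 → ∀ᶠ ε in 𝓝[>] 0, r ε < s ε) ∧ (r ε0 = s ε0 → ∀ᶠ ε in 𝓝[>] 0, r ε = s ε) := by
  have h : ∀ᶠ ε0 in 𝓝[>] (0:ℝ), ∀ r ∈ R, ∀ s ∈ R,
    (r ε0 < s ε0 → ∀ᶠ ε in 𝓝[>] 0, r ε < s ε) ∧ (r ε0 = s ε0 → ∀ᶠ ε in 𝓝[>] 0, r ε = s ε) := by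
    refine (Filter.eventually_all_finset R).2 fun r hr => (Filter.eventually_all_finset R).2 fun s hs => ?_
    rcases ((hR r hr).sub (hR s hs)).sign with h1 | h1 | h1
    · have h2 := h1.mono fun ε h => sub_eq_zero.1 h
      filter_upwards [h2] with ε h
      exact ⟨fun h' => absurd h h'.ne, fun _ => h2⟩
    · filter_upwards [h1] with ε h
      exact ⟨fun h' => by linarith, fun h' => by linarith⟩
    · filter_upwards [h1] with ε h
      exact ⟨fun _ => h1.mono fun ε h => sub_neg.1 h, fun h' => by linarith⟩
  obtain ⟨ε, h1, h2⟩ := (ev_pos.and h).exists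
  exact ⟨ε, h1, h2⟩

end modC5

section modD1

/-- two variable signomials, as functions on the plane -/
def GP (f : ℝ → ℝ → ℝ) : Prop := ∃ (n : ℕ) (c a b : Fin n → ℝ), ∀ x y, 0 < x → 0 < y →
  f x y = ∑ i, c i * x ^ a i * y ^ b i

lemma GP.mk {ι : Type} [Fintype ι] {f : ℝ → ℝ → ℝ} (c a b : ι → ℝ) (h : ∀ x y, 0 < x → 0 < y →
    f x y = ∑ i, c i * x ^ a i * y ^ b i) : GP f := by
  refine ⟨Fintype.card ι, c ∘ (Fintype.equivFin ι).symm, a ∘ (Fintype.equivFin ι).symm, b ∘ (Fintype.equivFin ι).symm, ?_⟩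
  intro x y hx hy
  rw [h x y hx hy]
  exact (Equiv.sum_comp (Fintype.equivFin ι).symm (fun i => c i * x ^ a i * y ^ b i)).symm

lemma GP.add {f g : ℝ → ℝ → ℝ} (hf : GP f) (hg : GP g) : GP (fun x y => f x y + g x y) := by
  obtain ⟨n, c, a, b, h⟩ := hf
  obtain ⟨n', c', a', b', h'⟩ := hg
  refine GP.mk (ι := Fin n ⊕ Fin n') (Sum.elim c c') (Sum.elim a a') (Sum.elim b b') ?_
  intro x y hx hy
  simp [h x y hx hy, h' x y hx hy]

lemma GP.mon {f : ℝ → ℝ → ℝ} (hf : GP f) (k p q : ℝ) : GP (fun x y => k * x ^ p * y ^ q * f x y) := by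
  obtain ⟨n, c, a, b, h⟩ := hf
  refine ⟨n, fun i => k * c i, fun i => p + a i, fun i => q + b i, ?_⟩
  intro x y hx hy
  simp only [h x y hx hy, Finset.mul_sum, Real.rpow_add hx, Real.rpow_add hy]
  apply Finset.sum_congr rfl
  intro i _
  ring

lemma GP.congr {f g : ℝ → ℝ → ℝ} (hf : GP f) (h : ∀ x y, 0 < x → 0 < y → g x y = f x y) : GP g := by
  obtain ⟨n, c, a, b, h'⟩ := hf
  exact ⟨n, c, a, b, fun x y hx hy => by rw [h x y hx hy, h' x y hx hy]⟩

lemma GP.zero : GP (fun _ _ => 0) := ⟨0, Fin.elim0, Fin.elim0, Fin.elim0, by simp⟩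

lemma GP.neg {f : ℝ → ℝ → ℝ} (hf : GP f) : GP (fun x y => - f x y) :=
  (hf.mon (-1) 0 0).congr (by intros; simp)

lemma GP.sum {ι : Type*} (s : Finset ι) {f : ι → ℝ → ℝ → ℝ} (hf : ∀ i ∈ s, GP (f i)) : GP (fun x y => ∑ i ∈ s, f i x y) := by
  classical
  induction s using Finset.induction_on with
  | empty => simpa using GP.zero
  | insert i s hi ih =>
    simp only [Finset.sum_insert hi]
    exact (hf i (Finset.mem_insert_self _ _)).add (ih fun j hj => hf j (Finset.mem_insert_of_mem hj))

lemma GP.of_gen {g : PQ → ℝ} (hg : IsGenPoly g) : ∃ f, GP f ∧ ∀ p : PQ, g p = f p.1.1 p.1.2 := by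
  obtain ⟨m, c, α, _, _, h⟩ := hg
  exact ⟨fun x y => ∑ i, c i * x ^ (α i).1 * y ^ (α i).2, ⟨m, c, fun i => (α i).1, fun i => (α i).2, fun _ _ _ _ => rfl⟩, h⟩

lemma GP.gen {f : ℝ → ℝ → ℝ} (hf : GP f) : IsGenPoly (fun p => f p.1.1 p.1.2) := by
  classical
  obtain ⟨n, c, a, b, h⟩ := hf
  let F : (ℝ × ℝ) →₀ ℝ := ∑ i, Finsupp.single (a i, b i) (c i)
  have hF : ∀ p : PQ, f p.1.1 p.1.2 = F.sum (fun α k => k * p.1.1 ^ α.1 * p.1.2 ^ α.2) := by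
    intro p
    rw [h _ _ p.2.1 p.2.2]
    simp only [F]
    rw [← Finsupp.sum_finsetSum_index (by simp) (by intros; ring)]
    apply Finset.sum_congr rfl
    intro i _
    rw [Finsupp.sum_single_index (by simp)]
  refine ⟨Fintype.card F.support, fun i => F ((Fintype.equivFin F.support).symm i),
    fun i => ((Fintype.equivFin F.support).symm i), ?_, ?_, ?_⟩
  · intro i
    exact Finsupp.mem_support_iff.1 ((Fintype.equivFin F.support).symm i).2
  · exact Subtype.val_injective.comp (Equiv.injective _)
  · intro p
    beta_reduce
    rw [hF, Finsupp.sum, ← Finset.sum_coe_sort]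
    exact (Equiv.sum_comp (Fintype.equivFin F.support).symm (fun i : F.support => F i * p.1.1 ^ (i:ℝ×ℝ).1 * p.1.2 ^ (i:ℝ×ℝ).2)).symm

/-- sup of infs, in terms of lower bounds -/
def SI (h : ℝ → ℝ → ℝ) : Prop := ∃ (ι κ : Type) (_ : Fintype ι) (_ : Fintype κ) (_ : Nonempty ι) (_ : Nonempty κ)
  (f : ι → κ → ℝ → ℝ → ℝ), (∀ i k, GP (f i k)) ∧
    ∀ x y, 0 < x → 0 < y → ∀ t, t ≤ h x y ↔ ∃ i, ∀ k, t ≤ f i k x y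

lemma GP.SI {f : ℝ → ℝ → ℝ} (hf : GP f) : SI f :=
  ⟨Unit, Unit, inferInstance, inferInstance, inferInstance, inferInstance, fun _ _ => f, fun _ _ => hf, by simp⟩

lemma SI.congr {f g : ℝ → ℝ → ℝ} (hf : SI f) (h : ∀ x y, 0 < x → 0 < y → g x y = f x y) : SI g := by
  obtain ⟨ι, κ, _, _, _, _, F, hF, h'⟩ := hf
  exact ⟨ι, κ, inferInstance, inferInstance, inferInstance, inferInstance, F, hF, fun x y hx hy => by rw [h x y hx hy]; exact h' x y hx hy⟩

lemma SI.max {f g : ℝ → ℝ → ℝ} (hf : SI f) (hg : SI g) : SI (fun x y => max (f x y) (g x y)) := by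
  obtain ⟨ι, κ, _, _, _, _, F, hF, h⟩ := hf
  obtain ⟨ι', κ', _, _, _, _, F', hF', h'⟩ := hg
  refine ⟨ι ⊕ ι', κ × κ', inferInstance, inferInstance, inferInstance, inferInstance,
    fun i k => Sum.elim (fun i => F i k.1) (fun i => F' i k.2) i, ?_, ?_⟩
  · rintro (i | i) k
    · exact hF _ _
    · exact hF' _ _
  · intro x y hx hy t
    simp [le_max_iff, h x y hx hy, h' x y hx hy]

lemma SI.min {f g : ℝ → ℝ → ℝ} (hf : SI f) (hg : SI g) : SI (fun x y => min (f x y) (g x y)) := by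
  obtain ⟨ι, κ, _, _, _, _, F, hF, h⟩ := hf
  obtain ⟨ι', κ', _, _, _, _, F', hF', h'⟩ := hg
  refine ⟨ι × ι', κ ⊕ κ', inferInstance, inferInstance, inferInstance, inferInstance,
    fun i k => Sum.elim (fun k => F i.1 k) (fun k => F' i.2 k) k, ?_, ?_⟩
  · rintro i (k | k)
    · exact hF _ _
    · exact hF' _ _
  · intro x y hx hy t
    simp [le_min_iff, h x y hx hy, h' x y hx hy]

lemma SI_le {ι κ : Type} [Fintype ι] [Fintype κ] [Nonempty κ] {F : ι → κ → ℝ} {h : ℝ}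
    (hh : ∀ t, t ≤ h ↔ ∃ i, ∀ k, t ≤ F i k) (t : ℝ) : h ≤ t ↔ ∀ i, ∃ k, F i k ≤ t := by
  constructor
  · intro h1 i
    obtain ⟨k, hk⟩ := Finite.exists_min (F i)
    exact ⟨k, ((hh _).2 ⟨i, hk⟩).trans h1⟩
  · intro h1
    obtain ⟨i, hi⟩ := (hh h).1 le_rfl
    obtain ⟨k, hk⟩ := h1 i
    exact (hi k).trans hk

lemma SI.neg {f : ℝ → ℝ → ℝ} (hf : SI f) : SI (fun x y => - f x y) := by
  classical
  obtain ⟨ι, κ, _, _, _, _, F, hF, h⟩ := hf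
  refine ⟨ι → κ, ι, inferInstance, inferInstance, inferInstance, inferInstance,
    fun φ i x y => - F i (φ i) x y, fun φ i => (hF _ _).neg, ?_⟩
  intro x y hx hy t
  rw [le_neg, SI_le (h x y hx hy)]
  simp only [le_neg]
  exact Classical.skolem

lemma SI.add {f g : ℝ → ℝ → ℝ} (hf : SI f) (hg : SI g) : SI (fun x y => f x y + g x y) := by
  obtain ⟨ι, κ, _, _, _, _, F, hF, h⟩ := hf
  obtain ⟨ι', κ', _, _, _, _, F', hF', h'⟩ := hg
  refine ⟨ι × ι', κ × κ', inferInstance, inferInstance, inferInstance, inferInstance,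
    fun i k x y => F i.1 k.1 x y + F' i.2 k.2 x y, fun i k => (hF _ _).add (hF' _ _), ?_⟩
  intro x y hx hy t
  constructor
  · intro ht
    obtain ⟨i, hi⟩ := (h x y hx hy _).1 le_rfl
    obtain ⟨i', hi'⟩ := (h' x y hx hy _).1 le_rfl
    exact ⟨(i, i'), fun k => ht.trans (add_le_add (hi _) (hi' _))⟩
  · rintro ⟨i, hi⟩
    obtain ⟨k, hk⟩ := Finite.exists_min (fun k => F i.1 k x y)
    obtain ⟨k', hk'⟩ := Finite.exists_min (fun k => F' i.2 k x y)
    exact (hi (k, k')).trans (add_le_add ((h x y hx hy _).2 ⟨_, hk⟩) ((h' x y hx hy _).2 ⟨_, hk'⟩))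

lemma SI.xmul {f : ℝ → ℝ → ℝ} (hf : SI f) (a : ℝ) : SI (fun x y => x ^ a * f x y) := by
  obtain ⟨ι, κ, _, _, _, _, F, hF, h⟩ := hf
  refine ⟨ι, κ, inferInstance, inferInstance, inferInstance, inferInstance,
    fun i k x y => x ^ a * F i k x y, fun i k => ((hF i k).mon 1 a 0).congr (by intros; simp), ?_⟩
  intro x y hx hy t
  have := Real.rpow_pos_of_pos hx a
  simp only [← div_le_iff₀' this, h x y hx hy]

lemma SI.supInf {h : ℝ → ℝ → ℝ} (hh : SI h) : IsSupInf (fun p => h p.1.1 p.1.2) := by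
  obtain ⟨ι, κ, _, _, _, _, F, hF, h⟩ := hh
  have e1 : Fintype.card ι = (Fintype.card ι - 1) + 1 := (Nat.sub_add_cancel Fintype.card_pos).symm
  have e2 : Fintype.card κ = (Fintype.card κ - 1) + 1 := (Nat.sub_add_cancel Fintype.card_pos).symm
  let u : Fin (Fintype.card ι - 1 + 1) ≃ ι := (Fintype.equivFinOfCardEq e1).symm
  let w : Fin (Fintype.card κ - 1 + 1) ≃ κ := (Fintype.equivFinOfCardEq e2).symm
  refine ⟨Fintype.card ι - 1, fun _ => Fintype.card κ - 1, fun i k p => F (u i) (w k) p.1.1 p.1.2, fun i k => (hF _ _).gen, ?_⟩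
  intro p
  have hp := h p.1.1 p.1.2 p.2.1 p.2.2
  apply le_antisymm
  · obtain ⟨i, hi⟩ := (hp _).1 le_rfl
    refine le_trans ?_ (le_ciSup (Set.finite_range _).bddAbove (u.symm i))
    apply le_ciInf
    intro k
    simpa using hi (w k)
  · apply ciSup_le
    intro i
    rw [hp]
    refine ⟨u i, fun k => ?_⟩
    refine le_trans (ciInf_le (Set.finite_range _).bddBelow (w.symm k)) ?_
    simp

end modD1

section modD2

def YP (A : ℝ → ℝ) : Prop := ∃ (n : ℕ) (c b : Fin n → ℝ), ∀ y, 0 < y → A y = ∑ i, c i * y ^ b i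

lemma YP.cmul {A : ℝ → ℝ} (h : YP A) (k : ℝ) : YP (fun y => k * A y) := by
  obtain ⟨n, c, b, h⟩ := h
  exact ⟨n, fun i => k * c i, b, fun y hy => by simp only [h y hy, Finset.mul_sum, mul_assoc]⟩

lemma YP.GP {A : ℝ → ℝ} (h : YP A) (e : ℝ) : GP (fun x y => A y * x ^ e) := by
  obtain ⟨n, c, b, h⟩ := h
  refine ⟨n, c, fun _ => e, b, fun x y hx hy => ?_⟩
  simp only [h y hy, Finset.sum_mul]
  apply Finset.sum_congr rfl; intro i _; ring

def xp (s : Finset ℝ) (A : ℝ → ℝ → ℝ) (x y : ℝ) : ℝ := ∑ e ∈ s, A e y * x ^ e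

lemma xp_GP (s : Finset ℝ) {A : ℝ → ℝ → ℝ} (hA : ∀ e, YP (A e)) : GP (xp s A) :=
  GP.sum s (fun e _ => (hA e).GP e)

def Gm (Y : ℝ → ℝ) : Prop := (∀ᶠ ε in 𝓝[>] 0, 0 < Y ε) ∧ KK Y

lemma YP.KK {A Y : ℝ → ℝ} (h : YP A) (hY : Gm Y) : KK (fun ε => A (Y ε)) := by
  obtain ⟨n, c, b, h⟩ := h
  refine (KK.sum Finset.univ (u := fun i ε => c i * Y ε ^ b i) (fun i _ => (hY.2.rpow hY.1 _).cmul _)).congr ?_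
  filter_upwards [hY.1] with ε h1
  rw [h _ h1]

lemma xp_KK (s : Finset ℝ) {A : ℝ → ℝ → ℝ} (hA : ∀ e, YP (A e)) {Y : ℝ → ℝ} (hY : Gm Y) {r : ℝ → ℝ} (hr : KK r)
    (hp : ∀ᶠ ε in 𝓝[>] 0, 0 < r ε) : KK (fun ε => xp s A (r ε) (Y ε)) :=
  KK.sum _ (fun e _ => ((hA e).KK hY).mul (hr.rpow hp e))

lemma xp_cont (s : Finset ℝ) (A : ℝ → ℝ → ℝ) (y : ℝ) : ContinuousOn (fun x => xp s A x y) (Ioi 0) := by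
  refine continuousOn_finsetSum _ (fun e _ => continuousOn_const.mul ?_)
  intro x hx
  exact (Real.continuousAt_rpow_const x e (Or.inl (ne_of_gt hx))).continuousWithinAt

lemma xp_roots (s : Finset ℝ) {A : ℝ → ℝ → ℝ} (hA : ∀ e, YP (A e)) {Y : ℝ → ℝ} (hY : Gm Y)
    (hne : ¬ ∀ᶠ ε in 𝓝[>] 0, ∀ x, xp s A x (Y ε) = 0) :
    ∃ R : Finset (ℝ → ℝ), (∀ r ∈ R, KK r ∧ (∀ᶠ ε in 𝓝[>] 0, 0 < r ε) ∧ ∀ᶠ ε in 𝓝[>] 0, xp s A (r ε) (Y ε) = 0) ∧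
      ∀ᶠ ε in 𝓝[>] 0, ∀ x, 0 < x → xp s A x (Y ε) = 0 → ∃ r ∈ R, x = r ε := by
  obtain ⟨R, h1, h2⟩ := sig_roots (ι := s) (fun e ε => A e (Y ε)) (fun e => (hA e).KK hY) (fun e => (e:ℝ)) Subtype.val_injective (by
    by_contra hcon
    push Not at hcon
    apply hne
    filter_upwards [eventually_all.2 hcon] with ε h x
    refine Finset.sum_eq_zero fun e he => ?_
    rw [h ⟨e, he⟩, zero_mul])
  refine ⟨R, ?_, ?_⟩
  · intro r hr
    refine ⟨(h1 r hr).1, (h1 r hr).2.1, (h1 r hr).2.2.mono fun ε h => ?_⟩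
    rw [← h]; exact (Finset.sum_coe_sort s (fun e => A e (Y ε) * r ε ^ e)).symm
  · refine h2.mono fun ε h x hx hz => h x hx ?_
    rw [← hz]; exact Finset.sum_coe_sort s (fun e => A e (Y ε) * x ^ e)

/-- Cauchy mean value property -/
def CP (κ : ℝ) (G D : ℝ → ℝ) : Prop := ∀ a b, 0 < a → a < b → ∃ ξ, a < ξ ∧ ξ < b ∧ G b - G a = (b ^ κ - a ^ κ) * D ξ

lemma CP.of_deriv {κ : ℝ} (hκ : 0 < κ) {G D : ℝ → ℝ} (h : ∀ x, 0 < x → HasDerivAt G (κ * x ^ (κ - 1) * D x) x) : CP κ G D := by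
  intro a b ha hab
  have hd : ∀ x, 0 < x → HasDerivAt (fun x : ℝ => x ^ κ) (κ * x ^ (κ - 1)) x := fun x hx =>
    Real.hasDerivAt_rpow_const (Or.inl hx.ne')
  obtain ⟨ξ, hξ, he⟩ := exists_ratio_hasDerivAt_eq_ratio_slope G (fun x => κ * x ^ (κ - 1) * D x) hab
    (fun x hx => (h x (ha.trans_le hx.1)).continuousAt.continuousWithinAt) (fun x hx => h x (ha.trans hx.1))
    (fun x : ℝ => x ^ κ) (fun x => κ * x ^ (κ - 1)) (fun x hx => (hd x (ha.trans_le hx.1)).continuousAt.continuousWithinAt)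
    (fun x hx => hd x (ha.trans hx.1))
  refine ⟨ξ, hξ.1, hξ.2, ?_⟩
  have hp : κ * ξ ^ (κ - 1) ≠ 0 := (mul_pos hκ (Real.rpow_pos_of_pos (ha.trans hξ.1) _)).ne'
  apply mul_right_cancel₀ hp
  rw [← he]; ring

lemma CP.mono {κ : ℝ} (hκ : 0 < κ) {G D : ℝ → ℝ} (h : CP κ G D) {a b : ℝ} (ha : 0 < a) (hab : a ≤ b)
    (hD : ∀ x, a < x → x < b → 0 < D x) : G a ≤ G b := by
  rcases hab.eq_or_lt with rfl | hab
  · exact le_rfl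
  · obtain ⟨ξ, h1, h2, h3⟩ := h a b ha hab
    have := Real.rpow_lt_rpow ha.le hab hκ
    have := mul_pos (sub_pos.2 this) (hD ξ h1 h2)
    linarith

lemma CP.bnd {κ : ℝ} (hκ : 0 < κ) {G D : ℝ → ℝ} (h : CP κ G D) {a b M : ℝ} (ha : 0 < a) (hab : a ≤ b)
    (hD : ∀ x, a ≤ x → x ≤ b → |D x| ≤ M) : |G b - G a| ≤ b ^ κ * M := by
  have hM : 0 ≤ M := (abs_nonneg _).trans (hD a le_rfl hab)
  have hb : 0 ≤ b ^ κ := Real.rpow_nonneg (ha.le.trans hab) _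
  rcases hab.eq_or_lt with rfl | hab
  · simp; positivity
  · obtain ⟨ξ, h1, h2, h3⟩ := h a b ha hab
    have h4 := Real.rpow_lt_rpow ha.le hab hκ
    have h5 : 0 ≤ a ^ κ := Real.rpow_nonneg ha.le _
    rw [h3, abs_mul, abs_of_pos (sub_pos.2 h4)]
    exact mul_le_mul (by linarith) (hD ξ h1.le h2.le) (abs_nonneg _) hb

/-- integrated bound -/
lemma CP.bnd2 {κ : ℝ} (hκ : 0 < κ) {G D v : ℝ → ℝ} (h : CP κ G D) {a : ℝ} (ha : 0 < a)
    (hv : ∀ x x', a ≤ x' → x' ≤ x → |D x'| ≤ v x) {x x' : ℝ} (h1 : a ≤ x') (h2 : x' ≤ x) :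
    |G x' - G a| ≤ x ^ κ * v x := by
  have h3 := h.bnd hκ (M := v x) ha h1 (fun u hu hu' => hv x u hu (hu'.trans h2))
  refine h3.trans (mul_le_mul_of_nonneg_right ?_ ((abs_nonneg _).trans (hv x x' h1 h2)))
  exact Real.rpow_le_rpow (ha.le.trans h1) h2 hκ.le

lemma pos_of_nozero {D : ℝ → ℝ} (hD : ContinuousOn D (Ioi 0)) {a b : ℝ} (ha : 0 < a) (hb : 0 < b) (h0 : 0 < D a)
    (hz : ∀ x ∈ uIcc a b, D x ≠ 0) : 0 < D b := by
  by_contra hcon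
  push Not at hcon
  have hsub : uIcc a b ⊆ Ioi 0 := fun x hx => (lt_min ha hb).trans_le hx.1
  have h1 := intermediate_value_uIcc (hD.mono hsub)
  have h2 : (0:ℝ) ∈ uIcc (D a) (D b) := by
    rw [uIcc_of_ge (hcon.trans h0.le)]; exact ⟨hcon, h0.le⟩
  obtain ⟨x, hx, h3⟩ := h1 h2
  exact hz x hx h3

end modD2

section modD3

def HasV (F : ℝ → ℝ → ℝ) (Y r : ℝ → ℝ) : Prop := ∃ v, SI v ∧ ∀ᶠ ε in 𝓝[>] 0,
  (∀ x, 0 < x → x ≤ r ε → v x (Y ε) ≤ 0) ∧ ∀ x x', r ε ≤ x' → x' ≤ x → |F x' (Y ε)| ≤ v x (Y ε)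

/-- neighbours of a germ in a finite family -/
lemma nbrs (R : Finset (ℝ → ℝ)) (hR : ∀ s ∈ R, KK s) (r : ℝ → ℝ) (hr : KK r) (hne : ∀ s ∈ R, ∀ᶠ ε in 𝓝[>] 0, s ε ≠ r ε) :
    ((∀ᶠ ε in 𝓝[>] 0, ∀ s ∈ R, s ε < r ε) ∨ ∃ t ∈ R, ∀ᶠ ε in 𝓝[>] 0, r ε < t ε ∧ ∀ s ∈ R, s ε < r ε ∨ t ε ≤ s ε) ∧
    ((∀ᶠ ε in 𝓝[>] 0, ∀ s ∈ R, r ε < s ε) ∨ ∃ t ∈ R, ∀ᶠ ε in 𝓝[>] 0, t ε < r ε ∧ ∀ s ∈ R, s ε ≤ t ε ∨ r ε < s ε) := by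
  classical
  obtain ⟨ε0, _, h0⟩ := KK_decide (insert r R) (by
    intro s hs
    rcases Finset.mem_insert.1 hs with h | h
    · rw [h]; exact hr
    · exact hR s h)
  have hmr : r ∈ insert r R := Finset.mem_insert_self _ _
  have hm : ∀ s ∈ R, s ∈ insert r R := fun s hs => Finset.mem_insert_of_mem hs
  have hlt : ∀ s ∈ R, s ε0 < r ε0 ∨ r ε0 < s ε0 := by
    intro s hs
    apply lt_or_gt_of_ne
    intro h
    obtain ⟨ε, h1, h2⟩ := (((h0 s (hm s hs) r hmr).2 h).and (hne s hs)).exists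
    exact h2 h1
  have hle : ∀ s ∈ R, ∀ t ∈ R, s ε0 ≤ t ε0 → ∀ᶠ ε in 𝓝[>] 0, s ε ≤ t ε := by
    intro s hs t ht h
    rcases h.lt_or_eq with h | h
    · exact ((h0 s (hm s hs) t (hm t ht)).1 h).mono fun _ h => h.le
    · exact ((h0 s (hm s hs) t (hm t ht)).2 h).mono fun _ h => h.le
  constructor
  · rcases (R.filter (fun s => r ε0 < s ε0)).eq_empty_or_nonempty with he | he
    · left
      refine (Filter.eventually_all_finset R).2 fun s hs => ?_
      refine (h0 s (hm s hs) r hmr).1 ((hlt s hs).resolve_right fun h => ?_)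
      have : s ∈ R.filter (fun s => r ε0 < s ε0) := Finset.mem_filter.2 ⟨hs, h⟩
      simp [he] at this
    · right
      obtain ⟨t, ht, hmin⟩ := Finset.exists_min_image _ (fun s => s ε0) he
      obtain ⟨ht1, ht2⟩ := Finset.mem_filter.1 ht
      refine ⟨t, ht1, ((h0 r hmr t (hm t ht1)).1 ht2).and ((Filter.eventually_all_finset R).2 fun s hs => ?_)⟩
      rcases hlt s hs with h | h
      · exact ((h0 s (hm s hs) r hmr).1 h).mono fun _ h => Or.inl h
      · exact (hle t ht1 s hs (hmin s (Finset.mem_filter.2 ⟨hs, h⟩))).mono fun _ h => Or.inr h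
  · rcases (R.filter (fun s => s ε0 < r ε0)).eq_empty_or_nonempty with he | he
    · left
      refine (Filter.eventually_all_finset R).2 fun s hs => ?_
      refine (h0 r hmr s (hm s hs)).1 ((hlt s hs).resolve_left fun h => ?_)
      have : s ∈ R.filter (fun s => s ε0 < r ε0) := Finset.mem_filter.2 ⟨hs, h⟩
      simp [he] at this
    · right
      obtain ⟨t, ht, hmax⟩ := Finset.exists_max_image _ (fun s => s ε0) he
      obtain ⟨ht1, ht2⟩ := Finset.mem_filter.1 ht
      refine ⟨t, ht1, ((h0 t (hm t ht1) r hmr).1 ht2).and ((Filter.eventually_all_finset R).2 fun s hs => ?_)⟩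
      rcases hlt s hs with h | h
      · exact (hle s hs t ht1 (hmax s (Finset.mem_filter.2 ⟨hs, h⟩))).mono fun _ h => Or.inl h
      · exact ((h0 r hmr s (hm s hs)).1 h).mono fun _ h => Or.inr h

lemma SI.zero : SI (fun _ _ => 0) := GP.zero.SI

lemma stepV {κ : ℝ} (hκ : 0 < κ) {G D : ℝ → ℝ → ℝ} {Y : ℝ → ℝ}
    (hCP : ∀ᶠ ε in 𝓝[>] 0, CP κ (fun x => G x (Y ε)) (fun x => D x (Y ε)))
    (hDc : ∀ y, ContinuousOn (fun x => D x y) (Ioi 0)) (R : Finset (ℝ → ℝ))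
    (hR : ∀ r ∈ R, KK r ∧ (∀ᶠ ε in 𝓝[>] 0, 0 < r ε) ∧ ∀ᶠ ε in 𝓝[>] 0, D (r ε) (Y ε) = 0)
    (hcov : ∀ᶠ ε in 𝓝[>] 0, ∀ x, 0 < x → D x (Y ε) = 0 → ∃ r ∈ R, x = r ε)
    (ih : ∀ r ∈ R, HasV D Y r) (r : ℝ → ℝ) (hr : KK r) (hrp : ∀ᶠ ε in 𝓝[>] 0, 0 < r ε)
    (hGr : ∀ᶠ ε in 𝓝[>] 0, G (r ε) (Y ε) = 0) (hDr : ∀ᶠ ε in 𝓝[>] 0, 0 < D (r ε) (Y ε)) :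
    ∃ (V : ℝ → ℝ → ℝ) (T : ℝ → Set ℝ), SI V ∧ ∀ᶠ ε in 𝓝[>] 0, (∀ x, 0 ≤ V x (Y ε)) ∧
      (∀ x, 0 < x → x ≤ r ε → V x (Y ε) = 0) ∧ (∀ x ∈ T ε, r ε ≤ x) ∧
      (∀ x x', r ε ≤ x' → x' ≤ x → ∃ u ∈ T ε, u ≤ x' ∧ |G x' (Y ε)| ≤ G u (Y ε) + V x (Y ε)) ∧
      (∀ x, ∀ u ∈ T ε, u ≤ x → G u (Y ε) ≤ G x (Y ε) + V x (Y ε)) := by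
  have hne : ∀ s ∈ R, ∀ᶠ ε in 𝓝[>] 0, s ε ≠ r ε := by
    intro s hs
    filter_upwards [(hR s hs).2.2, hDr] with ε h1 h2 h3
    rw [h3] at h1; linarith
  rcases (nbrs R (fun s hs => (hR s hs).1) r hr hne).1 with h | ⟨t, ht, h⟩
  · refine ⟨fun _ _ => 0, fun ε => Ici (r ε), SI.zero, ?_⟩
    filter_upwards [hCP, hcov, hrp, hGr, hDr, h] with ε hCP hcov hrp hGr hDr h
    have hpos : ∀ x, r ε ≤ x → 0 < D x (Y ε) := by
      intro x hx
      refine pos_of_nozero (D := fun x => D x (Y ε)) (hDc _) hrp (hrp.trans_le hx) hDr ?_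
      intro z hz h0
      rw [uIcc_of_le hx] at hz
      obtain ⟨s, hs, rfl⟩ := hcov z (hrp.trans_le hz.1) h0
      exact absurd (h s hs) (not_lt.2 hz.1)
    have hmono : ∀ u x, r ε ≤ u → u ≤ x → G u (Y ε) ≤ G x (Y ε) := fun u x hu hx =>
      hCP.mono hκ (hrp.trans_le hu) hx (fun z hz _ => hpos z (hu.trans hz.le))
    refine ⟨fun _ => le_rfl, fun _ _ _ => rfl, fun x hx => hx, ?_, ?_⟩
    · intro x x' h1 h2
      refine ⟨x', h1, le_rfl, ?_⟩
      have := hmono (r ε) x' le_rfl h1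
      rw [hGr] at this
      rw [abs_of_nonneg this, add_zero]
    · intro x u hu hx
      rw [add_zero]; exact hmono u x hu hx
  · obtain ⟨v, hv, hvt⟩ := ih t ht
    refine ⟨fun x y => max 0 (x ^ κ * v x y), fun ε => Icc (r ε) (t ε), SI.zero.max (hv.xmul κ), ?_⟩
    filter_upwards [hCP, hcov, hrp, hGr, hDr, h, hvt] with ε hCP hcov hrp hGr hDr h hvt
    have hpos : ∀ x, r ε ≤ x → x < t ε → 0 < D x (Y ε) := by
      intro x hx hxt
      refine pos_of_nozero (D := fun x => D x (Y ε)) (hDc _) hrp (hrp.trans_le hx) hDr ?_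
      intro z hz h0
      rw [uIcc_of_le hx] at hz
      obtain ⟨s, hs, rfl⟩ := hcov z (hrp.trans_le hz.1) h0
      rcases h.2 s hs with h' | h'
      · exact absurd h' (not_lt.2 hz.1)
      · linarith [hz.2]
    have hmono : ∀ u x, r ε ≤ u → u ≤ x → x ≤ t ε → G u (Y ε) ≤ G x (Y ε) := fun u x hu hx hxt =>
      hCP.mono hκ (hrp.trans_le hu) hx (fun z hz hz' => hpos z (hu.trans hz.le) (hz'.trans_le hxt))
    have ht0 : 0 < t ε := hrp.trans h.1
    have hb : ∀ x x', t ε ≤ x' → x' ≤ x → |G x' (Y ε) - G (t ε) (Y ε)| ≤ max 0 (x ^ κ * v x (Y ε)) :=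
      fun x x' h1 h2 => (hCP.bnd2 hκ (v := fun x => v x (Y ε)) ht0 hvt.2 h1 h2).trans (le_max_right _ _)
    have hGt : 0 ≤ G (t ε) (Y ε) := by rw [← hGr]; exact hmono _ _ le_rfl h.1.le le_rfl
    refine ⟨fun _ => le_max_left _ _, fun x hx hxr => ?_, fun x hx => hx.1, ?_, ?_⟩
    · apply max_eq_left
      exact mul_nonpos_of_nonneg_of_nonpos (Real.rpow_nonneg hx.le _) (hvt.1 x hx (hxr.trans h.1.le))
    · intro x x' h1 h2
      rcases le_total x' (t ε) with h3 | h3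
      · refine ⟨x', ⟨h1, h3⟩, le_rfl, ?_⟩
        have := hmono (r ε) x' le_rfl h1 h3
        rw [hGr] at this
        rw [abs_of_nonneg this]
        linarith [le_max_left 0 (x ^ κ * v x (Y ε))]
      · refine ⟨t ε, ⟨h.1.le, le_rfl⟩, h3, ?_⟩
        have h4 := hb x x' h3 h2
        have h5 := abs_sub_abs_le_abs_sub (G x' (Y ε)) (G (t ε) (Y ε))
        rw [abs_of_nonneg hGt] at h5
        linarith
    · intro x u hu hx
      rcases le_total x (t ε) with h3 | h3
      · linarith [hmono u x hu.1 hx h3, le_max_left 0 (x ^ κ * v x (Y ε))]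
      · have h4 := hb x x h3 le_rfl
        have h5 := hmono u (t ε) hu.1 hu.2 le_rfl
        linarith [(abs_le.1 h4).1]

lemma stepQ {κ : ℝ} (hκ : 0 < κ) {G D : ℝ → ℝ → ℝ} {Y : ℝ → ℝ} (hG : SI G)
    (hCP : ∀ᶠ ε in 𝓝[>] 0, CP κ (fun x => G x (Y ε)) (fun x => D x (Y ε)))
    (hDc : ∀ y, ContinuousOn (fun x => D x y) (Ioi 0)) (R : Finset (ℝ → ℝ))
    (hR : ∀ r ∈ R, KK r ∧ (∀ᶠ ε in 𝓝[>] 0, 0 < r ε) ∧ ∀ᶠ ε in 𝓝[>] 0, D (r ε) (Y ε) = 0)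
    (hcov : ∀ᶠ ε in 𝓝[>] 0, ∀ x, 0 < x → D x (Y ε) = 0 → ∃ r ∈ R, x = r ε)
    (ih : ∀ r ∈ R, HasV D Y r) (r : ℝ → ℝ) (hr : KK r) (hrp : ∀ᶠ ε in 𝓝[>] 0, 0 < r ε)
    (hGr : ∀ᶠ ε in 𝓝[>] 0, G (r ε) (Y ε) = 0) (hDr : ∀ᶠ ε in 𝓝[>] 0, 0 < D (r ε) (Y ε)) :
    HasV G Y r := by
  have hne : ∀ s ∈ R, ∀ᶠ ε in 𝓝[>] 0, s ε ≠ r ε := by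
    intro s hs
    filter_upwards [(hR s hs).2.2, hDr] with ε h1 h2 h3
    rw [h3] at h1; linarith
  obtain ⟨V, T, hV, hVT⟩ := stepV hκ hCP hDc R hR hcov ih r hr hrp hGr hDr
  obtain ⟨q, hq, hqT⟩ : ∃ q, SI q ∧ ∀ᶠ ε in 𝓝[>] 0, (∀ x, 0 < x → x ≤ r ε → q x (Y ε) ≤ 0) ∧
      ∀ x, ∀ u ∈ T ε, u ≤ x → G u (Y ε) ≤ q x (Y ε) := by
    rcases (nbrs R (fun s hs => (hR s hs).1) r hr hne).2 with h | ⟨t, ht, h⟩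
    · refine ⟨fun x y => G x y + V x y, hG.add hV, ?_⟩
      filter_upwards [hCP, hcov, hrp, hGr, hDr, h, hVT] with ε hCP hcov hrp hGr hDr h hVT
      refine ⟨fun x hx hxr => ?_, hVT.2.2.2.2⟩
      have hpos : ∀ x, 0 < x → x ≤ r ε → 0 < D x (Y ε) := by
        intro x hx hxr
        refine pos_of_nozero (D := fun x => D x (Y ε)) (hDc _) hrp hx hDr ?_
        intro z hz h0
        rw [uIcc_of_ge hxr] at hz
        obtain ⟨s, hs, rfl⟩ := hcov z (hx.trans_le hz.1) h0
        exact absurd (h s hs) (not_lt.2 hz.2)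
      have := hCP.mono hκ hx hxr (fun z hz hz' => hpos z (hx.trans hz) hz'.le)
      simp only [hGr] at this
      rw [hVT.2.1 x hx hxr, add_zero]; exact this
    · obtain ⟨v, hv, hvt⟩ := ih t ht
      refine ⟨fun x y => min (x ^ κ * v x y) (G x y + V x y), (hv.xmul κ).min (hG.add hV), ?_⟩
      filter_upwards [hCP, hcov, hrp, hGr, hDr, h, hVT, hvt, (hR t ht).2.1] with ε hCP hcov hrp hGr hDr h hVT hvt ht0
      have hpos : ∀ x, t ε < x → x ≤ r ε → 0 < D x (Y ε) := by
        intro x hx hxr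
        refine pos_of_nozero (D := fun x => D x (Y ε)) (hDc _) hrp (ht0.trans hx) hDr ?_
        intro z hz h0
        rw [uIcc_of_ge hxr] at hz
        obtain ⟨s, hs, rfl⟩ := hcov z (ht0.trans (hx.trans_le hz.1)) h0
        rcases h.2 s hs with h' | h'
        · linarith [hz.1]
        · linarith [hz.2]
      have hneg : ∀ x, t ε ≤ x → x ≤ r ε → G x (Y ε) ≤ 0 := by
        intro x hx hxr
        have := hCP.mono hκ (ht0.trans_le hx) hxr (fun z hz hz' => hpos z (hx.trans_lt hz) hz'.le)
        simp only [hGr] at this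
        exact this
      constructor
      · intro x hx hxr
        rcases le_total x (t ε) with h3 | h3
        · exact (min_le_left _ _).trans (mul_nonpos_of_nonneg_of_nonpos (Real.rpow_nonneg hx.le _) (hvt.1 x hx h3))
        · refine (min_le_right _ _).trans ?_
          rw [hVT.2.1 x hx hxr, add_zero]; exact hneg x h3 hxr
      · intro x u hu hx
        refine le_min ?_ (hVT.2.2.2.2 x u hu hx)
        have h1 := hCP.bnd2 hκ (v := fun x => v x (Y ε)) ht0 hvt.2 (h.1.le.trans (hVT.2.2.1 u hu)) hx
        have h2 := hneg (t ε) le_rfl h.1.le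
        have := (abs_le.1 h1).2
        linarith
  refine ⟨fun x y => max (q x y) 0 + V x y, (hq.max SI.zero).add hV, ?_⟩
  filter_upwards [hVT, hqT] with ε hVT hqT
  constructor
  · intro x hx hxr
    rw [hVT.2.1 x hx hxr, max_eq_right (hqT.1 x hx hxr), add_zero]
  · intro x x' h1 h2
    obtain ⟨u, hu, hux, h3⟩ := hVT.2.2.2.1 x x' h1 h2
    have h4 := hqT.2 x u hu (hux.trans h2)
    linarith [le_max_left (q x (Y ε)) 0]

lemma HasV.of_root {κ : ℝ} (hκ : 0 < κ) {G D : ℝ → ℝ → ℝ} {Y : ℝ → ℝ}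
    (hCP : ∀ᶠ ε in 𝓝[>] 0, CP κ (fun x => G x (Y ε)) (fun x => D x (Y ε))) (r : ℝ → ℝ) (hrp : ∀ᶠ ε in 𝓝[>] 0, 0 < r ε)
    (hGr : ∀ᶠ ε in 𝓝[>] 0, G (r ε) (Y ε) = 0) (h : HasV D Y r) : HasV G Y r := by
  obtain ⟨v, hv, hvr⟩ := h
  refine ⟨fun x y => x ^ κ * v x y, hv.xmul κ, ?_⟩
  filter_upwards [hCP, hrp, hGr, hvr] with ε hCP hrp hGr hvr
  constructor
  · intro x hx hxr
    exact mul_nonpos_of_nonneg_of_nonpos (Real.rpow_nonneg hx.le _) (hvr.1 x hx hxr)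
  · intro x x' h1 h2
    have := hCP.bnd2 hκ (v := fun x => v x (Y ε)) hrp hvr.2 h1 h2
    simpa [hGr] using this

end modD3

section modD4

lemma HasV.neg {F : ℝ → ℝ → ℝ} {Y r : ℝ → ℝ} (h : HasV F Y r) : HasV (fun x y => - F x y) Y r := by
  obtain ⟨v, hv, h⟩ := h
  exact ⟨v, hv, by simpa only [abs_neg] using h⟩

lemma CP.neg {κ : ℝ} {G D : ℝ → ℝ} (h : CP κ G D) : CP κ (fun x => - G x) (fun x => - D x) := by
  intro a b ha hab
  obtain ⟨ξ, h1, h2, h3⟩ := h a b ha hab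
  exact ⟨ξ, h1, h2, by linear_combination -h3⟩

lemma Plem {κ : ℝ} (hκ : 0 < κ) {Y : ℝ → ℝ} (hY : Gm Y) : ∀ (n : ℕ) (s : Finset ℝ) (A : ℝ → ℝ → ℝ), s.card = n →
    (∀ e ∈ s, 0 ≤ e) → (∀ e ∈ s, ∀ e' ∈ s, e < e' → e + κ ≤ e') → (∀ e, YP (A e)) →
    ∀ r, KK r → (∀ᶠ ε in 𝓝[>] 0, 0 < r ε) → (∀ᶠ ε in 𝓝[>] 0, xp s A (r ε) (Y ε) = 0) → HasV (xp s A) Y r := by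
  intro n
  induction n with
  | zero =>
    intro s A hs _ _ _ r _ _ _
    rw [Finset.card_eq_zero] at hs
    subst hs
    exact ⟨fun _ _ => 0, SI.zero, Eventually.of_forall fun ε => by simp [xp]⟩
  | succ n ih =>
    intro s A hs h0 hgap hA r hr hrp hz
    have hne : s.Nonempty := Finset.card_pos.1 (by omega)
    let α := s.min' hne
    have hα : α ∈ s := s.min'_mem hne
    have hα0 : 0 ≤ α := h0 α hα
    have hαle : ∀ e ∈ s, α ≤ e := fun e he => s.min'_le e he
    let G : ℝ → ℝ → ℝ := fun x y => ∑ e ∈ s, A e y * x ^ (e - α)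
    have hG : GP G := GP.sum s (fun e _ => (hA e).GP (e - α))
    have hFG : ∀ x y, 0 < x → xp s A x y = x ^ α * G x y := by
      intro x y hx
      simp only [xp, G, Finset.mul_sum]
      refine Finset.sum_congr rfl fun e _ => ?_
      rw [Real.rpow_sub hx]
      have := (Real.rpow_pos_of_pos hx α).ne'
      field_simp
    let s' := (s.erase α).image (fun e => e - α - κ)
    let A' : ℝ → ℝ → ℝ := fun e y => ((e + κ) / κ) * A (e + α + κ) y
    have hA' : ∀ e, YP (A' e) := fun e => (hA _).cmul _
    have hinj : Set.InjOn (fun e : ℝ => e - α - κ) (s.erase α : Finset ℝ) := by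
      intro a _ b _ h
      simp only at h; linarith
    have hD : ∀ x y, xp s' A' x y = ∑ e ∈ s.erase α, (e - α) / κ * A e y * x ^ (e - α - κ) := by
      intro x y
      simp only [xp, s', A']
      rw [Finset.sum_image hinj]
      refine Finset.sum_congr rfl fun e _ => ?_
      have e1 : e - α - κ + κ = e - α := by ring
      have e2 : e - α - κ + α + κ = e := by ring
      rw [e1, e2]
    have hCP : ∀ y, CP κ (fun x => G x y) (fun x => xp s' A' x y) := by
      intro y
      apply CP.of_deriv hκ
      intro x hx
      have h1 : HasDerivAt (fun x => G x y) (∑ e ∈ s, A e y * ((e - α) * x ^ (e - α - 1))) x := by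
        refine HasDerivAt.fun_sum fun e _ => ?_
        exact (Real.hasDerivAt_rpow_const (Or.inl hx.ne')).const_mul _
      convert h1 using 1
      rw [hD, ← Finset.add_sum_erase s _ hα]
      simp only [sub_self, zero_mul, mul_zero, zero_add, Finset.mul_sum]
      refine Finset.sum_congr rfl fun e _ => ?_
      have e1 : e - α - 1 = (κ - 1) + (e - α - κ) := by ring
      rw [e1, Real.rpow_add hx]
      field_simp
    have hCP' : ∀ᶠ ε in 𝓝[>] 0, CP κ (fun x => G x (Y ε)) (fun x => xp s' A' x (Y ε)) :=
      Eventually.of_forall fun ε => hCP _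
    have hGr : ∀ᶠ ε in 𝓝[>] 0, G (r ε) (Y ε) = 0 := by
      filter_upwards [hz, hrp] with ε h1 h2
      rw [hFG _ _ h2] at h1
      exact (mul_eq_zero.1 h1).resolve_left (Real.rpow_pos_of_pos h2 α).ne'
    have hcard : s'.card = n := by
      rw [Finset.card_image_of_injOn hinj, Finset.card_erase_of_mem hα, hs]; simp
    have h0' : ∀ e ∈ s', 0 ≤ e := by
      intro e he
      obtain ⟨e1, he1, rfl⟩ := Finset.mem_image.1 he
      obtain ⟨h1, h2⟩ := Finset.mem_erase.1 he1
      have := hgap α hα e1 h2 (lt_of_le_of_ne (hαle e1 h2) (Ne.symm h1))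
      linarith
    have hgap' : ∀ e ∈ s', ∀ e' ∈ s', e < e' → e + κ ≤ e' := by
      intro e he e' he' hlt
      obtain ⟨e1, he1, rfl⟩ := Finset.mem_image.1 he
      obtain ⟨e2, he2, rfl⟩ := Finset.mem_image.1 he'
      have := hgap e1 (Finset.mem_erase.1 he1).2 e2 (Finset.mem_erase.1 he2).2 (by linarith)
      linarith
    have ih' := ih s' A' hcard h0' hgap' hA'
    have key : HasV G Y r := by
      by_cases hz' : ∀ᶠ ε in 𝓝[>] 0, ∀ x, xp s' A' x (Y ε) = 0
      · exact HasV.of_root hκ hCP' r hrp hGr (ih' r hr hrp (hz'.mono fun ε h => h _))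
      · obtain ⟨R, hR, hcov⟩ := xp_roots s' hA' hY hz'
        have ihR : ∀ r ∈ R, HasV (xp s' A') Y r := fun t ht => ih' t (hR t ht).1 (hR t ht).2.1 (hR t ht).2.2
        rcases (xp_KK s' hA' hY hr hrp).sign with h | h | h
        · exact HasV.of_root hκ hCP' r hrp hGr (ih' r hr hrp h)
        · exact stepQ hκ hG.SI hCP' (fun y => xp_cont s' A' y) R hR hcov ihR r hr hrp hGr h
        · have := stepQ hκ (G := fun x y => - G x y) (D := fun x y => - xp s' A' x y) (Y := Y) hG.neg.SI
            (hCP'.mono fun ε h => h.neg) (fun y => (xp_cont s' A' y).neg) R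
            (fun t ht => ⟨(hR t ht).1, (hR t ht).2.1, (hR t ht).2.2.mono fun ε h => by simp [h]⟩)
            (hcov.mono fun ε h x hx h1 => h x hx (neg_eq_zero.1 h1)) (fun t ht => (ihR t ht).neg) r hr hrp
            (hGr.mono fun ε h => by simp [h]) (h.mono fun ε h => by linarith)
          simpa using this.neg
    obtain ⟨v, hv, hvr⟩ := key
    refine ⟨fun x y => x ^ α * v x y, hv.xmul α, ?_⟩
    filter_upwards [hvr, hrp] with ε hvr hrp
    constructor
    · intro x hx hxr
      exact mul_nonpos_of_nonneg_of_nonpos (Real.rpow_nonneg hx.le _) (hvr.1 x hx hxr)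
    · intro x x' h1 h2
      have hx' : 0 < x' := hrp.trans_le h1
      rw [hFG x' _ hx', abs_mul, abs_of_pos (Real.rpow_pos_of_pos hx' α)]
      exact mul_le_mul (Real.rpow_le_rpow hx'.le h2 hα0) (hvr.2 x x' h1 h2) (abs_nonneg _)
        (Real.rpow_nonneg (hx'.le.trans h2) _)

/-- any GP is an `xp` -/
lemma GP.xp {f : ℝ → ℝ → ℝ} (hf : GP f) : ∃ (s : Finset ℝ) (A : ℝ → ℝ → ℝ), (∀ e, YP (A e)) ∧
    ∀ x y, 0 < x → 0 < y → f x y = xp s A x y := by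
  classical
  obtain ⟨n, c, a, b, h⟩ := hf
  refine ⟨Finset.univ.image a, fun e y => ∑ i, (if a i = e then c i else 0) * y ^ b i, fun e => ⟨n, _, b, fun y _ => rfl⟩, ?_⟩
  intro x y hx hy
  rw [h x y hx hy]
  simp only [_root_.xp]
  rw [← Finset.sum_fiberwise_of_maps_to (s := Finset.univ) (t := Finset.univ.image a) (g := a) (fun i _ => Finset.mem_image_of_mem _ (Finset.mem_univ _))]
  refine Finset.sum_congr rfl fun e _ => ?_
  rw [Finset.sum_mul, Finset.sum_filter]
  refine Finset.sum_congr rfl fun i _ => ?_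
  split_ifs with h1
  · rw [h1]; ring
  · simp

lemma exists_gap (s : Finset ℝ) : ∃ κ : ℝ, 0 < κ ∧ ∀ e ∈ s, ∀ e' ∈ s, e < e' → e + κ ≤ e' := by
  classical
  let t := ((s ×ˢ s).filter (fun p => p.1 < p.2)).image (fun p => p.2 - p.1)
  have hm : ∀ e ∈ s, ∀ e' ∈ s, e < e' → e' - e ∈ t := fun e he e' he' h =>
    Finset.mem_image.2 ⟨(e, e'), Finset.mem_filter.2 ⟨Finset.mem_product.2 ⟨he, he'⟩, h⟩, rfl⟩
  rcases t.eq_empty_or_nonempty with h | h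
  · refine ⟨1, one_pos, fun e he e' he' hlt => ?_⟩
    have := hm e he e' he' hlt
    simp [h] at this
  · refine ⟨t.min' h, ?_, fun e he e' he' hlt => ?_⟩
    · obtain ⟨p, hp, hp'⟩ := Finset.mem_image.1 (t.min'_mem h)
      rw [← hp']
      exact sub_pos.2 (Finset.mem_filter.1 hp).2
    · have := t.min'_le _ (hm e he e' he' hlt)
      linarith

/-- truncations -/
lemma trunc {f : ℝ → ℝ → ℝ} (hf : GP f) {Y : ℝ → ℝ} (hY : Gm Y) {r : ℝ → ℝ} (hr : KK r) (hrp : ∀ᶠ ε in 𝓝[>] 0, 0 < r ε)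
    (hz : ∀ᶠ ε in 𝓝[>] 0, f (r ε) (Y ε) = 0) : ∃ T, SI T ∧ ∀ᶠ ε in 𝓝[>] 0, ∀ x, 0 < x →
      (x ≤ r ε → T x (Y ε) = 0) ∧ (r ε ≤ x → T x (Y ε) = f x (Y ε)) := by
  classical
  obtain ⟨s, A, hA, hfe⟩ := hf.xp
  obtain ⟨κ, hκ, hgap⟩ := exists_gap s
  obtain ⟨N, hN⟩ : ∃ N : ℝ, ∀ e ∈ s, 0 ≤ e + N := by
    refine ⟨∑ e ∈ s, |e|, fun e he => ?_⟩
    have := Finset.single_le_sum (f := fun e : ℝ => |e|) (fun i _ => abs_nonneg i) he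
    have h2 := neg_abs_le e
    linarith
  let s' := s.image (fun e => e + N)
  let A' : ℝ → ℝ → ℝ := fun e y => A (e - N) y
  have hF : ∀ x y, 0 < x → xp s' A' x y = x ^ N * xp s A x y := by
    intro x y hx
    simp only [xp, s', A']
    rw [Finset.sum_image (fun a _ b _ h => by simpa using h), Finset.mul_sum]
    refine Finset.sum_congr rfl fun e _ => ?_
    rw [add_sub_cancel_right, Real.rpow_add hx]; ring
  obtain ⟨v, hv, hvr⟩ := Plem hκ hY s'.card s' A' rfl (by
      intro e he
      obtain ⟨e1, he1, rfl⟩ := Finset.mem_image.1 he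
      exact hN e1 he1) (by
      intro e he e' he' hlt
      obtain ⟨e1, he1, rfl⟩ := Finset.mem_image.1 he
      obtain ⟨e2, he2, rfl⟩ := Finset.mem_image.1 he'
      have := hgap e1 he1 e2 he2 (by linarith)
      linarith) (fun e => hA _) r hr hrp (by
      filter_upwards [hz, hrp, hY.1] with ε h1 h2 h3
      rw [hF _ _ h2, ← hfe _ _ h2 h3, h1, mul_zero])
  refine ⟨fun x y => max (min 0 (- (x ^ (-N) * v x y))) (min (f x y) (x ^ (-N) * v x y)),
    (SI.zero.min (hv.xmul _).neg).max (hf.SI.min (hv.xmul _)), ?_⟩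
  filter_upwards [hvr, hrp, hY.1] with ε hvr hrp hY
  intro x hx
  have hp := Real.rpow_pos_of_pos hx (-N)
  constructor
  · intro h1
    have h2 : x ^ (-N) * v x (Y ε) ≤ 0 := mul_nonpos_of_nonneg_of_nonpos hp.le (hvr.1 x hx h1)
    rw [min_eq_left (by linarith : 0 ≤ -(x ^ (-N) * v x (Y ε)))]
    exact max_eq_left ((min_le_right _ _).trans h2)
  · intro h1
    have h2 := hvr.2 x x h1 le_rfl
    rw [hF x _ hx, ← hfe x _ hx hY, abs_mul, abs_of_pos (Real.rpow_pos_of_pos hx N)] at h2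
    have h3 : |f x (Y ε)| ≤ x ^ (-N) * v x (Y ε) := by
      have := mul_le_mul_of_nonneg_left h2 hp.le
      rwa [← mul_assoc, ← Real.rpow_add hx, neg_add_cancel, Real.rpow_zero, one_mul] at this
    obtain ⟨h4, h5⟩ := abs_le.1 h3
    have h6 := (abs_nonneg _).trans h3
    rw [min_eq_left h5]
    exact max_eq_right ((min_le_right _ _).trans h4)

end modD4

section modE1

lemma GP.KK {f : ℝ → ℝ → ℝ} (hf : GP f) {Y z : ℝ → ℝ} (hY : Gm Y) (hz : KK z) (hp : ∀ᶠ ε in 𝓝[>] 0, 0 < z ε) :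
    KK (fun ε => f (z ε) (Y ε)) := by
  obtain ⟨s, A, hA, h⟩ := hf.xp
  refine (xp_KK s hA hY hz hp).congr ?_
  filter_upwards [hp, hY.1] with ε h1 h2
  exact h _ _ h1 h2

lemma GP.cont {f : ℝ → ℝ → ℝ} (hf : GP f) {y : ℝ} (hy : 0 < y) : ContinuousOn (fun x => f x y) (Ioi 0) := by
  obtain ⟨s, A, hA, h⟩ := hf.xp
  exact (xp_cont s A y).congr fun x hx => h x y hx hy

def Dec (p : ℝ → Prop) : Prop := (∀ᶠ ε in 𝓝[>] 0, p ε) ∨ (∀ᶠ ε in 𝓝[>] 0, ¬ p ε)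

lemma Dec.congr {p q : ℝ → Prop} (h : Dec p) (e : ∀ᶠ ε in 𝓝[>] 0, (q ε ↔ p ε)) : Dec q := by
  rcases h with h | h
  · left; filter_upwards [h, e] with ε h e using e.2 h
  · right; filter_upwards [h, e] with ε h e using fun hq => h (e.1 hq)

lemma Dec.not {p : ℝ → Prop} (h : Dec p) : Dec (fun ε => ¬ p ε) := by
  rcases h with h | h
  · right; exact h.mono fun _ h => not_not.2 h
  · left; exact h

lemma Dec.all {ι : Type*} [Finite ι] {p : ι → ℝ → Prop} (h : ∀ i, Dec (p i)) : Dec (fun ε => ∀ i, p i ε) := by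
  by_cases hc : ∀ i, ∀ᶠ ε in 𝓝[>] 0, p i ε
  · left; exact eventually_all.2 hc
  · push Not at hc
    obtain ⟨i, hi⟩ := hc
    right
    exact ((h i).resolve_left (by simpa using hi)).mono fun ε h1 h2 => h1 (h2 i)

lemma Dec.ex {ι : Type*} [Finite ι] {p : ι → ℝ → Prop} (h : ∀ i, Dec (p i)) : Dec (fun ε => ∃ i, p i ε) :=
  (Dec.all fun i => (h i).not).not.congr (Eventually.of_forall fun ε => by push Not; rfl)

lemma Dec.and {p q : ℝ → Prop} (h : Dec p) (h' : Dec q) : Dec (fun ε => p ε ∧ q ε) := by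
  rcases h with h | h
  · rcases h' with h' | h'
    · left; exact h.and h'
    · right; exact h'.mono fun ε h1 h2 => h1 h2.2
  · right; exact h.mono fun ε h1 h2 => h1 h2.1

lemma KK.dec_zero {u : ℝ → ℝ} (h : KK u) : Dec (fun ε => u ε = 0) := by
  rcases h.sign with h | h | h
  · left; exact h
  · right; exact h.mono fun _ h => h.ne'
  · right; exact h.mono fun _ h => h.ne

lemma KK.dec_pos {u : ℝ → ℝ} (h : KK u) : Dec (fun ε => 0 < u ε) := by
  rcases h.sign with h | h | h
  · right; exact h.mono fun _ h => not_lt.2 h.le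
  · left; exact h
  · right; exact h.mono fun _ h => not_lt.2 h.le

open Classical in
def exq (h : PQ → ℝ) (x y : ℝ) : ℝ := if H : 0 < x ∧ 0 < y then h ⟨(x, y), H⟩ else 0

lemma exq_eq (h : PQ → ℝ) {x y : ℝ} (hx : 0 < x) (hy : 0 < y) : exq h x y = h ⟨(x, y), hx, hy⟩ := by
  simp [exq, hx, hy]

lemma exq_cont {h : PQ → ℝ} (hc : Continuous h) {y : ℝ} (hy : 0 < y) : ContinuousOn (fun x => exq h x y) (Ioi 0) := by
  rw [continuousOn_iff_continuous_domRestrict]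
  have : (Ioi (0:ℝ)).domRestrict (fun x => exq h x y) = fun x : Ioi (0:ℝ) => h ⟨(x.1, y), x.2, hy⟩ := by
    ext x
    exact exq_eq h x.2 hy
  rw [this]
  refine hc.comp ?_
  fun_prop

lemma GSA_dec {S : Set PQ} (hS : IsGSA S) {Y z : ℝ → ℝ} (hY : Gm Y) (hz : KK z) (hp : ∀ᶠ ε in 𝓝[>] 0, 0 < z ε) :
    Dec (fun ε => ∃ H : 0 < z ε ∧ 0 < Y ε, (⟨(z ε, Y ε), H⟩ : PQ) ∈ S) := by
  obtain ⟨J, T, hT, rfl⟩ := hS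
  have : ∀ j, Dec (fun ε => ∃ H : 0 < z ε ∧ 0 < Y ε, (⟨(z ε, Y ε), H⟩ : PQ) ∈ T j) := by
    intro j
    obtain ⟨f, K, g, hf, hg, he⟩ := hT j
    obtain ⟨F, hF, hfF⟩ := GP.of_gen hf
    choose G hG hgG using fun k => GP.of_gen (hg k)
    refine ((hF.KK hY hz hp).dec_zero.and (Dec.all fun k => ((hG k).KK hY hz hp).dec_pos)).congr ?_
    filter_upwards [hp, hY.1] with ε h1 h2
    simp [he, h1, h2, hfF, hgG]
  refine (Dec.ex this).congr (Eventually.of_forall fun ε => ?_)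
  simp only [mem_iUnion]
  exact exists_comm

lemma glue {P : Set ℝ} (hP : IsPreconnected P) {ι : Type*} [Finite ι] (H : ℝ → ℝ) (f : ι → ℝ → ℝ) (hH : ContinuousOn H P)
    (hf : ∀ i, ContinuousOn (f i) P) (cov : ∀ u ∈ P, ∃ j, H u = f j u) (i : ι)
    (good : ∀ j, (∀ u ∈ P, f j u = f i u) ∨ ∀ u ∈ P, f j u ≠ f i u) {z : ℝ} (hz : z ∈ P) (hzi : H z = f i z) :
    ∀ u ∈ P, H u = f i u := by
  have : PreconnectedSpace P := Subtype.preconnectedSpace hP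
  have hcl : ∀ j, IsClosed {u : P | H u = f j u} := fun j =>
    isClosed_eq hH.domRestrict (hf j).domRestrict
  have hop : IsOpen {u : P | H u = f i u} := by
    rw [← isClosed_compl_iff]
    have : {u : P | H u = f i u}ᶜ = ⋃ j : {j // ∀ u ∈ P, f j u ≠ f i u}, {u : P | H u = f j u} := by
      ext u
      simp only [mem_compl_iff, mem_ofPred_eq, mem_iUnion]
      constructor
      · intro h
        obtain ⟨j, hj⟩ := cov u u.2
        rcases good j with h1 | h1
        · exact absurd (hj.trans (h1 u u.2)) h
        · exact ⟨⟨j, h1⟩, hj⟩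
      · rintro ⟨⟨j, h1⟩, h2⟩ h3
        exact h1 u u.2 (h2.symm.trans h3)
    rw [this]
    exact isClosed_iUnion_of_finite fun j => hcl j
  have hu := IsClopen.eq_univ ⟨hcl i, hop⟩ ⟨⟨z, hz⟩, hzi⟩
  intro u hu'
  have : (⟨u, hu'⟩ : P) ∈ {u : P | H u = f i u} := by rw [hu]; trivial
  exact this

lemma KK_max (S : Finset (ℝ → ℝ)) (hS : ∀ s ∈ S, KK s) (hne : S.Nonempty) : ∃ a ∈ S, ∀ᶠ ε in 𝓝[>] 0, ∀ s ∈ S, s ε ≤ a ε := by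
  obtain ⟨ε0, _, h0⟩ := KK_decide S hS
  obtain ⟨a, ha, hm⟩ := S.exists_max_image (fun s => s ε0) hne
  refine ⟨a, ha, (Filter.eventually_all_finset S).2 fun s hs => ?_⟩
  rcases (hm s hs).lt_or_eq with h | h
  · exact ((h0 s hs a ha).1 h).mono fun _ h => h.le
  · exact ((h0 s hs a ha).2 h).mono fun _ h => h.le

lemma KK_min (S : Finset (ℝ → ℝ)) (hS : ∀ s ∈ S, KK s) (hne : S.Nonempty) : ∃ a ∈ S, ∀ᶠ ε in 𝓝[>] 0, ∀ s ∈ S, a ε ≤ s ε := by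
  obtain ⟨ε0, _, h0⟩ := KK_decide S hS
  obtain ⟨a, ha, hm⟩ := S.exists_min_image (fun s => s ε0) hne
  refine ⟨a, ha, (Filter.eventually_all_finset S).2 fun s hs => ?_⟩
  rcases (hm s hs).lt_or_eq with h | h
  · exact ((h0 a ha s hs).1 h).mono fun _ h => h.le
  · exact ((h0 a ha s hs).2 h).mono fun _ h => h.le

lemma testpt (S T : Finset (ℝ → ℝ)) (hS : ∀ s ∈ S, KK s ∧ ∀ᶠ ε in 𝓝[>] 0, 0 < s ε) (hT : ∀ s ∈ T, KK s ∧ ∀ᶠ ε in 𝓝[>] 0, 0 < s ε)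
    (hST : ∀ s ∈ S, ∀ t ∈ T, ∀ᶠ ε in 𝓝[>] 0, s ε ≤ t ε) : ∃ z, KK z ∧ (∀ᶠ ε in 𝓝[>] 0, 0 < z ε) ∧
      ((∀ᶠ ε in 𝓝[>] 0, (∀ s ∈ S, s ε < z ε) ∧ ∀ t ∈ T, z ε < t ε) ∨
       ∀ᶠ ε in 𝓝[>] 0, ∀ x, (∀ s ∈ S, s ε ≤ x) → (∀ t ∈ T, x ≤ t ε) → x = z ε) := by
  rcases S.eq_empty_or_nonempty with rfl | hSn
  · rcases T.eq_empty_or_nonempty with rfl | hTn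
    · exact ⟨fun _ => 1, KK.const 1, by simp, Or.inl (by simp)⟩
    · obtain ⟨b, hb, hm⟩ := KK_min T (fun s hs => (hT s hs).1) hTn
      refine ⟨fun ε => 1 / 2 * b ε, (hT b hb).1.cmul _, (hT b hb).2.mono fun ε h => by positivity, Or.inl ?_⟩
      filter_upwards [hm, (hT b hb).2] with ε h1 h2
      refine ⟨by simp, fun t ht => ?_⟩
      linarith [h1 t ht]
  · obtain ⟨a, ha, hM⟩ := KK_max S (fun s hs => (hS s hs).1) hSn
    rcases T.eq_empty_or_nonempty with rfl | hTn
    · refine ⟨fun ε => a ε + 1, (hS a ha).1.add (KK.const 1), (hS a ha).2.mono fun ε h => by positivity, Or.inl ?_⟩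
      filter_upwards [hM] with ε h1
      refine ⟨fun s hs => ?_, by simp⟩
      linarith [h1 s hs]
    · obtain ⟨b, hb, hm⟩ := KK_min T (fun s hs => (hT s hs).1) hTn
      have hab := hST a ha b hb
      rcases ((hT b hb).1.sub (hS a ha).1).sign with h | h | h
      · refine ⟨a, (hS a ha).1, (hS a ha).2, Or.inr ?_⟩
        filter_upwards [h] with ε h x hx hx'
        linarith [hx a ha, hx' b hb]
      · refine ⟨fun ε => 1 / 2 * (a ε + b ε), ((hS a ha).1.add (hT b hb).1).cmul _, ?_, Or.inl ?_⟩
        · filter_upwards [(hS a ha).2, (hT b hb).2] with ε h1 h2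
          positivity
        · filter_upwards [h, hM, hm] with ε h h1 h2
          exact ⟨fun s hs => by linarith [h1 s hs], fun t ht => by linarith [h2 t ht]⟩
      · obtain ⟨ε, h1, h2⟩ := (h.and hab).exists
        linarith

variable {l : ℕ} {H : ℝ → ℝ → ℝ} {f : Fin l → ℝ → ℝ → ℝ} {Y : ℝ → ℝ}

lemma sector (hf : ∀ i, GP (f i)) (hY : Gm Y) (hH : ∀ y, 0 < y → ContinuousOn (fun x => H x y) (Ioi 0))
    (hdec : ∀ i z, KK z → (∀ᶠ ε in 𝓝[>] 0, 0 < z ε) → Dec (fun ε => H (z ε) (Y ε) = f i (z ε) (Y ε)))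
    (hcov : ∀ x y, 0 < x → 0 < y → ∃ i, H x y = f i x y) (S T : Finset (ℝ → ℝ))
    (hS : ∀ s ∈ S, KK s ∧ ∀ᶠ ε in 𝓝[>] 0, 0 < s ε) (hT : ∀ s ∈ T, KK s ∧ ∀ᶠ ε in 𝓝[>] 0, 0 < s ε)
    (hST : ∀ s ∈ S, ∀ t ∈ T, ∀ᶠ ε in 𝓝[>] 0, s ε ≤ t ε)
    (hroots : ∀ᶠ ε in 𝓝[>] 0, ∀ i j, (∀ x, 0 < x → f j x (Y ε) = f i x (Y ε)) ∨
      ∀ x, 0 < x → f j x (Y ε) = f i x (Y ε) → (∃ s ∈ S, x = s ε) ∨ ∃ t ∈ T, x = t ε) :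
    ∃ i, ∀ᶠ ε in 𝓝[>] 0, ∀ x, 0 < x → (∀ s ∈ S, s ε ≤ x) → (∀ t ∈ T, x ≤ t ε) → H x (Y ε) = f i x (Y ε) := by
  obtain ⟨z, hz, hzp, hzz⟩ := testpt S T hS hT hST
  obtain ⟨i, hi⟩ : ∃ i, ∀ᶠ ε in 𝓝[>] 0, H (z ε) (Y ε) = f i (z ε) (Y ε) := by
    by_contra hcon
    push Not at hcon
    have : ∀ i, ∀ᶠ ε in 𝓝[>] 0, ¬ H (z ε) (Y ε) = f i (z ε) (Y ε) := fun i =>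
      (hdec i z hz hzp).resolve_left (by simpa using hcon i)
    obtain ⟨ε, h1, h2, h3⟩ := ((eventually_all.2 this).and (hzp.and hY.1)).exists
    obtain ⟨i, hi⟩ := hcov _ _ h2 h3
    exact h1 i hi
  refine ⟨i, ?_⟩
  rcases hzz with hzz | hzz
  · filter_upwards [hzz, hi, hzp, hY.1, hroots] with ε hzz hi hzp hY hroots
    intro x hx hxS hxT
    let P : Set ℝ := {x | 0 < x ∧ (∀ s ∈ S, s ε < x) ∧ ∀ t ∈ T, x < t ε}
    have hPpos : P ⊆ Ioi 0 := fun x hx => hx.1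
    have hP : P.OrdConnected := ⟨fun a ha b hb c hc => ⟨ha.1.trans_le hc.1, fun s hs => (ha.2.1 s hs).trans_le hc.1,
      fun t ht => hc.2.trans_lt (hb.2.2 t ht)⟩⟩
    have hzP : z ε ∈ P := ⟨hzp, hzz.1, hzz.2⟩
    have key := glue hP.isPreconnected (fun x => H x (Y ε)) (fun j x => f j x (Y ε)) ((hH _ hY).mono hPpos)
      (fun j => ((hf j).cont hY).mono hPpos) (fun u hu => hcov u _ hu.1 hY) i (by
        intro j
        rcases hroots i j with h | h
        · exact Or.inl fun u hu => h u hu.1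
        · refine Or.inr fun u hu h1 => ?_
          rcases h u hu.1 h1 with ⟨s, hs, h2⟩ | ⟨s, hs, h2⟩
          · exact absurd (hu.2.1 s hs) (by rw [h2]; exact lt_irrefl _)
          · exact absurd (hu.2.2 s hs) (by rw [h2]; exact lt_irrefl _)) hzP hi
    have hsub : openSegment ℝ (z ε) x ⊆ P := by
      rintro u ⟨a, b, ha, hb, hab, rfl⟩
      simp only [smul_eq_mul]
      refine ⟨by positivity, fun s hs => ?_, fun t ht => ?_⟩
      · have h1 := mul_lt_mul_of_pos_left (hzz.1 s hs) ha
        have h2 := mul_le_mul_of_nonneg_left (hxS s hs) hb.le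
        have : s ε = a * s ε + b * s ε := by rw [← add_mul, hab, one_mul]
        linarith
      · have h1 := mul_lt_mul_of_pos_left (hzz.2 t ht) ha
        have h2 := mul_le_mul_of_nonneg_left (hxT t ht) hb.le
        have : t ε = a * t ε + b * t ε := by rw [← add_mul, hab, one_mul]
        linarith
    have hseg : segment ℝ (z ε) x ⊆ Ioi 0 := (convex_Ioi (0:ℝ)).segment_subset hzp hx
    have he : EqOn (fun x => H x (Y ε)) (fun x => f i x (Y ε)) (segment ℝ (z ε) x) :=
      EqOn.of_subset_closure (s := openSegment ℝ (z ε) x) (fun u hu => key u (hsub hu)) ((hH _ hY).mono hseg)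
        (((hf i).cont hY).mono hseg) (openSegment_subset_segment _ _ _) segment_subset_closure_openSegment
    exact he (right_mem_segment _ _ _)
  · filter_upwards [hzz, hi] with ε hzz hi x hx hxS hxT
    rw [hzz x hxS hxT]; exact hi

lemma germ (hf : ∀ i, GP (f i)) (hY : Gm Y) (hH : ∀ y, 0 < y → ContinuousOn (fun x => H x y) (Ioi 0))
    (hdec : ∀ i z, KK z → (∀ᶠ ε in 𝓝[>] 0, 0 < z ε) → Dec (fun ε => H (z ε) (Y ε) = f i (z ε) (Y ε)))
    (hcov : ∀ x y, 0 < x → 0 < y → ∃ i, H x y = f i x y) :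
    ∃ E, SI E ∧ ∀ᶠ ε in 𝓝[>] 0, ∀ x, 0 < x → E x (Y ε) = H x (Y ε) := by
  classical
  have hij : ∀ p : Fin l × Fin l, ∃ R : Finset (ℝ → ℝ), (∀ r ∈ R, KK r ∧ (∀ᶠ ε in 𝓝[>] 0, 0 < r ε)) ∧
      ∀ᶠ ε in 𝓝[>] 0, (∀ x, 0 < x → f p.2 x (Y ε) = f p.1 x (Y ε)) ∨
      ∀ x, 0 < x → f p.2 x (Y ε) = f p.1 x (Y ε) → ∃ s ∈ R, x = s ε := by
    rintro ⟨i, j⟩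
    obtain ⟨s, A, hA, hs⟩ := ((hf j).add (hf i).neg).xp
    by_cases hne : ∀ᶠ ε in 𝓝[>] 0, ∀ x, xp s A x (Y ε) = 0
    · refine ⟨∅, by simp, ?_⟩
      filter_upwards [hne, hY.1] with ε h hY
      refine Or.inl fun x hx => ?_
      have := hs x _ hx hY
      rw [h x] at this
      linarith
    · obtain ⟨R, hR, hc⟩ := xp_roots s hA hY hne
      refine ⟨R, fun r hr => ⟨(hR r hr).1, (hR r hr).2.1⟩, ?_⟩
      filter_upwards [hc, hY.1] with ε h hY
      refine Or.inr fun x hx hx' => h x hx ?_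
      rw [← hs x _ hx hY]
      linarith
  choose R0 hR0 hR0' using hij
  let R := Finset.univ.biUnion R0
  have hR : ∀ r ∈ R, KK r ∧ ∀ᶠ ε in 𝓝[>] 0, 0 < r ε := by
    intro r hr
    obtain ⟨p, _, hp⟩ := Finset.mem_biUnion.1 hr
    exact hR0 p r hp
  obtain ⟨ε0, _, h0⟩ := KK_decide R (fun r hr => (hR r hr).1)
  have hle : ∀ s ∈ R, ∀ t ∈ R, s ε0 ≤ t ε0 → ∀ᶠ ε in 𝓝[>] 0, s ε ≤ t ε := by
    intro s hs t ht h
    rcases h.lt_or_eq with h | h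
    · exact ((h0 s hs t ht).1 h).mono fun _ h => h.le
    · exact ((h0 s hs t ht).2 h).mono fun _ h => h.le
  have hsec : ∀ S ⊆ R, (∀ s ∈ S, ∀ t ∈ R, t ∉ S → s ε0 ≤ t ε0) → ∃ i, ∀ᶠ ε in 𝓝[>] 0, ∀ x, 0 < x →
      (∀ s ∈ S, s ε ≤ x) → (∀ t ∈ R \ S, x ≤ t ε) → H x (Y ε) = f i x (Y ε) := by
    intro S hSR hlow
    refine sector hf hY hH hdec hcov S (R \ S) (fun s hs => hR s (hSR hs)) (fun t ht => hR t (Finset.mem_sdiff.1 ht).1) ?_ ?_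
    · intro s hs t ht
      obtain ⟨h1, h2⟩ := Finset.mem_sdiff.1 ht
      exact hle s (hSR hs) t h1 (hlow s hs t h1 h2)
    · filter_upwards [eventually_all.2 hR0'] with ε h i j
      refine (h (i, j)).imp_right fun h1 x hx hx' => ?_
      obtain ⟨s, hs, rfl⟩ := h1 x hx hx'
      have hsR : s ∈ R := Finset.mem_biUnion.2 ⟨(i, j), Finset.mem_univ _, hs⟩
      by_cases hsS : s ∈ S
      · exact Or.inl ⟨s, hsS, rfl⟩
      · exact Or.inr ⟨s, Finset.mem_sdiff.2 ⟨hsR, hsS⟩, rfl⟩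
  have main : ∀ S : Finset (ℝ → ℝ), S ⊆ R → (∀ s ∈ S, ∀ t ∈ R, t ∉ S → s ε0 ≤ t ε0) → ∃ E, SI E ∧ ∃ i, ∀ᶠ ε in 𝓝[>] 0,
      ∀ x, 0 < x → ((∀ t ∈ R \ S, x ≤ t ε) → E x (Y ε) = H x (Y ε)) ∧ ((∀ s ∈ S, s ε ≤ x) → E x (Y ε) = f i x (Y ε)) := by
    intro S
    induction S using Finset.induction_on_max_value (fun s : ℝ → ℝ => s ε0) with
    | empty =>
      intro h1 h2
      obtain ⟨i, hi⟩ := hsec ∅ h1 h2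
      refine ⟨f i, (hf i).SI, i, ?_⟩
      filter_upwards [hi] with ε hi x hx
      exact ⟨fun h => (hi x hx (by simp) h).symm, fun _ => rfl⟩
    | insert a S ha hmax ih =>
      intro h1 h2
      have haR : a ∈ R := h1 (Finset.mem_insert_self _ _)
      have hSR : S ⊆ R := fun s hs => h1 (Finset.mem_insert_of_mem hs)
      have hlow : ∀ s ∈ S, ∀ t ∈ R, t ∉ S → s ε0 ≤ t ε0 := by
        intro s hs t ht htS
        by_cases hta : t = a
        · rw [hta]; exact hmax s hs
        · exact h2 s (Finset.mem_insert_of_mem hs) t ht (by simp [hta, htS])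
      obtain ⟨E, hE, i, hEi⟩ := ih hSR hlow
      obtain ⟨j, hj⟩ := hsec _ h1 h2
      have hSa : ∀ᶠ ε in 𝓝[>] 0, ∀ s ∈ S, s ε ≤ a ε :=
        (Filter.eventually_all_finset S).2 fun s hs => hle s (hSR hs) a haR (hmax s hs)
      have haT : ∀ᶠ ε in 𝓝[>] 0, ∀ t ∈ R \ insert a S, a ε ≤ t ε :=
        (Filter.eventually_all_finset _).2 fun t ht => by
          obtain ⟨h3, h4⟩ := Finset.mem_sdiff.1 ht
          exact hle a haR t h3 (h2 a (Finset.mem_insert_self _ _) t h3 h4)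
      have hcase : ∀ t ∈ R \ S, t = a ∨ t ∈ R \ insert a S := by
        intro t ht
        obtain ⟨h3, h4⟩ := Finset.mem_sdiff.1 ht
        by_cases hta : t = a
        · exact Or.inl hta
        · exact Or.inr (Finset.mem_sdiff.2 ⟨h3, by simp [hta, h4]⟩)
      obtain ⟨T, hT, hTa⟩ := trunc ((hf j).add (hf i).neg) hY (hR a haR).1 (hR a haR).2 (by
        filter_upwards [hEi, hj, hSa, haT, (hR a haR).2] with ε hEi hj hSa haT hap
        have e1 := (hEi (a ε) hap).1 (fun t ht => by
          rcases hcase t ht with rfl | h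
          · exact le_rfl
          · exact haT t h)
        have e2 := (hEi (a ε) hap).2 hSa
        have e3 := hj (a ε) hap (fun s hs => by
          rcases Finset.mem_insert.1 hs with rfl | h
          · exact le_rfl
          · exact hSa s h) haT
        linarith)
      refine ⟨fun x y => E x y + T x y, hE.add hT, j, ?_⟩
      filter_upwards [hEi, hj, hSa, haT, hTa] with ε hEi hj hSa haT hTa x hx
      have hup : a ε ≤ x → E x (Y ε) + T x (Y ε) = f j x (Y ε) := by
        intro hax
        rw [(hTa x hx).2 hax, (hEi x hx).2 (fun s hs => (hSa s hs).trans hax)]; ring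
      refine ⟨fun h => ?_, fun h => hup (h a (Finset.mem_insert_self _ _))⟩
      rcases le_total x (a ε) with hax | hax
      · rw [(hTa x hx).1 hax, add_zero]
        refine (hEi x hx).1 fun t ht => ?_
        rcases hcase t ht with rfl | h'
        · exact hax
        · exact h t h'
      · rw [hup hax]
        refine (hj x hx (fun s hs => ?_) h).symm
        rcases Finset.mem_insert.1 hs with rfl | h'
        · exact hax
        · exact (hSa s h').trans hax
  obtain ⟨E, hE, i, hEi⟩ := main R (Finset.Subset.refl _) (fun s _ t ht h => absurd ht h)
  exact ⟨E, hE, hEi.mono fun ε h x hx => (h x hx).1 (by simp)⟩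

end modE1

section modE2

lemma germ_h {h : PQ → ℝ} (hc : Continuous h) (hpw : IsPiecewiseGenPoly h) {Y : ℝ → ℝ} (hY : Gm Y) :
    ∃ E, SI E ∧ ∀ᶠ ε in 𝓝[>] 0, ∀ x, 0 < x → E x (Y ε) = exq h x (Y ε) := by
  obtain ⟨l, g, hg, _, hS, hcov⟩ := hpw
  choose f hf hgf using fun i => GP.of_gen (hg i)
  refine germ (l := l) (f := f) hf hY (fun y hy => exq_cont hc hy) ?_ ?_
  · intro i z hz hp
    refine (GSA_dec (hS i) hY hz hp).congr ?_
    filter_upwards [hp, hY.1] with ε h1 h2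
    simp [exq_eq h h1 h2, h1, h2, hgf]
  · intro x y hx hy
    obtain ⟨i, hi⟩ := hcov ⟨(x, y), hx, hy⟩
    exact ⟨i, by rw [exq_eq h hx hy, hi, hgf]⟩

lemma KK_id : KK (fun ε => ε) := by simpa using KK.rpowid 1

lemma right_h {h : PQ → ℝ} (hc : Continuous h) (hpw : IsPiecewiseGenPoly h) {y0 : ℝ} (hy0 : 0 ≤ y0) :
    ∃ E, SI E ∧ ∃ δ, 0 < δ ∧ ∀ y, y0 < y → y < y0 + δ → ∀ x, 0 < x → E x y = exq h x y := by
  obtain ⟨E, hE, h1⟩ := germ_h hc hpw (Y := fun ε => y0 + ε) ⟨ev_pos.mono fun ε h => by positivity, (KK.const y0).add KK_id⟩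
  obtain ⟨δ, hδ, h2⟩ := mem_nhdsGT_iff_exists_Ioo_subset.1 h1
  refine ⟨E, hE, δ, hδ, fun y h3 h4 x hx => ?_⟩
  have := @h2 (y - y0) ⟨by linarith, by linarith⟩ x hx
  simpa using this

lemma left_h {h : PQ → ℝ} (hc : Continuous h) (hpw : IsPiecewiseGenPoly h) {y0 : ℝ} (hy0 : 0 < y0) :
    ∃ E, SI E ∧ ∃ δ, 0 < δ ∧ ∀ y, y0 - δ < y → y < y0 → ∀ x, 0 < x → E x y = exq h x y := by
  obtain ⟨E, hE, h1⟩ := germ_h hc hpw (Y := fun ε => y0 - ε) ⟨by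
    filter_upwards [mem_nhdsWithin_of_mem_nhds (Iio_mem_nhds hy0)] with ε h
    exact sub_pos.2 h, (KK.const y0).sub KK_id⟩
  obtain ⟨δ, hδ, h2⟩ := mem_nhdsGT_iff_exists_Ioo_subset.1 h1
  refine ⟨E, hE, δ, hδ, fun y h3 h4 x hx => ?_⟩
  have := @h2 (y0 - y) ⟨by linarith, by linarith⟩ x hx
  simpa using this

lemma top_h {h : PQ → ℝ} (hc : Continuous h) (hpw : IsPiecewiseGenPoly h) :
    ∃ E, SI E ∧ ∃ N, 0 < N ∧ ∀ y, N < y → ∀ x, 0 < x → E x y = exq h x y := by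
  obtain ⟨E, hE, h1⟩ := germ_h hc hpw (Y := fun ε => ε ^ (-1:ℝ)) ⟨ev_pos.mono fun ε h => Real.rpow_pos_of_pos h _, KK.rpowid _⟩
  obtain ⟨δ, hδ, h2⟩ := mem_nhdsGT_iff_exists_Ioo_subset.1 h1
  have hδ' : (0:ℝ) < δ := hδ
  refine ⟨E, hE, δ⁻¹, inv_pos.2 hδ', fun y h3 x hx => ?_⟩
  have hy : 0 < y := (inv_pos.2 hδ').trans h3
  have := @h2 y⁻¹ ⟨inv_pos.2 hy, inv_lt_of_inv_lt₀ hδ' h3⟩ x hx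
  simpa [Real.rpow_neg_one] using this

lemma assemble (Q : (ℝ → Prop) → Prop) (hmono : ∀ p q : ℝ → Prop, (∀ y, p y → q y) → Q q → Q p)
    (hr : ∀ y0, 0 ≤ y0 → ∃ δ, 0 < δ ∧ Q (fun y => y0 < y ∧ y < y0 + δ))
    (hl : ∀ y0, 0 < y0 → ∃ δ, 0 < δ ∧ Q (fun y => y0 - δ < y ∧ y < y0))
    (ht : ∃ N, 0 < N ∧ Q (fun y => N < y)) :
    ∃ (M : ℕ) (η : ℕ → ℝ), η 0 = 0 ∧ StrictMonoOn η (Set.Iic M) ∧ ∀ q ≤ M, Q (fun y => y ∈ vstrip η M q) := by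
  classical
  obtain ⟨N, hN, hQN⟩ := ht
  have hloc : ∀ y0 : ℝ, ∃ δ, 0 < δ ∧ (0 ≤ y0 → Q (fun y => y0 < y ∧ y < y0 + δ)) ∧ (0 < y0 → Q (fun y => y0 - δ < y ∧ y < y0)) := by
    intro y0
    rcases lt_trichotomy y0 0 with h | h | h
    · exact ⟨1, one_pos, fun h' => absurd h' (not_le.2 h), fun h' => absurd h' (not_lt.2 h.le)⟩
    · obtain ⟨δ, h1, h2⟩ := hr y0 h.ge
      exact ⟨δ, h1, fun _ => h2, fun h' => absurd h' (not_lt.2 h.le)⟩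
    · obtain ⟨δ, h1, h2⟩ := hr y0 h.le
      obtain ⟨δ', h1', h2'⟩ := hl y0 h
      refine ⟨min δ δ', lt_min h1 h1', fun _ => hmono _ _ ?_ h2, fun _ => hmono _ _ ?_ h2'⟩
      · rintro y ⟨h3, h4⟩
        exact ⟨h3, by linarith [min_le_left δ δ']⟩
      · rintro y ⟨h3, h4⟩
        exact ⟨by linarith [min_le_right δ δ'], h4⟩
  choose δ hδ hδr hδl using hloc
  obtain ⟨t, hts, htc⟩ := (isCompact_Icc (a := (0:ℝ)) (b := N)).elim_nhds_subcover (fun y => Ioo (y - δ y) (y + δ y))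
    (fun y _ => Ioo_mem_nhds (by linarith [hδ y]) (by linarith [hδ y]))
  let F : Finset ℝ := ({0, N} ∪ t ∪ t.image (fun y => y + δ y) ∪ t.image (fun y => y - δ y)).filter (fun y => 0 ≤ y)
  have hF0 : ∀ y ∈ F, 0 ≤ y := fun y hy => (Finset.mem_filter.1 hy).2
  have m0 : (0:ℝ) ∈ F := by simp [F]
  have mN : N ∈ F := by simp [F, hN.le]
  have mt : ∀ y ∈ t, y ∈ F := fun y hy => by simp [F, hy, (hts y hy).1]
  have mp : ∀ y ∈ t, y + δ y ∈ F := fun y hy => by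
    refine Finset.mem_filter.2 ⟨?_, by linarith [(hts y hy).1, hδ y]⟩
    exact Finset.mem_union_left _ (Finset.mem_union_right _ (Finset.mem_image_of_mem _ hy))
  have mm : ∀ y ∈ t, 0 ≤ y - δ y → y - δ y ∈ F := fun y hy h0 => by
    refine Finset.mem_filter.2 ⟨?_, h0⟩
    exact Finset.mem_union_right _ (Finset.mem_image_of_mem _ hy)
  have hk : 0 < F.card := Finset.card_pos.2 ⟨0, m0⟩
  let o := F.orderEmbOfFin rfl
  let η : ℕ → ℝ := fun n => if h : n < F.card then o ⟨n, h⟩ else 0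
  have hη : ∀ n (h : n < F.card), η n = o ⟨n, h⟩ := fun n h => by simp [η, h]
  have hηF : ∀ n, n < F.card → η n ∈ F := fun n h => by rw [hη n h]; exact F.orderEmbOfFin_mem rfl _
  have hsm : ∀ a b, a < b → b < F.card → η a < η b := by
    intro a b hab hb
    rw [hη a (hab.trans hb), hη b hb]
    exact o.strictMono hab
  have hm : ∀ a b, a ≤ b → b < F.card → η a ≤ η b := by
    intro a b hab hb
    rcases hab.eq_or_lt with rfl | h
    · exact le_rfl
    · exact (hsm a b h hb).le
  have hsurj : ∀ y ∈ F, ∃ n, n < F.card ∧ η n = y := by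
    intro y hy
    have : y ∈ Set.range o := by rw [Finset.range_orderEmbOfFin]; exact hy
    obtain ⟨⟨n, hn⟩, h⟩ := this
    exact ⟨n, hn, by rw [hη n hn, h]⟩
  refine ⟨F.card - 1, η, ?_, ?_, ?_⟩
  · obtain ⟨n, hn, h⟩ := hsurj 0 m0
    exact le_antisymm (h ▸ hm 0 n (Nat.zero_le _) hn) (hF0 _ (hηF 0 hk))
  · intro a ha b hb hab
    have hb' : b ≤ F.card - 1 := hb
    exact hsm a b hab (by omega)
  · intro q hq
    by_cases hqM : q = F.card - 1
    · refine hmono _ _ ?_ hQN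
      intro y hy
      simp only [vstrip, hqM, if_true, mem_Ioi] at hy
      obtain ⟨n, hn, h⟩ := hsurj N mN
      have := hm n (F.card - 1) (by omega) (by omega)
      linarith
    · have hq1 : q + 1 < F.card := by omega
      have hgap : ∀ y ∈ F, y ≤ η q ∨ η (q + 1) ≤ y := by
        intro y hy
        obtain ⟨n, hn, rfl⟩ := hsurj y hy
        rcases Nat.lt_or_ge q n with h | h
        · exact Or.inr (hm _ _ h hn)
        · exact Or.inl (hm _ _ h (by omega))
      have hab := hsm q (q + 1) (Nat.lt_succ_self q) hq1
      have ha0 := hF0 _ (hηF q (by omega))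
      simp only [vstrip, hqM, if_false, mem_Ioo]
      generalize η q = a at *
      generalize η (q + 1) = b at *
      rcases hgap N mN with h | h
      · exact hmono _ _ (fun y hy => h.trans_lt hy.1) hQN
      · have hmem : (a + b) / 2 ∈ Icc 0 N := ⟨by linarith, by linarith⟩
        obtain ⟨y, hy, h1, h2⟩ : ∃ y ∈ t, y - δ y < (a + b) / 2 ∧ (a + b) / 2 < y + δ y := by
          have := htc hmem
          simp only [mem_iUnion] at this
          obtain ⟨y, hy, h1⟩ := this
          exact ⟨y, hy, h1.1, h1.2⟩
        rcases hgap y (mt y hy) with h3 | h3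
        · refine hmono _ _ ?_ (hδr y (hts y hy).1)
          rintro u ⟨h4, h5⟩
          refine ⟨h3.trans_lt h4, h5.trans_le ((hgap _ (mp y hy)).resolve_left ?_)⟩
          intro h6; linarith
        · refine hmono _ _ ?_ (hδl y (by linarith))
          rintro u ⟨h4, h5⟩
          refine ⟨?_, h5.trans_le h3⟩
          rcases lt_or_ge (y - δ y) 0 with h6 | h6
          · linarith
          · rcases hgap _ (mm y hy h6) with h7 | h7
            · linarith
            · linarith

theorem main_thm (h : PQ → ℝ)
    (hc : Continuous h) (hpw : IsPiecewiseGenPoly h) :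
    ∃ (M : ℕ) (η : ℕ → ℝ) (e : ℕ → PQ → ℝ),
      η 0 = 0 ∧ StrictMonoOn η (Set.Iic M) ∧
      (∀ q ≤ M, IsSupInf (e q)) ∧
      (∀ q ≤ M, ∀ z : PQ, z.1.2 ∈ vstrip η M q → e q z = h z) := by
  obtain ⟨M, η, h0, hm, hQ⟩ := assemble (fun p => ∃ E, SI E ∧ ∀ y, p y → ∀ x, 0 < x → E x y = exq h x y)
    (fun p q hpq ⟨E, hE, h1⟩ => ⟨E, hE, fun y hy => h1 y (hpq y hy)⟩)
    (fun y0 hy0 => by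
      obtain ⟨E, hE, δ, hδ, h1⟩ := right_h hc hpw hy0
      exact ⟨δ, hδ, E, hE, fun y hy => h1 y hy.1 hy.2⟩)
    (fun y0 hy0 => by
      obtain ⟨E, hE, δ, hδ, h1⟩ := left_h hc hpw hy0
      exact ⟨δ, hδ, E, hE, fun y hy => h1 y hy.1 hy.2⟩)
    (by
      obtain ⟨E, hE, N, hN, h1⟩ := top_h hc hpw
      exact ⟨N, hN, E, hE, h1⟩)
  choose E hE hEh using hQ
  refine ⟨M, η, fun q z => if hq : q ≤ M then E q hq z.1.1 z.1.2 else 0, h0, hm, ?_, ?_⟩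
  · intro q hq
    simp only [hq, dif_pos]
    exact (hE q hq).supInf
  · intro q hq z hz
    simp only [hq, dif_pos]
    rw [hEh q hq _ hz _ z.2.1, exq_eq h z.2.1 z.2.2]

end modE2

/-- A continuous piecewise generalized polynomial function agrees, on each
horizontal half-strip `I_q = (0,∞) × (η q, η (q+1))` of a suitable finite
subdivision of the `y`-axis, with a sup of infs of finitely many generalized
polynomial functions. -/
theorem supInf_on_horizontal_halfstrips (h : PQ → ℝ)
    (hc : Continuous h) (hpw : IsPiecewiseGenPoly h) :
    ∃ (M : ℕ) (η : ℕ → ℝ) (e : ℕ → PQ → ℝ),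
      η 0 = 0 ∧ StrictMonoOn η (Set.Iic M) ∧
      (∀ q ≤ M, IsSupInf (e q)) ∧
      (∀ q ≤ M, ∀ z : PQ, z.1.2 ∈ vstrip η M q → e q z = h z) := by
  exact main_thm h hc hpw
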